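/- Let U be a definable group and let {T(x) : x ∈ X} be a definable family of nonempty definable subsets of U. Then there is a definable function t : X → U such that for all x, y ∈ X: t(x) ∈ T(x), and if T(x) = T(y) then t(x) = t(y). In other words, every definable group has strong definable choice. -/

import Mathlib

open Filter Set Topology

universe u

section OMinPreamble

variable {N : Type u}

section Basic
variable [LinearOrder N]

/-- A finite union of singletons and open intervals (with possibly infinite endpoints). -/
def IsFinUnionPtsIntervals (A : Set N) : Prop :=
  ∃ (k : ℕ) (f : Fin k → Set N),
    (∀ i, (∃ a, f i = {a}) ∨ (∃ a b, f i = Set.Ioo a b) ∨ (∃ a, f i = Set.Ioi a) ∨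
        (∃ b, f i = Set.Iio b) ∨ f i = Set.univ) ∧
    A = ⋃ i, f i

/-- An o-minimal structure on the ordered set `N`: an assignment, to each arity `m`,
of a collection of "definable" subsets of `N^m`, closed under the boolean and
first-order operations, containing the order and all points (parameters), and such
that every definable subset of `N` is a finite union of points and open intervals. -/
structure Struc (N : Type u) [LinearOrder N] where
  Def : ∀ m : ℕ, Set (Fin m → N) → Prop
  def_inter : ∀ {m : ℕ} {A B : Set (Fin m → N)}, Def m A → Def m B → Def m (A ∩ B)
  def_compl : ∀ {m : ℕ} {A : Set (Fin m → N)}, Def m A → Def m Aᶜ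
  def_univ : ∀ m : ℕ, Def m Set.univ
  def_reindex : ∀ {m k : ℕ} (g : Fin m → Fin k) {A : Set (Fin m → N)},
      Def m A → Def k {x | x ∘ g ∈ A}
  def_proj : ∀ {m : ℕ} {A : Set (Fin (m + 1) → N)},
      Def (m + 1) A → Def m {x | ∃ t : N, Fin.snoc x t ∈ A}
  def_lt : Def 2 {x | x 0 < x 1}
  def_pt : ∀ a : N, Def 1 {x | x 0 = a}
  o_min : ∀ {A : Set (Fin 1 → N)}, Def 1 A →
      IsFinUnionPtsIntervals {t : N | (fun _ : Fin 1 => t) ∈ A}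

/-- Index of the pair `(i,j)` in `Fin (n*m)`. -/
def finIdx {n m : ℕ} (i : Fin n) (j : Fin m) : Fin (n * m) :=
  ⟨i.1 * m + j.1, by
    have hi := i.isLt
    have hj := j.isLt
    calc i.1 * m + j.1 < i.1 * m + m := by omega
      _ = (i.1 + 1) * m := by ring
      _ ≤ n * m := Nat.mul_le_mul hi (le_refl m)⟩

def pFst {a b : ℕ} (p : Fin (a * b)) : Fin a :=
  ⟨p.1 / b, by
    have h := p.isLt
    have hb : 0 < b := by
      rcases Nat.eq_zero_or_pos b with h0 | h0
      · subst h0; simp at h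
      · exact h0
    exact (Nat.div_lt_iff_lt_mul hb).mpr h⟩

def pSnd {a b : ℕ} (p : Fin (a * b)) : Fin b :=
  ⟨p.1 % b, by
    have h := p.isLt
    have hb : 0 < b := by
      rcases Nat.eq_zero_or_pos b with h0 | h0
      · subst h0; simp at h
      · exact h0
    exact Nat.mod_lt _ hb⟩

/-- Horner evaluation of the polynomial with coefficients `c` (constant term first)
at `x`, relative to abstract operations. -/
def polyEval {α : Type*} (add mul : α → α → α) (zero : α) {n : ℕ} (c : Fin n → α)
    (x : α) : α :=
  (List.ofFn c).foldr (fun a acc => add a (mul x acc)) zero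

/-- `n`-th power relative to an abstract operation with identity `z`. -/
def opPow {α : Type*} (op : α → α → α) (z : α) (a : α) : ℕ → α
  | 0 => z
  | n + 1 => op a (opPow op z a n)

namespace Struc
variable (S : Struc N)

/-- The function `f`, restricted to the definable set `A ⊆ N^m` and with values in
`N^n`, is definable: its graph is a definable set. -/
def DefFunOn {m n : ℕ} (A : Set (Fin m → N)) (f : (Fin m → N) → (Fin n → N)) : Prop :=
  S.Def (m + n) {z | (z ∘ Fin.castAdd n) ∈ A ∧ f (z ∘ Fin.castAdd n) = z ∘ Fin.natAdd m}

/-- A definable function of two tuple variables. -/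
def DefFun2 {m n k : ℕ} (A : Set (Fin m → N)) (B : Set (Fin n → N))
    (f : (Fin m → N) → (Fin n → N) → (Fin k → N)) : Prop :=
  S.Def (m + n + k) {z |
    (z ∘ Fin.castAdd k ∘ Fin.castAdd n) ∈ A ∧
    (z ∘ Fin.castAdd k ∘ Fin.natAdd m) ∈ B ∧
    f (z ∘ Fin.castAdd k ∘ Fin.castAdd n) (z ∘ Fin.castAdd k ∘ Fin.natAdd m) =
      z ∘ Fin.natAdd (m + n)}

/-- A definable unary function `N → N` on the set `J ⊆ N`. -/
def DefFun1 (J : Set N) (f : N → N) : Prop :=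
  S.Def 2 {z | z 0 ∈ J ∧ f (z 0) = z 1}

/-- A definable curve in `N^k` defined on the set `J ⊆ N`. -/
def DefCurve {k : ℕ} (J : Set N) (σ : N → (Fin k → N)) : Prop :=
  S.DefFunOn {x : Fin 1 → N | x 0 ∈ J} (fun x => σ (x 0))

/-- A definable function of `n` tuple variables from `A^n ⊆ (N^m)^n` to `N^k`. -/
def DefFunN {m k : ℕ} (n : ℕ) (A : Set (Fin m → N))
    (c : (Fin n → (Fin m → N)) → (Fin k → N)) : Prop :=
  S.Def (n * m + k) {z |
    (∀ i : Fin n, (fun j : Fin m => z (Fin.castAdd k (finIdx i j))) ∈ A) ∧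
    c (fun i j => z (Fin.castAdd k (finIdx i j))) = fun j => z (Fin.natAdd (n * m) j)}

end Struc

/-- The filter of neighbourhoods of the "left end" of the set `J ⊆ N`. -/
def leftEndFilter (J : Set N) : Filter N := ⨅ x ∈ J, Filter.principal (J ∩ Set.Iio x)

/-- The filter of neighbourhoods of the "right end" of the set `J ⊆ N`
(for `J` unbounded above this is "`→ +∞` inside `J`"). -/
def rightEndFilter (J : Set N) : Filter N := ⨅ x ∈ J, Filter.principal (J ∩ Set.Ioi x)

/-- `J` is an open interval, with possibly infinite endpoints. -/
def IsOpenIntervalSet (J : Set N) : Prop :=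
  (∃ a b, a < b ∧ J = Set.Ioo a b) ∨ (∃ a, J = Set.Ioi a) ∨ (∃ b, J = Set.Iio b) ∨
    J = Set.univ

end Basic

section Groups
variable [LinearOrder N] [TopologicalSpace N]

/-- The o-minimal dimension of `A ⊆ N^m`: the largest `k` such that the image of `A`
under some projection onto `k` coordinates has nonempty interior in `N^k`
(`N` carrying the order topology and `N^k` the product topology). -/
noncomputable def odim {m : ℕ} (A : Set (Fin m → N)) : ℕ :=
  sSup {k | ∃ p : Fin k → Fin m, Function.Injective p ∧
    (interior ((fun x : Fin m → N => x ∘ p) '' A)).Nonempty}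

/-- A definable group: a definable subset of `N^m` with a group operation whose graph
is definable, together with its (unique) definable manifold topology, i.e. a group
topology which agrees with the ambient topology on a large definable subset. -/
structure DefGroup (S : Struc N) (m : ℕ) where
  carrier : Set (Fin m → N)
  carrier_def : S.Def m carrier
  mul : (Fin m → N) → (Fin m → N) → (Fin m → N)
  one : Fin m → N
  inv : (Fin m → N) → (Fin m → N)
  one_mem : one ∈ carrier
  mul_mem : ∀ ⦃x y : Fin m → N⦄, x ∈ carrier → y ∈ carrier → mul x y ∈ carrier
  inv_mem : ∀ ⦃x : Fin m → N⦄, x ∈ carrier → inv x ∈ carrier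
  mul_assoc' : ∀ ⦃x y z : Fin m → N⦄, x ∈ carrier → y ∈ carrier → z ∈ carrier →
      mul (mul x y) z = mul x (mul y z)
  one_mul' : ∀ ⦃x : Fin m → N⦄, x ∈ carrier → mul one x = x
  inv_mul' : ∀ ⦃x : Fin m → N⦄, x ∈ carrier → mul (inv x) x = one
  mul_graph_def : S.DefFun2 carrier carrier mul
  inv_graph_def : S.DefFunOn carrier inv
  top : TopologicalSpace (Fin m → N)
  contMul : @ContinuousOn ((Fin m → N) × (Fin m → N)) (Fin m → N)
      (@instTopologicalSpaceProd _ _ top top) top (fun p => mul p.1 p.2)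
      (carrier ×ˢ carrier)
  contInv : @ContinuousOn (Fin m → N) (Fin m → N) top top inv carrier
  pillay : ∃ V : Set (Fin m → N), V ⊆ carrier ∧ S.Def m V ∧
      (carrier \ V = ∅ ∨ odim (carrier \ V) < odim carrier) ∧
      (∃ O : Set (Fin m → N), IsOpen[top] O ∧ O ∩ carrier = V) ∧
      ∀ x ∈ V, @nhdsWithin (Fin m → N) top x carrier = nhdsWithin x V

variable {S : Struc N}

/-- The elements of a definable group, as a type. -/
def DefGroup.Elt {m : ℕ} (G : DefGroup S m) : Type u := {x : Fin m → N // x ∈ G.carrier}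

namespace DefGroup

instance {m : ℕ} {G : DefGroup S m} : Mul G.Elt :=
  ⟨fun a b => ⟨G.mul a.1 b.1, G.mul_mem a.2 b.2⟩⟩

instance {m : ℕ} {G : DefGroup S m} : One G.Elt := ⟨⟨G.one, G.one_mem⟩⟩

instance {m : ℕ} {G : DefGroup S m} : Inv G.Elt := ⟨fun a => ⟨G.inv a.1, G.inv_mem a.2⟩⟩

instance instGroupElt {m : ℕ} {G : DefGroup S m} : Group G.Elt :=
  Group.ofLeftAxioms
    (fun a b c => Subtype.ext (G.mul_assoc' a.2 b.2 c.2))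
    (fun a => Subtype.ext (G.one_mul' a.2))
    (fun a => Subtype.ext (G.inv_mul' a.2))

variable {m : ℕ} (G : DefGroup S m)

/-- `H` is a definable subgroup of `G`. -/
def IsDefSubgroup (H : Set (Fin m → N)) : Prop :=
  H ⊆ G.carrier ∧ S.Def m H ∧ G.one ∈ H ∧
    (∀ x ∈ H, ∀ y ∈ H, G.mul x y ∈ H) ∧ (∀ x ∈ H, G.inv x ∈ H)

/-- `H` is a definable normal subgroup of `G`. -/
def IsNormalDefSubgroup (H : Set (Fin m → N)) : Prop :=
  G.IsDefSubgroup H ∧ ∀ g ∈ G.carrier, ∀ h ∈ H, G.mul (G.mul g h) (G.inv g) ∈ H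

/-- The left coset `g·H`. -/
def lcoset (g : Fin m → N) (H : Set (Fin m → N)) : Set (Fin m → N) :=
  {y | ∃ h ∈ H, y = G.mul g h}

/-- `H` has finite index in `G`: finitely many left cosets cover `G`. -/
def FiniteIndex (H : Set (Fin m → N)) : Prop :=
  ∃ F : Finset (Fin m → N), ↑F ⊆ G.carrier ∧ G.carrier ⊆ ⋃ g ∈ F, G.lcoset g H

/-- `G` is definably connected: it has no proper definable subgroup of finite index. -/
def DefinablyConnected : Prop :=
  ∀ H : Set (Fin m → N), G.IsDefSubgroup H → G.FiniteIndex H → H = G.carrier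

def IsAbelian : Prop := ∀ x ∈ G.carrier, ∀ y ∈ G.carrier, G.mul x y = G.mul y x

/-- The center of `G`, as a definable subset. -/
def center : Set (Fin m → N) :=
  {x | x ∈ G.carrier ∧ ∀ y ∈ G.carrier, G.mul x y = G.mul y x}

def TorsionFree : Prop := ∀ x : G.Elt, x ≠ 1 → ∀ n : ℕ, 0 < n → x ^ n ≠ 1

/-- `G` is definably compact: every definable continuous embedding of an open
interval into `G` has limits at both ends of the interval (with respect to the
group's definable manifold topology). -/
def DefinablyCompact : Prop :=
  ∀ J : Set N, IsOpenIntervalSet J → ∀ σ : N → (Fin m → N),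
    S.DefCurve J σ → (∀ t ∈ J, σ t ∈ G.carrier) → Set.InjOn σ J →
    @ContinuousOn N (Fin m → N) _ G.top σ J →
    (∃ c ∈ G.carrier, Filter.Tendsto σ (leftEndFilter J) (@nhds _ G.top c)) ∧
    (∃ d ∈ G.carrier, Filter.Tendsto σ (rightEndFilter J) (@nhds _ G.top d))

/-- `G` is definably semisimple: it has no infinite proper abelian definable normal
subgroup. -/
def DefinablySemisimple : Prop :=
  ¬ ∃ H : Set (Fin m → N), G.IsNormalDefSubgroup H ∧ H.Infinite ∧ H ≠ G.carrier ∧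
      ∀ x ∈ H, ∀ y ∈ H, G.mul x y = G.mul y x

/-- The product of a list of elements of `G`. -/
def listProd : List (Fin m → N) → (Fin m → N)
  | [] => G.one
  | x :: xs => G.mul x (listProd xs)

end DefGroup

/-- A definable homomorphism between definable groups. -/
def IsDefHom {m n : ℕ} (G : DefGroup S m) (H : DefGroup S n)
    (f : (Fin m → N) → (Fin n → N)) : Prop :=
  (∀ x ∈ G.carrier, f x ∈ H.carrier) ∧ S.DefFunOn G.carrier f ∧
  ∀ x ∈ G.carrier, ∀ y ∈ G.carrier, f (G.mul x y) = H.mul (f x) (f y)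

/-- `π` realizes `Q` as the quotient of the subgroup `H` of `U` by the normal
subgroup `V ⊆ H`: a definable surjective homomorphism `H → Q` with fibers the
cosets of `V` (kernel exactly `V`). -/
def IsQuotMap {m k : ℕ} (U : DefGroup S m) (H V : Set (Fin m → N)) (Q : DefGroup S k)
    (π : (Fin m → N) → (Fin k → N)) : Prop :=
  (∀ x ∈ H, π x ∈ Q.carrier) ∧ S.DefFunOn H π ∧
  (∀ x ∈ H, ∀ y ∈ H, π (U.mul x y) = Q.mul (π x) (π y)) ∧
  π '' H = Q.carrier ∧ ∀ x ∈ H, (π x = Q.one ↔ x ∈ V)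

/-- A definable extension `1 → A → U → G → 1`. -/
def IsDefExtension {mA mU mG : ℕ} (A : DefGroup S mA) (U : DefGroup S mU)
    (G : DefGroup S mG) (i : (Fin mA → N) → (Fin mU → N))
    (j : (Fin mU → N) → (Fin mG → N)) : Prop :=
  IsDefHom A U i ∧ IsDefHom U G j ∧ Set.InjOn i A.carrier ∧
  j '' U.carrier = G.carrier ∧
  ∀ u ∈ U.carrier, (j u = G.one ↔ ∃ a ∈ A.carrier, u = i a)

/-- A definable `G`-module: a definable abelian group `A` together with a definable
action of `G` on `A` by (definable) automorphisms. -/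
structure DefModule {mG mA : ℕ} (G : DefGroup S mG) (A : DefGroup S mA) where
  abelian : A.IsAbelian
  act : (Fin mG → N) → (Fin mA → N) → (Fin mA → N)
  act_mem : ∀ ⦃x a⦄, x ∈ G.carrier → a ∈ A.carrier → act x a ∈ A.carrier
  act_one : ∀ ⦃a⦄, a ∈ A.carrier → act G.one a = a
  act_mul : ∀ ⦃x y⦄, x ∈ G.carrier → y ∈ G.carrier → ∀ ⦃a⦄, a ∈ A.carrier →
      act (G.mul x y) a = act x (act y a)
  act_hom : ∀ ⦃x⦄, x ∈ G.carrier → ∀ ⦃a b⦄, a ∈ A.carrier → b ∈ A.carrier →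
      act x (A.mul a b) = A.mul (act x a) (act x b)
  act_def : S.DefFun2 G.carrier A.carrier act

/-- The module `(A, γ)` is trivial. -/
def DefModule.IsTrivial {mG mA : ℕ} {G : DefGroup S mG} {A : DefGroup S mA}
    (γ : DefModule G A) : Prop :=
  ∀ x ∈ G.carrier, ∀ a ∈ A.carrier, γ.act x a = a

/-- The definable extension `1 → A → U → G → 1` is compatible with the `G`-module
`(A, γ)`: conjugation in `U` induces the action `γ` on `A`. -/
def ExtCompatible {mG mA mU : ℕ} {G : DefGroup S mG} {A : DefGroup S mA}
    (γ : DefModule G A) (U : DefGroup S mU) (i : (Fin mA → N) → (Fin mU → N))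
    (j : (Fin mU → N) → (Fin mG → N)) : Prop :=
  ∀ u ∈ U.carrier, ∀ a ∈ A.carrier, i (γ.act (j u) a) = U.mul (U.mul u (i a)) (U.inv u)

/-- Alternating "sum" `x₁ - (x₂ - (x₃ - ⋯))` in a (multiplicatively written abelian)
definable group. -/
def altSum {k : ℕ} (A : DefGroup S k) : List (Fin k → N) → (Fin k → N)
  | [] => A.one
  | x :: xs => A.mul x (A.inv (altSum A xs))

/-- The `i`-th term (`1 ≤ i ≤ n+1`) in the coboundary formula:
`c(g₁,…,g_i g_{i+1},…,g_{n+1})` for `1 ≤ i ≤ n`, and `c(g₁,…,g_n)` for `i = n+1`. -/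
def cobTerm {mG kA : ℕ} (G : DefGroup S mG) {n : ℕ}
    (c : (Fin n → (Fin mG → N)) → (Fin kA → N))
    (g : Fin (n + 1) → (Fin mG → N)) (i : ℕ) : Fin kA → N :=
  if i ≤ n then
    c (fun j : Fin n =>
      if j.1 + 1 < i then g (Fin.castSucc j)
      else if j.1 + 1 = i then G.mul (g (Fin.castSucc j)) (g j.succ)
      else g j.succ)
  else c (fun j : Fin n => g (Fin.castSucc j))

/-- The coboundary `δb` of the definable `n`-cochain `b`:
`δb(g₁,…,g_{n+1}) = γ(g₁)(b(g₂,…,g_{n+1})) + Σ_{i=1}^{n} (−1)^i b(…,g_i g_{i+1},…)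
+ (−1)^{n+1} b(g₁,…,g_n)` (written multiplicatively in the abelian group `A`). -/
def cob {mG kA : ℕ} {G : DefGroup S mG} {A : DefGroup S kA} (γ : DefModule G A)
    {n : ℕ} (b : (Fin n → (Fin mG → N)) → (Fin kA → N))
    (g : Fin (n + 1) → (Fin mG → N)) : Fin kA → N :=
  A.mul (γ.act (g 0) (b (Fin.tail g)))
    (A.inv (altSum A (List.ofFn fun i : Fin (n + 1) => cobTerm G b g (i.1 + 1))))

/-- There is no definable bijection between `X ⊆ N^m` and `Y ⊆ N^k`. -/
def NoDefBijection (S : Struc N) {m k : ℕ} (X : Set (Fin m → N))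
    (Y : Set (Fin k → N)) : Prop :=
  ¬ ∃ f : (Fin m → N) → (Fin k → N), S.DefFunOn X f ∧ (∀ x ∈ X, f x ∈ Y) ∧
      Set.InjOn f X ∧ f '' X = Y

/-- The subgroup `W` of `U` is definably isomorphic to a (finite) direct product of
copies of the one-dimensional group `(J, op)`. -/
def IsProdOfCopies {m : ℕ} (U : DefGroup S m) (W : Set (Fin m → N)) (J : Set N)
    (op : N → N → N) : Prop :=
  ∃ (d : ℕ) (φ : (Fin m → N) → (Fin d → N)),
    S.DefFunOn W φ ∧ Set.InjOn φ W ∧ φ '' W = {z | ∀ i, z i ∈ J} ∧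
    ∀ x ∈ W, ∀ y ∈ W, φ (U.mul x y) = fun i => op (φ x i) (φ y i)

/-- `V` is the internal direct product of the list `parts` of definable subgroups
of `U`: the parts commute pairwise and every element of `V` is uniquely a product
of elements of the parts. -/
def IsInternalDPList {m : ℕ} (U : DefGroup S m) (V : Set (Fin m → N))
    (parts : List (Set (Fin m → N))) : Prop :=
  (∀ P ∈ parts, U.IsDefSubgroup P) ∧
  List.Pairwise (fun P Q => ∀ x ∈ P, ∀ y ∈ Q, U.mul x y = U.mul y x) parts ∧
  (∀ v, v ∈ V ↔ ∃ f : Fin parts.length → (Fin m → N),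
      (∀ i, f i ∈ parts.get i) ∧ v = U.listProd (List.ofFn f)) ∧
  ∀ f g : Fin parts.length → (Fin m → N),
    (∀ i, f i ∈ parts.get i) → (∀ i, g i ∈ parts.get i) →
    U.listProd (List.ofFn f) = U.listProd (List.ofFn g) → f = g

/-- `K` is a definable subgroup of `U`, equipped with its group structure and with
the submanifold topology inherited from `U`. -/
def IsDefSubgroupGrp {m : ℕ} (U K : DefGroup S m) : Prop :=
  K.carrier ⊆ U.carrier ∧ K.one = U.one ∧
  (∀ x ∈ K.carrier, ∀ y ∈ K.carrier, K.mul x y = U.mul x y) ∧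
  (∀ x ∈ K.carrier, K.inv x = U.inv x) ∧
  ∀ x ∈ K.carrier, @nhdsWithin (Fin m → N) K.top x K.carrier
      = @nhdsWithin (Fin m → N) U.top x K.carrier

/-- The abelian definable group `U` has no definably compact parts: there is a chain
of definable subgroups each of whose successive quotients is a one-dimensional
definably connected torsion-free definable group. -/
def NoCompactParts {m : ℕ} (U : DefGroup S m) : Prop :=
  ∃ (n : ℕ) (ch : Fin (n + 1) → Set (Fin m → N)),
    ch 0 = {U.one} ∧ ch (Fin.last n) = U.carrier ∧
    (∀ j, U.IsDefSubgroup (ch j)) ∧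
    (∀ j : Fin n, ch j.castSucc ⊆ ch j.succ) ∧
    ∀ j : Fin n, ∃ (k : ℕ) (Q : DefGroup S k) (π : (Fin m → N) → (Fin k → N)),
      IsQuotMap U (ch j.succ) (ch j.castSucc) Q π ∧
      odim Q.carrier = 1 ∧ Q.DefinablyConnected ∧ Q.TorsionFree

/-- `H` is the definably connected component of the identity of `G`: the smallest
definable subgroup of finite index. -/
def IsIdentityComponent {m : ℕ} (G : DefGroup S m) (H : Set (Fin m → N)) : Prop :=
  G.IsDefSubgroup H ∧ G.FiniteIndex H ∧
    ∀ H' : Set (Fin m → N), G.IsDefSubgroup H' → G.FiniteIndex H' → H ⊆ H'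

/-- A definable (not necessarily unital or associative) ring: a definable abelian
group together with a definable bi-additive multiplication. -/
structure DefRing (S : Struc N) (m : ℕ) where
  grp : DefGroup S m
  comm : grp.IsAbelian
  rmul : (Fin m → N) → (Fin m → N) → (Fin m → N)
  rmul_mem : ∀ ⦃x y⦄, x ∈ grp.carrier → y ∈ grp.carrier → rmul x y ∈ grp.carrier
  left_distrib' : ∀ ⦃x y z⦄, x ∈ grp.carrier → y ∈ grp.carrier → z ∈ grp.carrier →
      rmul x (grp.mul y z) = grp.mul (rmul x y) (rmul x z)
  right_distrib' : ∀ ⦃x y z⦄, x ∈ grp.carrier → y ∈ grp.carrier → z ∈ grp.carrier →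
      rmul (grp.mul x y) z = grp.mul (rmul x z) (rmul y z)
  rmul_graph_def : S.DefFun2 grp.carrier grp.carrier rmul

/-- `H` is a definable left ideal of the definable ring `R`. -/
def DefRing.IsLeftIdeal {m : ℕ} (R : DefRing S m) (H : Set (Fin m → N)) : Prop :=
  R.grp.IsDefSubgroup H ∧ ∀ u ∈ R.grp.carrier, ∀ h ∈ H, R.rmul u h ∈ H

/-- `π` realizes `Q` as the quotient ring of `R` by the (two-sided) ideal `V`. -/
def IsRingQuotMap {m k : ℕ} (R : DefRing S m) (V : Set (Fin m → N)) (Q : DefRing S k)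
    (π : (Fin m → N) → (Fin k → N)) : Prop :=
  IsQuotMap R.grp R.grp.carrier V Q.grp π ∧
  ∀ x ∈ R.grp.carrier, ∀ y ∈ R.grp.carrier, π (R.rmul x y) = Q.rmul (π x) (π y)

/-- The two-sided annihilator of the definable ring `R`. -/
def ringAnn {m : ℕ} (R : DefRing S m) : Set (Fin m → N) :=
  {v | v ∈ R.grp.carrier ∧
    ∀ w ∈ R.grp.carrier, R.rmul v w = R.grp.one ∧ R.rmul w v = R.grp.one}

/-- Iterated ring product `((a·x₁)·x₂)⋯`. -/
def rFold {m : ℕ} (R : DefRing S m) : (Fin m → N) → List (Fin m → N) → (Fin m → N)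
  | a, [] => a
  | a, x :: xs => rFold R (R.rmul a x) xs

/-- An o-minimal expansion of an ordered group, definable in the ambient structure:
a definable subset `J ⊆ N` with a definable ordered abelian group structure
(the induced structure on `J` being the relevant o-minimal expansion). -/
structure OMinGrpExp (S : Struc N) where
  J : Set N
  Jdef : S.Def 1 {x | x 0 ∈ J}
  add : N → N → N
  zero : N
  neg : N → N
  zero_mem : zero ∈ J
  add_mem : ∀ ⦃a b⦄, a ∈ J → b ∈ J → add a b ∈ J
  neg_mem : ∀ ⦃a⦄, a ∈ J → neg a ∈ J
  add_assoc' : ∀ ⦃a b c⦄, a ∈ J → b ∈ J → c ∈ J → add (add a b) c = add a (add b c)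
  add_comm' : ∀ ⦃a b⦄, a ∈ J → b ∈ J → add a b = add b a
  zero_add' : ∀ ⦃a⦄, a ∈ J → add zero a = a
  neg_add' : ∀ ⦃a⦄, a ∈ J → add (neg a) a = zero
  add_lt' : ∀ ⦃a b c⦄, a ∈ J → b ∈ J → c ∈ J → b < c → add a b < add a c
  add_graph_def : S.Def 3 {z | z 0 ∈ J ∧ z 1 ∈ J ∧ add (z 0) (z 1) = z 2}

namespace OMinGrpExp
variable {S : Struc N} (E : OMinGrpExp S)

/-- A subset of `J^k` bounded in `J`. -/
def BoundedSet {k : ℕ} (B : Set (Fin k → N)) : Prop :=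
  ∃ lo ∈ E.J, ∃ hi ∈ E.J, ∀ x ∈ B, ∀ i, lo ≤ x i ∧ x i ≤ hi

/-- The induced structure on `J` is semi-bounded: every definable subset of `J^k`
belongs to every family of sets (closed under the first-order operations relative
to `J`) containing the ordered group structure, all bounded definable sets, and
all definable endomorphisms of `(J, 0, +)`. -/
def SemiBounded : Prop :=
  ∀ (D : ∀ k : ℕ, Set (Fin k → N) → Prop),
    (∀ {k : ℕ} {A B : Set (Fin k → N)}, D k A → D k B → D k (A ∩ B)) →
    (∀ {k : ℕ} {A : Set (Fin k → N)}, D k A → D k ({x | ∀ i, x i ∈ E.J} \ A)) →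
    (∀ k : ℕ, D k {x | ∀ i, x i ∈ E.J}) →
    (∀ {k l : ℕ} (g : Fin k → Fin l) {A : Set (Fin k → N)}, D k A →
        D l {x | (∀ i, x i ∈ E.J) ∧ x ∘ g ∈ A}) →
    (∀ {k : ℕ} {A : Set (Fin (k + 1) → N)}, D (k + 1) A →
        D k {x | (∀ i, x i ∈ E.J) ∧ ∃ t ∈ E.J, Fin.snoc x t ∈ A}) →
    (D 2 {x | (∀ i, x i ∈ E.J) ∧ x 0 < x 1}) →
    (∀ a ∈ E.J, D 1 {x | x 0 = a}) →
    (D 3 {z | (∀ i, z i ∈ E.J) ∧ E.add (z 0) (z 1) = z 2}) →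
    (∀ {k : ℕ} {B : Set (Fin k → N)}, S.Def k B → (∀ x ∈ B, ∀ i, x i ∈ E.J) →
        E.BoundedSet B → D k B) →
    (∀ f : N → N, S.DefFun1 E.J f → (∀ a ∈ E.J, f a ∈ E.J) →
        (∀ ⦃a b⦄, a ∈ E.J → b ∈ E.J → f (E.add a b) = E.add (f a) (f b)) →
        D 2 {z | z 0 ∈ E.J ∧ z 1 ∈ E.J ∧ f (z 0) = z 1}) →
    ∀ {k : ℕ} {A : Set (Fin k → N)}, S.Def k A → (∀ x ∈ A, ∀ i, x i ∈ E.J) → D k A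

end OMinGrpExp

/-- An o-minimal expansion of a real closed field, definable in the ambient
structure: a definable subset `J ⊆ N` with a definable real closed ordered field
structure. -/
structure OMinFieldExp (S : Struc N) where
  J : Set N
  Jdef : S.Def 1 {x | x 0 ∈ J}
  add : N → N → N
  mul : N → N → N
  zero : N
  one : N
  neg : N → N
  inv : N → N
  zero_mem : zero ∈ J
  one_mem : one ∈ J
  zero_ne_one : zero ≠ one
  add_mem : ∀ ⦃a b⦄, a ∈ J → b ∈ J → add a b ∈ J
  mul_mem : ∀ ⦃a b⦄, a ∈ J → b ∈ J → mul a b ∈ J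
  neg_mem : ∀ ⦃a⦄, a ∈ J → neg a ∈ J
  inv_mem : ∀ ⦃a⦄, a ∈ J → inv a ∈ J
  add_assoc' : ∀ ⦃a b c⦄, a ∈ J → b ∈ J → c ∈ J → add (add a b) c = add a (add b c)
  add_comm' : ∀ ⦃a b⦄, a ∈ J → b ∈ J → add a b = add b a
  zero_add' : ∀ ⦃a⦄, a ∈ J → add zero a = a
  neg_add' : ∀ ⦃a⦄, a ∈ J → add (neg a) a = zero
  mul_assoc' : ∀ ⦃a b c⦄, a ∈ J → b ∈ J → c ∈ J → mul (mul a b) c = mul a (mul b c)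
  mul_comm' : ∀ ⦃a b⦄, a ∈ J → b ∈ J → mul a b = mul b a
  one_mul' : ∀ ⦃a⦄, a ∈ J → mul one a = a
  mul_inv' : ∀ ⦃a⦄, a ∈ J → a ≠ zero → mul (inv a) a = one
  distrib' : ∀ ⦃a b c⦄, a ∈ J → b ∈ J → c ∈ J →
      mul a (add b c) = add (mul a b) (mul a c)
  add_lt' : ∀ ⦃a b c⦄, a ∈ J → b ∈ J → c ∈ J → b < c → add a b < add a c
  mul_pos' : ∀ ⦃a b⦄, a ∈ J → b ∈ J → zero < a → zero < b → zero < mul a b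
  sq_root : ∀ ⦃a⦄, a ∈ J → zero ≤ a → ∃ b ∈ J, mul b b = a
  odd_root : ∀ n : ℕ, Odd n → ∀ c : Fin (n + 1) → N, (∀ i, c i ∈ J) →
      c (Fin.last n) ≠ zero → ∃ x ∈ J, polyEval add mul zero c x = zero
  add_graph_def : S.Def 3 {z | z 0 ∈ J ∧ z 1 ∈ J ∧ add (z 0) (z 1) = z 2}
  mul_graph_def : S.Def 3 {z | z 0 ∈ J ∧ z 1 ∈ J ∧ mul (z 0) (z 1) = z 2}

/-- The linearly bounded one-dimensional torsion-free definable group of an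
o-minimal expansion of a real closed field: a definable ordered torsion-free group
structure on `J` with respect to which the induced structure is linearly bounded. -/
structure LinBddGrp {S : Struc N} (E : OMinFieldExp S) where
  op : N → N → N
  z : N
  opneg : N → N
  z_mem : z ∈ E.J
  op_mem : ∀ ⦃a b⦄, a ∈ E.J → b ∈ E.J → op a b ∈ E.J
  opneg_mem : ∀ ⦃a⦄, a ∈ E.J → opneg a ∈ E.J
  op_assoc : ∀ ⦃a b c⦄, a ∈ E.J → b ∈ E.J → c ∈ E.J → op (op a b) c = op a (op b c)
  op_comm : ∀ ⦃a b⦄, a ∈ E.J → b ∈ E.J → op a b = op b a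
  z_op : ∀ ⦃a⦄, a ∈ E.J → op z a = a
  opneg_op : ∀ ⦃a⦄, a ∈ E.J → op (opneg a) a = z
  op_lt : ∀ ⦃a b c⦄, a ∈ E.J → b ∈ E.J → c ∈ E.J → b < c → op a b < op a c
  op_graph_def : S.Def 3 {w | w 0 ∈ E.J ∧ w 1 ∈ E.J ∧ op (w 0) (w 1) = w 2}
  torsion_free : ∀ a ∈ E.J, a ≠ z → ∀ n : ℕ, 0 < n → opPow op z a n ≠ z
  lin_bdd : ∀ f : N → N, S.DefFun1 E.J f → (∀ a ∈ E.J, f a ∈ E.J) →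
      ∃ r : N → N, S.DefFun1 E.J r ∧ (∀ a ∈ E.J, r a ∈ E.J) ∧
        (∀ ⦃a b⦄, a ∈ E.J → b ∈ E.J → r (op a b) = op (r a) (r b)) ∧
        ∃ cst ∈ E.J, Filter.Tendsto (fun x => op (f x) (opneg (r x)))
            (rightEndFilter E.J) (nhds cst)

/-- Multiplication of `n × n` matrices with entries in the definable field `E`. -/
def matMul {S : Struc N} (E : OMinFieldExp S) (n : ℕ) (x y : Fin (n * n) → N) :
    Fin (n * n) → N :=
  fun p =>
    (List.ofFn (fun l : Fin n =>
        E.mul (x (finIdx (pFst p) l)) (y (finIdx l (pSnd p))))).foldr E.add E.zero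

/-- The identity `n × n` matrix with entries in the definable field `E`. -/
def matId {S : Struc N} (E : OMinFieldExp S) (n : ℕ) : Fin (n * n) → N :=
  fun p => if pFst p = pSnd p then E.one else E.zero

/-- The three kinds of division algebras over a real closed field. -/
inductive DivKind : Type
  | real : DivKind
  | cplx : DivKind
  | quat : DivKind

@[reducible] def dkDim : DivKind → ℕ
  | .real => 1
  | .cplx => 2
  | .quat => 4

/-- Multiplication in the division algebra of kind `d` (the field itself, the field
with `√-1` adjoined, or the quaternions), with coordinates in the definable field
`E`. -/
def dkMul {S : Struc N} (E : OMinFieldExp S) :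
    (d : DivKind) → (Fin (dkDim d) → N) → (Fin (dkDim d) → N) → (Fin (dkDim d) → N)
  | .real => fun x y _ => E.mul (x 0) (y 0)
  | .cplx => fun x y i =>
      if i.1 = 0 then E.add (E.mul (x 0) (y 0)) (E.neg (E.mul (x 1) (y 1)))
      else E.add (E.mul (x 0) (y 1)) (E.mul (x 1) (y 0))
  | .quat => fun x y i =>
      if i.1 = 0 then
        E.add (E.mul (x 0) (y 0)) (E.neg (E.add (E.mul (x 1) (y 1))
          (E.add (E.mul (x 2) (y 2)) (E.mul (x 3) (y 3)))))
      else if i.1 = 1 then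
        E.add (E.mul (x 0) (y 1)) (E.add (E.mul (x 1) (y 0))
          (E.add (E.mul (x 2) (y 3)) (E.neg (E.mul (x 3) (y 2)))))
      else if i.1 = 2 then
        E.add (E.mul (x 0) (y 2)) (E.add (E.neg (E.mul (x 1) (y 3)))
          (E.add (E.mul (x 2) (y 0)) (E.mul (x 3) (y 1))))
      else
        E.add (E.mul (x 0) (y 3)) (E.add (E.mul (x 1) (y 2))
          (E.add (E.neg (E.mul (x 2) (y 1))) (E.mul (x 3) (y 0))))

/-- Multiplication in the matrix algebra `M_k(D)` where `D` is the division algebra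
of kind `d` over the definable field `E`; elements are encoded as tuples in
`N^(k·k·dim D)`. -/
def matAlgMul {S : Struc N} (E : OMinFieldExp S) (d : DivKind) (k : ℕ)
    (x y : Fin (k * k * dkDim d) → N) : Fin (k * k * dkDim d) → N :=
  fun p =>
    ((List.ofFn (fun l : Fin k =>
        dkMul E d (fun cc => x (finIdx (finIdx (pFst (pFst p)) l) cc))
          (fun cc => y (finIdx (finIdx l (pSnd (pFst p))) cc)))).foldr
      (fun v w i => E.add (v i) (w i)) (fun _ => E.zero)) (pSnd p)

/-- `(F, +, ·, 0, 1, −, ⁻¹, <)` is a real closed ordered field structure on the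
subset `F ⊆ N^k`. -/
def IsRCFOn {k : ℕ} (F : Set (Fin k → N))
    (fadd fmul : (Fin k → N) → (Fin k → N) → (Fin k → N)) (fzero fone : Fin k → N)
    (fneg finv : (Fin k → N) → (Fin k → N))
    (flt : (Fin k → N) → (Fin k → N) → Prop) : Prop :=
  fzero ∈ F ∧ fone ∈ F ∧ fzero ≠ fone ∧
  (∀ x ∈ F, ∀ y ∈ F, fadd x y ∈ F ∧ fmul x y ∈ F) ∧
  (∀ x ∈ F, fneg x ∈ F ∧ finv x ∈ F) ∧
  (∀ x ∈ F, ∀ y ∈ F, ∀ z ∈ F, fadd (fadd x y) z = fadd x (fadd y z)) ∧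
  (∀ x ∈ F, ∀ y ∈ F, fadd x y = fadd y x) ∧
  (∀ x ∈ F, fadd fzero x = x) ∧
  (∀ x ∈ F, fadd (fneg x) x = fzero) ∧
  (∀ x ∈ F, ∀ y ∈ F, ∀ z ∈ F, fmul (fmul x y) z = fmul x (fmul y z)) ∧
  (∀ x ∈ F, ∀ y ∈ F, fmul x y = fmul y x) ∧
  (∀ x ∈ F, fmul fone x = x) ∧
  (∀ x ∈ F, x ≠ fzero → fmul (finv x) x = fone) ∧
  (∀ x ∈ F, ∀ y ∈ F, ∀ z ∈ F, fmul x (fadd y z) = fadd (fmul x y) (fmul x z)) ∧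
  (∀ x ∈ F, ∀ y ∈ F, flt x y ∨ x = y ∨ flt y x) ∧
  (∀ x ∈ F, ¬ flt x x) ∧
  (∀ x ∈ F, ∀ y ∈ F, ∀ z ∈ F, flt x y → flt y z → flt x z) ∧
  (∀ x ∈ F, ∀ y ∈ F, ∀ z ∈ F, flt y z → flt (fadd x y) (fadd x z)) ∧
  (∀ x ∈ F, ∀ y ∈ F, flt fzero x → flt fzero y → flt fzero (fmul x y)) ∧
  (∀ x ∈ F, (flt fzero x ∨ x = fzero) → ∃ y ∈ F, fmul y y = x) ∧
  (∀ n : ℕ, Odd n → ∀ c : Fin (n + 1) → (Fin k → N), (∀ i, c i ∈ F) →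
      c (Fin.last n) ≠ fzero → ∃ x ∈ F, polyEval fadd fmul fzero c x = fzero)

end Groups

end OMinPreamble

/-!
A definable set has strong choice if a single definable function picks an element of every
definable set meeting it. This property passes to subsets, finite unions, products, images and the
images under definable relations with finite fibers, so `U` can only fail to have it because of
*bad coordinates*, the projections to which do not have strong choice.

On the line, strong choice comes from choosing points in open intervals: if one member of a
definable family of such interval choices works between two points, call these points *near*. The
set of points near a fixed one has strong choice. The main point is that, up to nearness, a
definable finite set depending on `x₁, …, xₙ` is contained in a union of finite sets each
depending on a single coordinate: points varying with two coordinates provide functions converging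
to each other at different rates, and comparing the rates gives interval choices. Consequently,
for `e` outside of a set with strong choice, every point of the fiber over `e` of a definable
function on a product has one of its bad coordinates in one of finitely many sets with strong
choice.

Cover `U` by finitely many translates `g a * Z a`, choose `z ∈ U` with a generic bad coordinate,
and consider this coordinate of `z` as a function of `(w, v)`, where `z * (g b * v) = g a * w`. It
follows that `w` or `v` lies in a subset of `Z a` or `Z b` with fewer bad coordinates, and that
`U` is covered by translates of such subsets. After finitely many steps no bad coordinates are
left.
-/

namespace Struc

section Definability

variable {N : Type u} [LinearOrder N] {S : Struc N} {n k m : ℕ}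

theorem Def.and {p q : (Fin n → N) → Prop} (hp : S.Def n {x | p x}) (hq : S.Def n {x | q x}) :
    S.Def n {x | p x ∧ q x} :=
  S.def_inter hp hq

theorem Def.not {p : (Fin n → N) → Prop} (hp : S.Def n {x | p x}) : S.Def n {x | ¬ p x} :=
  S.def_compl hp

theorem Def.or {p q : (Fin n → N) → Prop} (hp : S.Def n {x | p x}) (hq : S.Def n {x | q x}) :
    S.Def n {x | p x ∨ q x} := by
  simpa only [not_and_or, not_not] using (hp.not.and hq.not).not

theorem Def.const (p : Prop) : S.Def n {_x | p} := by
  by_cases hp : p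
  · simpa [hp] using S.def_univ n
  · simpa [hp] using S.def_compl (S.def_univ n)

theorem Def.all_fin : ∀ {k : ℕ} {p : Fin k → (Fin n → N) → Prop},
    (∀ i, S.Def n {x | p i x}) → S.Def n {x | ∀ i, p i x}
  | 0, _, _ => by simpa using S.def_univ n
  | k + 1, p, hp => by
    have h := (hp 0).and (Def.all_fin (p := fun i => p i.succ) fun i => hp i.succ)
    simpa only [Fin.forall_fin_succ] using h

theorem Def.lt (i j : Fin n) : S.Def n {x | x i < x j} := by
  simpa using S.def_reindex ![i, j] S.def_lt

theorem Def.eq (i j : Fin n) : S.Def n {x | x i = x j} := by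
  have h : S.Def n {x | ¬ x i < x j ∧ ¬ x j < x i} := (Def.lt i j).not.and (Def.lt j i).not
  simpa only [not_lt, and_comm, ← le_antisymm_iff] using h

theorem Def.exists_append : ∀ {k : ℕ} {A : Set (Fin (n + k) → N)}, S.Def (n + k) A →
    S.Def n {x | ∃ y : Fin k → N, Fin.append x y ∈ A}
  | 0, A, hA => by
    have append_zero (x : Fin n → N) : Fin.append x (finZeroElim : Fin 0 → N) = x :=
      Fin.append_elim0 x
    simp only [Fin.exists_fin_zero_pi, append_zero]
    exact hA
  | k + 1, A, hA => by
    have h := Def.exists_append (S.def_proj (m := n + k) hA)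
    convert h using 3 with x
    simp only [mem_ofPred_eq, ← Fin.append_snoc]
    exact ⟨fun ⟨y, hy⟩ => ⟨Fin.init y, y (Fin.last k), by rwa [Fin.snoc_init_self]⟩,
      fun ⟨y, t, hy⟩ => ⟨Fin.snoc y t, hy⟩⟩

/-- A function on `N ^ n` with values in `N` is definable if its graph is. -/
def DefFun (S : Struc N) (f : (Fin n → N) → N) : Prop :=
  S.Def (n + 1) {x | f (fun i => x i.castSucc) = x (Fin.last n)}

theorem DefFun.proj (i : Fin n) : S.DefFun fun x : Fin n → N => x i :=
  Def.eq i.castSucc (Fin.last n)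

theorem DefFun.const (a : N) : S.DefFun fun _ : Fin n → N => a := by
  simpa [DefFun, eq_comm] using S.def_reindex (fun _ : Fin 1 => Fin.last n) (S.def_pt a)

theorem Def.preimage {A : Set (Fin m → N)} (hA : S.Def m A)
    {g : (Fin k → N) → (Fin m → N)} (hg : ∀ i, S.DefFun fun y => g y i) :
    S.Def k {y | g y ∈ A} := by
  have graph_coord (i : Fin m) :
      S.Def (k + m) {z | g (fun l => z (Fin.castAdd m l)) i = z (Fin.natAdd k i)} := by
    have h := S.def_reindex
      (Fin.lastCases (motive := fun _ => Fin (k + m)) (Fin.natAdd k i) (Fin.castAdd m)) (hg i)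
    simpa [Function.comp_def] using h
  have value_mem : S.Def (k + m) {z | (fun i => z (Fin.natAdd k i)) ∈ A} :=
    S.def_reindex (Fin.natAdd k) hA
  have h := (value_mem.and (Def.all_fin graph_coord)).exists_append
  simpa [← funext_iff] using h

theorem DefFun.comp {f : (Fin m → N) → N} (hf : S.DefFun f)
    {g : (Fin k → N) → (Fin m → N)} (hg : ∀ i, S.DefFun fun y => g y i) :
    S.DefFun fun y => f (g y) := by
  have coord (i : Fin (m + 1)) : S.DefFun fun z : Fin (k + 1) → N =>
      (Fin.snoc (g fun i => z i.castSucc) (z (Fin.last k)) : Fin (m + 1) → N) i := by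
    refine Fin.lastCases ?_ (fun i => ?_) i
    · simpa using DefFun.proj (Fin.last k)
    · have h := S.def_reindex
        (Fin.lastCases (motive := fun _ => Fin (k + 1 + 1)) (Fin.last (k + 1))
          fun l => l.castSucc.castSucc) (hg i)
      simpa [DefFun, Function.comp_def] using h
  simpa [DefFun] using Def.preimage hf coord

end Definability

/-- A type together with a class of maps into it from the powers `N ^ n`, its *plots*, playing the
role of the definable maps. The plots of `Γ → Prop` are the definable families of subsets of `Γ`, so
that constructions on predicates can be treated as definable maps on a par with functions on `N`. -/
class DefinableSpace {N : Type u} [LinearOrder N] (S : Struc N) (Γ : Type*) where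
  /-- The maps from `N ^ n` that count as definable. -/
  plot : ∀ n : ℕ, ((Fin n → N) → Γ) → Prop
  plot_comp : ∀ {n k : ℕ} {f : (Fin n → N) → Γ} {g : (Fin k → N) → (Fin n → N)},
    plot n f → (∀ i, S.DefFun fun y => g y i) → plot k fun y => f (g y)

section Spaces

variable {N : Type u} [LinearOrder N] (S : Struc N)

open DefinableSpace

instance : DefinableSpace S N where
  plot _ f := S.DefFun f
  plot_comp hf hg := DefFun.comp hf hg

instance : DefinableSpace S Prop where
  plot n f := S.Def n {x | f x}
  plot_comp hf hg := Def.preimage hf hg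

instance : DefinableSpace S Unit where
  plot _ _ := True
  plot_comp _ _ := trivial

instance {Γ Δ : Type*} [DefinableSpace S Γ] [DefinableSpace S Δ] : DefinableSpace S (Γ × Δ) where
  plot n f := plot S n (fun x => (f x).1) ∧ plot S n (fun x => (f x).2)
  plot_comp hf hg := ⟨plot_comp hf.1 hg, plot_comp hf.2 hg⟩

instance instTuple {Γ : Type*} [DefinableSpace S Γ] {k : ℕ} : DefinableSpace S (Fin k → Γ) where
  plot n f := ∀ i, plot S n (fun x => f x i)
  plot_comp hf hg i := plot_comp (hf i) hg

instance instFun {Γ Δ : Type*} [DefinableSpace S Γ] [DefinableSpace S Δ] :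
    DefinableSpace S (Γ → Δ) where
  plot n f := ∀ (k : ℕ) (g : (Fin k → N) → (Fin n → N)) (a : (Fin k → N) → Γ),
    (∀ i, S.DefFun fun y => g y i) → plot S k a → plot S k fun y => f (g y) (a y)
  plot_comp hf hg _ _ a hg' ha := hf _ _ a (fun i => DefFun.comp (hg i) hg') ha

/-- A point of a definable space is definable if the constant maps to it are plots. A definable
family `T : Γ → Δ → Prop` of subsets of `Δ` is a definable point of `Γ → Δ → Prop`. -/
class Definable {Γ : Type*} [DefinableSpace S Γ] (a : Γ) : Prop where
  const_plot : ∀ n, plot S n fun _ => a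

/-- A map between definable spaces is definable if it sends plots to plots. -/
def DefinableMap {Γ Δ : Type*} [DefinableSpace S Γ] [DefinableSpace S Δ] (f : Γ → Δ) : Prop :=
  ∀ n p, plot S n p → plot S n fun x => f (p x)

variable {S} {Γ Δ Θ : Type*} [DefinableSpace S Γ] [DefinableSpace S Δ] [DefinableSpace S Θ]

theorem DefinableMap.id : DefinableMap S fun x : Γ => x := fun _ _ h => h

theorem DefinableMap.const {c : Δ} (h : Definable S c) : DefinableMap S fun _ : Γ => c :=
  fun n _ _ => h.const_plot n

theorem Definable.of_map {c : Δ} (h : DefinableMap S fun _ : Unit => c) : Definable S c :=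
  ⟨fun n => h n (fun _ => ()) trivial⟩

theorem DefinableMap.app {f : Γ → Δ → Θ} {g : Γ → Δ} (hf : DefinableMap S f)
    (hg : DefinableMap S g) : DefinableMap S fun x => f x (g x) :=
  fun n p hp => hf n p hp n (fun y => y) _ (fun i => DefFun.proj i) (hg n p hp)

theorem DefinableMap.curry {f : Γ → Δ → Θ} (hf : DefinableMap S fun z : Γ × Δ => f z.1 z.2) :
    DefinableMap S f :=
  fun _ p hp k g a hg ha => hf k (fun y => (p (g y), a y)) ⟨plot_comp hp hg, ha⟩

theorem DefinableMap.comp {f : Δ → Θ} {g : Γ → Δ} (hf : DefinableMap S f) (hg : DefinableMap S g) :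
    DefinableMap S fun x => f (g x) :=
  fun n p hp => hf n _ (hg n p hp)

theorem Definable.map {f : Γ → Δ} (h : Definable S f) : DefinableMap S f :=
  DefinableMap.app (DefinableMap.const h) DefinableMap.id

theorem DefinableMap.pt {f : Γ → Δ} (h : DefinableMap S f) : Definable S f :=
  ⟨fun _ k _ a _ ha => h k a ha⟩

theorem Definable.app {f : Γ → Δ} (h : Definable S f) {a : Γ} (ha : Definable S a) :
    Definable S (f a) :=
  ⟨fun n => h.map n _ (ha.const_plot n)⟩

theorem DefinableMap.fst {f : Γ → Δ × Θ} (h : DefinableMap S f) : DefinableMap S fun x => (f x).1 :=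
  fun _ _ hp => (h _ _ hp).1

theorem DefinableMap.snd {f : Γ → Δ × Θ} (h : DefinableMap S f) : DefinableMap S fun x => (f x).2 :=
  fun _ _ hp => (h _ _ hp).2

theorem DefinableMap.prodMk {f : Γ → Δ} {g : Γ → Θ} (hf : DefinableMap S f)
    (hg : DefinableMap S g) : DefinableMap S fun x => (f x, g x) :=
  fun n p hp => ⟨hf n p hp, hg n p hp⟩

instance : Definable S (Prod.mk : Γ → Δ → Γ × Δ) :=
  DefinableMap.pt <| DefinableMap.curry <| .prodMk DefinableMap.id.fst DefinableMap.id.snd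

theorem DefinableMap.tuple {k : ℕ} {f : Γ → Fin k → Δ} (hf : ∀ i, DefinableMap S fun x => f x i) :
    DefinableMap S f :=
  fun n p hp i => hf i n p hp

theorem DefinableMap.coord {k : ℕ} {f : Γ → Fin k → Δ} (hf : DefinableMap S f) (i : Fin k) :
    DefinableMap S fun x => f x i :=
  fun n p hp => hf n p hp i

instance {m : ℕ} :
    Definable S (Fin.cons (α := fun _ : Fin (m + 1) => Δ) : Δ → (Fin m → Δ) → Fin (m + 1) → Δ) := by
  have h : DefinableMap S fun z : Δ × (Fin m → Δ) => (Fin.cons z.1 z.2 : Fin (m + 1) → Δ) :=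
    DefinableMap.tuple <| Fin.cases DefinableMap.id.fst fun i => DefinableMap.id.snd.coord i
  exact h.curry.pt

theorem DefinableMap.imp {f g : Γ → Prop} (hf : DefinableMap S f) (hg : DefinableMap S g) :
    DefinableMap S fun x => f x → g x := by
  intro n p hp
  have h := Def.or (Def.not (hf n p hp)) (hg n p hp)
  simp only [← imp_iff_not_or] at h
  exact h

instance (a : N) : Definable S a := ⟨fun _ => DefFun.const a⟩

instance (p : Prop) : Definable S p := ⟨fun _ => Def.const p⟩

instance (a : Unit) : Definable S a := ⟨fun _ => trivial⟩

instance {k : ℕ} (a : Fin k → Δ) [h : ∀ i, Definable S (a i)] : Definable S a :=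
  ⟨fun n i => (h i).const_plot n⟩

instance : Definable S And :=
  DefinableMap.pt <| DefinableMap.curry fun _ _ hp => Def.and hp.1 hp.2

instance : Definable S Or :=
  DefinableMap.pt <| DefinableMap.curry fun _ _ hp => Def.or hp.1 hp.2

instance : Definable S Not :=
  DefinableMap.pt fun _ _ hp => Def.not hp

instance : Definable S Iff := by
  refine DefinableMap.pt <| DefinableMap.curry fun n p hp => ?_
  have h := ((Def.not hp.1).or hp.2).and ((Def.not hp.2).or hp.1)
  simp only [← imp_iff_not_or, ← iff_iff_implies_and_implies] at h
  exact h

instance : Definable S (LT.lt : N → N → Prop) :=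
  DefinableMap.pt <| DefinableMap.curry fun _ p hp =>
    Def.preimage S.def_lt (g := fun x => ![(p x).1, (p x).2]) <| Fin.forall_fin_two.2 hp

theorem DefinableMap.app₂ {Ω : Type*} [DefinableSpace S Ω] {r : Δ → Θ → Ω} [hr : Definable S r]
    {f : Γ → Δ} {g : Γ → Θ} (hf : DefinableMap S f) (hg : DefinableMap S g) :
    DefinableMap S fun x => r (f x) (g x) :=
  ((DefinableMap.const hr).app hf).app hg

theorem DefinableMap.not {f : Γ → Prop} (hf : DefinableMap S f) : DefinableMap S fun x => ¬ f x :=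
  (DefinableMap.const inferInstance).app hf

instance : Definable S (LE.le : N → N → Prop) := by
  have h : DefinableMap S fun z : N × N => ¬ z.2 < z.1 :=
    (DefinableMap.app₂ DefinableMap.id.snd DefinableMap.id.fst).not
  simp only [not_lt] at h
  exact h.curry.pt

instance : Definable S (Eq : N → N → Prop) := by
  have h : DefinableMap S fun z : N × N => z.1 ≤ z.2 ∧ z.2 ≤ z.1 :=
    .app₂ (.app₂ DefinableMap.id.fst DefinableMap.id.snd)
      (.app₂ DefinableMap.id.snd DefinableMap.id.fst)
  simp only [← le_antisymm_iff] at h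
  exact h.curry.pt

theorem DefinableMap.all_fin {k : ℕ} {f : Γ → Fin k → Prop}
    (hf : ∀ i, DefinableMap S fun x => f x i) : DefinableMap S fun x => ∀ i, f x i :=
  fun n p hp => Def.all_fin fun i => hf i n p hp

theorem DefinableMap.ex_fin {k : ℕ} {f : Γ → Fin k → Prop}
    (hf : ∀ i, DefinableMap S fun x => f x i) : DefinableMap S fun x => ∃ i, f x i := by
  simpa only [not_forall, not_not] using (DefinableMap.all_fin fun i => (hf i).not).not

instance {k : ℕ} : Definable S (Eq : (Fin k → N) → (Fin k → N) → Prop) := by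
  have h : DefinableMap S fun z : (Fin k → N) × (Fin k → N) => ∀ i, z.1 i = z.2 i :=
    DefinableMap.all_fin fun i => .app₂ (DefinableMap.id.fst.coord i) (DefinableMap.id.snd.coord i)
  simp only [← funext_iff] at h
  exact h.curry.pt

/-- A definable space is parametrized if it is a definable image of some `N ^ q`. These are the
spaces over which one may quantify. -/
class Parametrized (S : Struc N) (Γ : Type*) [DefinableSpace S Γ] : Prop where
  exists_surj : ∃ (q : ℕ) (f : (Fin q → N) → Γ), plot S q f ∧ Function.Surjective f

instance : Parametrized S N :=
  ⟨1, fun x => x 0, DefFun.proj 0, fun a => ⟨fun _ => a, rfl⟩⟩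

instance : Parametrized S Unit := ⟨0, fun _ => (), trivial, fun _ => ⟨Fin.elim0, rfl⟩⟩

instance {k : ℕ} : Parametrized S (Fin k → N) :=
  ⟨k, fun x => x, fun i => DefFun.proj i, fun a => ⟨a, rfl⟩⟩

instance [Parametrized S Γ] [Parametrized S Δ] : Parametrized S (Γ × Δ) := by
  obtain ⟨q, f, hf, sf⟩ := Parametrized.exists_surj (S := S) (Γ := Γ)
  obtain ⟨r, g, hg, sg⟩ := Parametrized.exists_surj (S := S) (Γ := Δ)
  refine ⟨q + r, fun x => (f fun i => x (Fin.castAdd r i), g fun i => x (Fin.natAdd q i)),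
    ⟨plot_comp hf fun i => DefFun.proj _, plot_comp hg fun i => DefFun.proj _⟩, ?_⟩
  rintro ⟨a, b⟩
  obtain ⟨x, rfl⟩ := sf a
  obtain ⟨y, rfl⟩ := sg b
  exact ⟨Fin.append x y, by simp⟩

theorem Parametrized.definable [Parametrized S Γ] (a : Γ) : Definable S a := by
  obtain ⟨q, f, hf, sf⟩ := Parametrized.exists_surj (S := S) (Γ := Γ)
  obtain ⟨x, rfl⟩ := sf a
  exact ⟨fun n => plot_comp (g := fun _ => x) hf fun i => DefFun.const _⟩

instance [Parametrized S Γ] : Definable S (@Exists Γ) := by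
  refine DefinableMap.pt fun n p hp => ?_
  obtain ⟨q, f, hf, sf⟩ := Parametrized.exists_surj (S := S) (Γ := Γ)
  have h := Def.exists_append
    (hp (n + q) (fun x i => x (Fin.castAdd q i)) (fun x => f fun i => x (Fin.natAdd n i))
      (fun i => DefFun.proj _) (plot_comp hf fun i => DefFun.proj _))
  simp only [mem_ofPred_eq, Fin.append_left, Fin.append_right, ← sf.exists] at h
  exact h

theorem DefinableMap.ex [Parametrized S Δ] {f : Γ → Δ → Prop}
    (hf : DefinableMap S fun z : Γ × Δ => f z.1 z.2) : DefinableMap S fun x => ∃ y, f x y :=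
  (DefinableMap.const inferInstance).app hf.curry

theorem DefinableMap.all [Parametrized S Δ] {f : Γ → Δ → Prop}
    (hf : DefinableMap S fun z : Γ × Δ => f z.1 z.2) : DefinableMap S fun x => ∀ y, f x y := by
  simpa only [not_exists, not_not] using (DefinableMap.ex (f := fun x y => ¬ f x y) hf.not).not

end Spaces

section Auto

variable {N : Type u} [LinearOrder N] {S : Struc N} {Γ Δ : Type*} [DefinableSpace S Γ]
  [DefinableSpace S Δ]

/-- Decomposes an explicitly given map with the closure properties above, so that
`DefinableMap.auto` proves goals `DefinableMap S f` by itself. -/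
theorem DefinableMap.auto {f : Γ → Δ} (h : DefinableMap S f := by
    repeat'
      first
      | with_reducible assumption
      | with_reducible exact DefinableMap.id
      | exact DefinableMap.const (by
          first
          | with_reducible assumption
          | infer_instance
          | with_reducible exact Parametrized.definable _)
      | with_reducible refine DefinableMap.coord ?_ _
      | with_reducible refine DefinableMap.fst ?_
      | with_reducible refine DefinableMap.snd ?_
      | with_reducible refine DefinableMap.imp ?_ ?_
      | with_reducible refine DefinableMap.all ?_
      | with_reducible refine DefinableMap.all_fin fun _ => ?_
      | with_reducible refine DefinableMap.ex_fin fun _ => ?_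
      | with_reducible refine DefinableMap.app ?_ ?_
      | with_reducible refine DefinableMap.tuple fun _ => ?_
      | with_reducible refine DefinableMap.curry ?_
      | with_reducible refine DefinableMap.pt ?_) : DefinableMap S f :=
  h

theorem Definable.auto {a : Γ}
    (h : DefinableMap S fun _ : Unit => a := by exact DefinableMap.auto) : Definable S a :=
  Definable.of_map h

theorem Definable.autoFun {f : Γ → Δ} (h : DefinableMap S f := by exact DefinableMap.auto) :
    Definable S f :=
  h.pt

end Auto

section UniqueChoice

variable {N : Type u} [Nonempty N]

open Classical in
/-- The element satisfying a predicate, if there is exactly one, and a fixed arbitrary element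
otherwise. -/
noncomputable def theUnique (A : N → Prop) : N :=
  if h : ∃ a, ∀ b, A b ↔ b = a then h.choose else Classical.arbitrary N

theorem theUnique_eq {A : N → Prop} {a : N} (h : ∀ b, A b ↔ b = a) :
    theUnique A = a := by
  have h' : ∃ a, ∀ b, A b ↔ b = a := ⟨a, h⟩
  rw [theUnique, dif_pos h']
  exact (h _).1 ((h'.choose_spec _).2 rfl)

theorem theUnique_eq_iff {A : N → Prop} {b : N} :
    theUnique A = b ↔ (A b ∧ ∃ a, ∀ c, A c ↔ c = a) ∨
      (¬ ∃ a, ∀ c, A c ↔ c = a) ∧ b = Classical.arbitrary N := by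
  by_cases hA : ∃ a, ∀ c, A c ↔ c = a
  · obtain ⟨a, ha⟩ := id hA
    simp only [theUnique_eq ha, ha b, hA, eq_comm (a := a), and_true, not_true_eq_false, false_and,
      or_false]
  · rw [theUnique, dif_neg hA, eq_comm]
    simp only [hA, and_false, not_false_eq_true, true_and, false_or]

/-- Definition by cases: `a` if `p` holds and `b` otherwise. -/
noncomputable def pick (p : Prop) (a b : N) : N := theUnique fun c => (p ∧ c = a) ∨ (¬ p ∧ c = b)

theorem pick_pos {p : Prop} (h : p) (a b : N) : pick p a b = a :=
  theUnique_eq fun c => by simp [h]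

theorem pick_neg {p : Prop} (h : ¬ p) (a b : N) : pick p a b = b :=
  theUnique_eq fun c => by simp [h]

end UniqueChoice

section Constructions

variable {N : Type u} [LinearOrder N] {S : Struc N}

instance : Definable S (GT.gt : N → N → Prop) := by
  delta GT.gt
  exact Definable.autoFun

variable [Nonempty N]

instance : Definable S (theUnique : (N → Prop) → N) := by
  have graph : Definable S fun (A : N → Prop) (b : N) => (A b ∧ ∃ a, ∀ c, A c ↔ c = a) ∨
    (¬ ∃ a, ∀ c, A c ↔ c = a) ∧ b = Classical.arbitrary N := Definable.autoFun
  refine DefinableMap.pt fun n p hp => ?_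
  have h := graph.map n p hp (n + 1) (fun z i => z i.castSucc) (fun z => z (Fin.last n))
    (fun i => DefFun.proj _) (DefFun.proj _)
  simp only [← theUnique_eq_iff] at h
  exact h

instance : Definable S (pick : Prop → N → N → N) := by
  delta pick
  exact Definable.autoFun

instance : Definable S (min : N → N → N) := by
  have h : Definable S fun a b : N => pick (a ≤ b) a b := Definable.autoFun
  convert h using 3 with a b
  by_cases hab : a ≤ b
  · rw [pick_pos hab, min_eq_left hab]
  · rw [pick_neg hab, min_eq_right (le_of_not_ge hab)]

instance : Definable S (max : N → N → N) := by
  have h : Definable S fun a b : N => pick (a ≤ b) b a := Definable.autoFun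
  convert h using 3 with a b
  by_cases hab : a ≤ b
  · rw [pick_pos hab, max_eq_right hab]
  · rw [pick_neg hab, max_eq_left (le_of_not_ge hab)]

/-- The greatest lower bound of a predicate, with an arbitrary value if there is none. -/
noncomputable def glb (A : N → Prop) : N :=
  theUnique fun a => (∀ b, A b → a ≤ b) ∧ ∀ c, (∀ b, A b → c ≤ b) → c ≤ a

/-- The least upper bound of a predicate, with an arbitrary value if there is none. -/
noncomputable def lub (A : N → Prop) : N :=
  theUnique fun a => (∀ b, A b → b ≤ a) ∧ ∀ c, (∀ b, A b → b ≤ c) → a ≤ c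

theorem glb_eq {A : N → Prop} {a : N} (h : IsGLB {x | A x} a) : glb A = a :=
  theUnique_eq fun b => ⟨fun hb => IsGLB.unique (s := {x | A x}) ⟨hb.1, hb.2⟩ h, by
    rintro rfl
    exact ⟨h.1, h.2⟩⟩

theorem lub_eq {A : N → Prop} {a : N} (h : IsLUB {x | A x} a) : lub A = a :=
  theUnique_eq fun b => ⟨fun hb => IsLUB.unique (s := {x | A x}) ⟨hb.1, hb.2⟩ h, by
    rintro rfl
    exact ⟨h.1, h.2⟩⟩

theorem glb_eq_of_least {A : N → Prop} {a : N} (ha : A a) (h : ∀ b, A b → a ≤ b) : glb A = a :=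
  glb_eq ⟨fun _ hb => h _ hb, fun _ hb => hb ha⟩

instance : Definable S (glb : (N → Prop) → N) := by
  delta glb
  exact Definable.autoFun

instance : Definable S (lub : (N → Prop) → N) := by
  delta lub
  exact Definable.autoFun

/-- The predicate holds on some nonempty open interval. -/
def Fat (A : N → Prop) : Prop := ∃ a b, a < b ∧ ∀ t, a < t → t < b → A t

instance : Definable S (Fat : (N → Prop) → Prop) := by
  delta Fat
  exact Definable.autoFun

/-- The predicate `A` holds on all elements of `B` far enough to the right. -/
def Tail (B A : N → Prop) : Prop := ∃ e, B e ∧ ∀ t, B t → e < t → A t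

instance : Definable S (Tail : (N → Prop) → (N → Prop) → Prop) := by
  delta Tail
  exact Definable.autoFun

end Constructions

section Dual

variable {N : Type u} [LinearOrder N]

/-- The structure with the order reversed, used to transfer one-sided statements. -/
def dual (S : Struc N) : Struc Nᵒᵈ where
  Def n A := S.Def n A
  def_inter := S.def_inter
  def_compl := S.def_compl
  def_univ := S.def_univ
  def_reindex := S.def_reindex
  def_proj := S.def_proj
  def_lt := Def.lt 1 0
  def_pt := S.def_pt
  o_min := by
    intro A hA
    obtain ⟨k, f, hf, e⟩ := S.o_min hA
    refine ⟨k, f, fun i => ?_, e⟩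
    rcases hf i with ⟨a, h⟩ | ⟨a, b, h⟩ | ⟨a, h⟩ | ⟨a, h⟩ | h
    · exact Or.inl ⟨a, h⟩
    · exact Or.inr <| Or.inl ⟨b, a, h.trans <| Set.ext fun x => and_comm⟩
    · exact Or.inr <| Or.inr <| Or.inr <| Or.inl ⟨a, h⟩
    · exact Or.inr <| Or.inr <| Or.inl ⟨a, h⟩
    · exact Or.inr <| Or.inr <| Or.inr <| Or.inr h

end Dual

section OneVariable

variable {N : Type u} [LinearOrder N] {S : Struc N} {A B C : N → Prop}

theorem glb_mem_of_finite [Nonempty N] (hA : {x | A x}.Finite) (hne : ∃ a, A a) :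
    A (glb A) ∧ ∀ a, A a → glb A ≤ a := by
  obtain ⟨m, hm, h⟩ := exists_min_image {x | A x} id hA hne
  have e : glb A = m := glb_eq_of_least hm h
  rw [e]
  exact ⟨hm, h⟩

theorem exists_finite_breaks_of_basic {I : Set N}
    (hI : (∃ a, I = {a}) ∨ (∃ a b, I = Ioo a b) ∨ (∃ a, I = Ioi a) ∨ (∃ b, I = Iio b) ∨ I = univ) :
    ∃ F : Set N, F.Finite ∧
      ∀ x y, x ≤ y → (∀ z ∈ F, x ≤ z → ¬ z ≤ y) → (x ∈ I ↔ y ∈ I) := by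
  rcases hI with ⟨a, rfl⟩ | ⟨a, b, rfl⟩ | ⟨a, rfl⟩ | ⟨a, rfl⟩ | rfl
  · exact ⟨{a}, by simp, fun x y hxy hz => by have := hz a rfl; grind⟩
  · refine ⟨{a, b}, by simp, fun x y hxy hz => ?_⟩
    have := hz a (by simp)
    have := hz b (by simp)
    grind
  · exact ⟨{a}, by simp, fun x y hxy hz => by have := hz a rfl; grind⟩
  · exact ⟨{a}, by simp, fun x y hxy hz => by have := hz a rfl; grind⟩
  · exact ⟨∅, by simp, by simp⟩

theorem Definable.exists_finite_breaks (hA : Definable S A) : ∃ F : Set N, F.Finite ∧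
    ∀ x y, x ≤ y → (∀ z ∈ F, x ≤ z → ¬ z ≤ y) → (A x ↔ A y) := by
  obtain ⟨k, I, hI, eq_iUnion⟩ := S.o_min (A := {x : Fin 1 → N | A (x 0)})
    (hA.map 1 (fun x => x 0) (DefFun.proj 0))
  choose F hF breaks using fun i => exists_finite_breaks_of_basic (hI i)
  refine ⟨⋃ i, F i, finite_iUnion hF, fun x y hxy hz => ?_⟩
  have holds_iff (t : N) : A t ↔ ∃ i, t ∈ I i := by
    simpa using Set.ext_iff.1 eq_iUnion t
  rw [holds_iff, holds_iff]
  exact exists_congr fun i => breaks i x y hxy fun z hzi => hz z (mem_iUnion.2 ⟨i, hzi⟩)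

theorem Tail.mono (h : Tail B A) (hAC : ∀ t, B t → A t → C t) : Tail B C := by
  obtain ⟨e, he, h⟩ := h
  exact ⟨e, he, fun t ht het => hAC t ht (h t ht het)⟩

theorem Tail.and (h : Tail B A) (h' : Tail B C) : Tail B fun t => A t ∧ C t := by
  obtain ⟨e, he, h⟩ := h
  obtain ⟨e', he', h'⟩ := h'
  refine ⟨max e e', by rcases max_choice e e' with h | h <;> rwa [h], fun t ht het => ?_⟩
  rw [max_lt_iff] at het
  exact ⟨h t ht het.1, h' t ht het.2⟩

theorem Tail.exists_gt (h : Tail B A) (hB : ∀ e, B e → ∃ e', B e' ∧ e < e') {e : N} (he : B e) :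
    ∃ t, B t ∧ e < t ∧ A t := by
  obtain ⟨e', he', h⟩ := h
  obtain ⟨t, ht, hmt⟩ := hB (max e e') (by rcases max_choice e e' with h | h <;> rwa [h])
  rw [max_lt_iff] at hmt
  exact ⟨t, ht, hmt.1, h t ht hmt.2⟩

theorem Tail.exists (h : Tail B A) (hB : ∀ e, B e → ∃ e', B e' ∧ e < e') : ∃ t, B t ∧ A t := by
  obtain ⟨e, he, -⟩ := id h
  obtain ⟨t, ht, -, hA⟩ := h.exists_gt hB he
  exact ⟨t, ht, hA⟩

theorem tail_gt {e : N} (he : B e) : Tail B fun t => e < t := ⟨e, he, fun _ _ h => h⟩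

theorem exists_upper_of_finite {F : Set N} (hF : F.Finite) (hne : ∃ e, B e)
    (hB : ∀ e, B e → ∃ e', B e' ∧ e < e') : ∃ e, B e ∧ ∀ z ∈ F, ∀ t, B t → z ≤ t → z < e := by
  induction F, hF using Set.Finite.induction_on with
  | empty => simpa using hne
  | @insert z F _ _ ih =>
    obtain ⟨e, he, h⟩ := ih
    by_cases hz : ∃ t, B t ∧ z ≤ t
    · obtain ⟨t, ht, hzt⟩ := hz
      obtain ⟨t', ht', htt'⟩ := hB t ht
      refine ⟨max e t', by rcases max_choice e t' with h | h <;> rwa [h], ?_⟩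
      rintro w (rfl | hw) s hs hws
      · exact lt_max_of_lt_right (hzt.trans_lt htt')
      · exact lt_max_of_lt_left (h w hw s hs hws)
    · refine ⟨e, he, ?_⟩
      rintro w (rfl | hw) s hs hws
      · exact absurd ⟨s, hs, hws⟩ hz
      · exact h w hw s hs hws

theorem Definable.tail_or (hA : Definable S A) (hne : ∃ e, B e)
    (hB : ∀ e, B e → ∃ e', B e' ∧ e < e') : Tail B A ∨ Tail B fun t => ¬ A t := by
  obtain ⟨F, hF, h⟩ := hA.exists_finite_breaks
  obtain ⟨e, he, h'⟩ := exists_upper_of_finite hF hne hB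
  have iff_of_le : ∀ t, B t → e ≤ t → (A e ↔ A t) := fun t ht het =>
    h e t het fun z hz hez hzt => (h' z hz t ht hzt).not_ge hez
  by_cases hAe : A e
  · exact Or.inl ⟨e, he, fun t ht het => (iff_of_le t ht het.le).1 hAe⟩
  · exact Or.inr ⟨e, he, fun t ht het hAt => hAe ((iff_of_le t ht het.le).2 hAt)⟩

/-- The predicate holds on an interval with left endpoint `a`. -/
def RGerm (a : N) (A : N → Prop) : Prop := ∃ b, a < b ∧ ∀ t, t < b → a < t → A t

/-- The predicate holds on an interval with right endpoint `a`. -/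
def LGerm (a : N) (A : N → Prop) : Prop := ∃ b, b < a ∧ ∀ t, b < t → t < a → A t

instance : Definable S (RGerm : N → (N → Prop) → Prop) := by
  delta RGerm
  exact Definable.autoFun

instance : Definable S (LGerm : N → (N → Prop) → Prop) := by
  delta LGerm
  exact Definable.autoFun

theorem LGerm.tail {a : N} (h : LGerm a A) : Tail (fun t => t < a) A := by
  obtain ⟨b, hb, h⟩ := h
  exact ⟨b, hb, fun t ht hbt => h t hbt ht⟩

theorem Tail.lGerm {a : N} (h : Tail (fun t => t < a) A) : LGerm a A := by
  obtain ⟨b, hb, h⟩ := h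
  exact ⟨b, hb, fun t ht hbt => h t hbt ht⟩

theorem LGerm.mono {a : N} (h : LGerm a A) (hAC : ∀ t, t < a → A t → C t) : LGerm a C :=
  (h.tail.mono hAC).lGerm

theorem LGerm.and {a : N} (h : LGerm a A) (h' : LGerm a C) : LGerm a fun t => A t ∧ C t :=
  (h.tail.and h'.tail).lGerm

theorem RGerm.mono {a : N} (h : RGerm a A) (hAC : ∀ t, a < t → A t → C t) : RGerm a C :=
  LGerm.mono (N := Nᵒᵈ) h hAC

theorem RGerm.and {a : N} (h : RGerm a A) (h' : RGerm a C) : RGerm a fun t => A t ∧ C t :=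
  LGerm.and (N := Nᵒᵈ) h h'

theorem rGerm_lt {a b : N} (h : a < b) : RGerm a fun t => t < b := ⟨b, h, fun _ h _ => h⟩

theorem RGerm.fat {a : N} (h : RGerm a A) : Fat A := by
  obtain ⟨b, hb, h⟩ := h
  exact ⟨a, b, hb, fun t h1 h2 => h t h2 h1⟩

theorem LGerm.fat {a : N} (h : LGerm a A) : Fat A := by
  obtain ⟨b, hb, h⟩ := h
  exact ⟨b, a, hb, h⟩

variable [DenselyOrdered N]

theorem LGerm.exists_gt {a e : N} (h : LGerm a A) (he : e < a) : ∃ t, e < t ∧ t < a ∧ A t := by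
  obtain ⟨t, h1, h2, h3⟩ := h.tail.exists_gt (fun e he => by
    obtain ⟨c, h1, h2⟩ := exists_between he
    exact ⟨c, h2, h1⟩) he
  exact ⟨t, h2, h1, h3⟩

theorem RGerm.exists_lt {a e : N} (h : RGerm a A) (he : a < e) : ∃ t, a < t ∧ t < e ∧ A t := by
  obtain ⟨t, h1, h2, h3⟩ := LGerm.exists_gt (N := Nᵒᵈ) h he
  exact ⟨t, h2, h1, h3⟩

theorem Fat.infinite (h : Fat A) : {t | A t}.Infinite := by
  obtain ⟨a, b, hab, h⟩ := h
  exact (Ioo_infinite hab).mono fun t ht => h t ht.1 ht.2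

theorem not_fat_of_finite (h : {t | A t}.Finite) : ¬ Fat A := fun h' => h'.infinite h

section NoMinOrder

variable [NoMinOrder N]

theorem Definable.lGerm_or (hA : Definable S A) (a : N) : LGerm a A ∨ LGerm a fun t => ¬ A t := by
  rcases hA.tail_or (B := fun t => t < a) (exists_lt a) (fun e he => by
    obtain ⟨c, h1, h2⟩ := exists_between he
    exact ⟨c, h2, h1⟩) with h | h
  · exact Or.inl h.lGerm
  · exact Or.inr h.lGerm

theorem LGerm.exists {a : N} (h : LGerm a A) : ∃ t, t < a ∧ A t := by
  obtain ⟨e, he⟩ := exists_lt a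
  obtain ⟨t, -, h1, h2⟩ := h.exists_gt he
  exact ⟨t, h1, h2⟩

end NoMinOrder

section NoMaxOrder

variable [NoMaxOrder N]

theorem Definable.rGerm_or (hA : Definable S A) (a : N) : RGerm a A ∨ RGerm a fun t => ¬ A t :=
  Definable.lGerm_or (S := S.dual) (A := A) ⟨hA.1⟩ a

theorem RGerm.exists {a : N} (h : RGerm a A) : ∃ t, a < t ∧ A t :=
  LGerm.exists (N := Nᵒᵈ) h

theorem Definable.finite_of_not_fat (hA : Definable S A) (h : ¬ Fat A) : {t | A t}.Finite := by
  obtain ⟨F, hF, h'⟩ := hA.exists_finite_breaks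
  refine hF.subset fun x hx => by_contra fun hxF => h ?_
  obtain ⟨e, he, hlt⟩ := exists_upper_of_finite (B := fun t : N => x < t)
    (N := Nᵒᵈ) hF (exists_gt x) (fun e (he : x < e) => by
      obtain ⟨c, h1, h2⟩ := exists_between he
      exact ⟨c, h1, h2⟩)
  refine ⟨x, e, he, fun t hxt hte => ?_⟩
  refine (h' x t hxt.le fun z hz hxz hzt => ?_).1 hx
  rcases hxz.eq_or_lt with rfl | hxz
  · exact hxF hz
  · exact lt_asymm (hlt z hz z hxz le_rfl) (hzt.trans_lt hte)

theorem Definable.fat_of_infinite (hA : Definable S A) (h : {t | A t}.Infinite) : Fat A :=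
  by_contra fun h' => h (hA.finite_of_not_fat h')

theorem Definable.not_fat_iff (hA : Definable S A) : ¬ Fat A ↔ {t | A t}.Finite :=
  ⟨hA.finite_of_not_fat, not_fat_of_finite⟩

theorem Fat.or (hB : Definable S B) (hC : Definable S C) (h : Fat A) (hor : ∀ t, A t → B t ∨ C t) :
    Fat B ∨ Fat C := by
  by_contra! hn
  refine h.infinite (((hB.finite_of_not_fat hn.1).union (hC.finite_of_not_fat hn.2)).subset ?_)
  exact fun t ht => hor t ht

theorem Definable.isLUB_lub [Nonempty N] (hA : Definable S A) (hne : ∃ a, A a)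
    (hb : ∃ b, ∀ a, A a → a ≤ b) : IsLUB {x | A x} (lub A) := by
  suffices h : ∃ c, IsLUB {x | A x} c by
    obtain ⟨c, hc⟩ := h
    rwa [lub_eq hc]
  by_cases hmax : ∃ m, A m ∧ ∀ a, A a → a ≤ m
  · obtain ⟨m, hm, h⟩ := hmax
    exact ⟨m, fun a ha => h a ha, fun c hc => hc hm⟩
  push Not at hmax
  obtain ⟨F, hF, h⟩ := hA.exists_finite_breaks
  obtain ⟨e₀, he₀, hlt⟩ := exists_upper_of_finite hF hne hmax
  obtain ⟨e, he, he₀e⟩ := hmax e₀ he₀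
  have hub : ∀ z ∈ F, e ≤ z → ∀ a, A a → a ≤ z := fun z hz hez a ha =>
    le_of_not_gt fun hza => (hlt z hz a ha hza.le).not_ge (he₀e.le.trans hez)
  have hFe : (F ∩ Ici e).Nonempty := by
    by_contra hempty
    obtain ⟨b, hb⟩ := hb
    obtain ⟨b', hbb'⟩ := exists_gt (max b e)
    refine (hb b' ?_).not_gt ((le_max_left _ _).trans_lt hbb')
    refine (h e b' ((le_max_right _ _).trans hbb'.le) fun z hz hez _ => ?_).1 he
    exact hempty ⟨z, hz, hez⟩
  obtain ⟨f, ⟨hfF, hef⟩, hmin⟩ := exists_min_image (F ∩ Ici e) id (hF.inter_of_left _) hFe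
  refine ⟨f, fun a ha => hub f hfF hef a ha, fun c hc => ?_⟩
  by_contra! hcf
  have hec : e ≤ c := hc he
  obtain ⟨d, hcd, hdf⟩ := exists_between hcf
  refine hcd.not_ge (hc ((h e d (hec.trans hcd.le) fun z hz hez hzd => ?_).1 he))
  exact (hmin z ⟨hz, hez⟩).not_gt (hzd.trans_lt hdf)

end NoMaxOrder

theorem Definable.isGLB_glb [NoMinOrder N] [Nonempty N] (hA : Definable S A) (hne : ∃ a, A a)
    (hb : ∃ b, ∀ a, A a → b ≤ a) : IsGLB {x | A x} (glb A) := by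
  obtain ⟨c, hc⟩ : ∃ c : N, IsGLB {x | A x} c :=
    ⟨_, Definable.isLUB_lub (S := S.dual) (A := A) ⟨hA.1⟩ hne hb⟩
  rwa [glb_eq hc]

end OneVariable

section Uniform

variable {N : Type u} [LinearOrder N] [DenselyOrdered N]

theorem le_and_le_of_Ioo {p q a b : N} (hab : a < b) (h : ∀ t, a < t → t < b → p < t ∧ t < q) :
    p ≤ a ∧ b ≤ q := by
  constructor
  · refine le_of_forall_gt_imp_ge_of_dense fun t hat => ?_
    obtain ⟨s, has, hs⟩ := exists_between (lt_min hat hab)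
    rw [lt_min_iff] at hs
    exact ((h s has hs.2).1.trans hs.1).le
  · refine le_of_forall_lt_imp_le_of_dense fun t htb => ?_
    obtain ⟨s, hs, hsb⟩ := exists_between (max_lt htb hab)
    rw [max_lt_iff] at hs
    exact (hs.1.trans (h s hs.2 hsb).2).le

variable {S : Struc N}

theorem exists_Ioo_or [NoMaxOrder N] {B C : N → Prop} (hB : Definable S B) (hC : Definable S C)
    {p q : N} (hpq : p < q) (h : ∀ t, p < t → t < q → B t ∨ C t) :
    ∃ a b, p ≤ a ∧ a < b ∧ b ≤ q ∧
      ((∀ t, a < t → t < b → B t) ∨ ∀ t, a < t → t < b → C t) := by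
  have hB' : Definable S fun t => (p < t ∧ t < q) ∧ B t := Definable.autoFun
  have hC' : Definable S fun t => (p < t ∧ t < q) ∧ C t := Definable.autoFun
  rcases Fat.or (A := fun t => p < t ∧ t < q) hB' hC' ⟨p, q, hpq, fun t hpt htq => ⟨hpt, htq⟩⟩
    (by grind) with ⟨a, b, hab, hI⟩ | ⟨a, b, hab, hI⟩ <;>
  obtain ⟨hpa, hbq⟩ := le_and_le_of_Ioo hab fun t hat htb => (hI t hat htb).1
  · exact ⟨a, b, hpa, hab, hbq, Or.inl fun t hat htb => (hI t hat htb).2⟩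
  · exact ⟨a, b, hpa, hab, hbq, Or.inr fun t hat htb => (hI t hat htb).2⟩

end Uniform

section FiniteColumns

variable {N : Type u} [LinearOrder N] {S : Struc N} {p q : N} {D : N → N → Prop}

/-- A definable relation `D` whose fibers `{y | D x y}`, for `p < x < q`, are nonempty initial
segments of `(x, ∞)` without last element, while its fibers `{x | D x y}` are finite. No such
relation exists (`FiniteColumns.false`), which makes local properties hold uniformly on a
subinterval. -/
structure FiniteColumns (S : Struc N) (p q : N) (D : N → N → Prop) : Prop where
  definable : Definable S D
  mem : ∀ x y, D x y → p < x ∧ x < q ∧ x < y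
  down : ∀ x y y', D x y → x < y' → y' < y → D x y'
  rGerm : ∀ x y, D x y → RGerm y (D x)
  nonempty : ∀ x, p < x → x < q → ∃ y, D x y
  finite : ∀ y, {x | D x y}.Finite

namespace FiniteColumns

variable [Nonempty N]

/-- `Level D v y` says that `v` is the least `x` with `D x y`. -/
def Level (D : N → N → Prop) (v y : N) : Prop := (∃ x, D x y) ∧ (glb fun x => D x y) = v

instance : Definable S (Level : (N → N → Prop) → N → N → Prop) := by
  delta Level
  exact Definable.autoFun

theorem Level.eq {v v' y : N} (h : Level D v y) (h' : Level D v' y) : v = v' :=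
  h.2.symm.trans h'.2

theorem level_spec (hD : FiniteColumns S p q D) {v y : N} (h : Level D v y) :
    D v y ∧ ∀ x, D x y → v ≤ x := by
  obtain ⟨hy, rfl⟩ := h
  exact glb_mem_of_finite (hD.finite y) hy

theorem exists_level (hD : FiniteColumns S p q D) {x y : N} (h : D x y) :
    ∃ v, v ≤ x ∧ Level D v y :=
  ⟨_, (glb_mem_of_finite (hD.finite y) ⟨x, h⟩).2 x h, ⟨x, h⟩, rfl⟩

theorem lt_of_level (hD : FiniteColumns S p q D) {v y : N} (h : Level D v y) : v < y :=
  (hD.mem v y (hD.level_spec h).1).2.2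

theorem rGerm_level (hD : FiniteColumns S p q D) {v y : N} (h : Level D v y) :
    RGerm y (Level D v) := by
  obtain ⟨hvy, v_le⟩ := hD.level_spec h
  refine (hD.rGerm v y hvy).mono fun y' hyy' hvy' => ?_
  obtain ⟨w, hwv, hw⟩ := hD.exists_level hvy'
  have hwy : D w y := hD.down w y' y (hD.level_spec hw).1 (hwv.trans_lt (hD.lt_of_level h)) hyy'
  rwa [← hwv.antisymm (v_le w hwy)]

theorem infinite_setOf_exists_level [DenselyOrdered N] (hD : FiniteColumns S p q D) (hpq : p < q) :
    {v | ∃ y, Level D v y}.Infinite := by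
  intro hfin
  have exists_le (x : N) (hpx : p < x) (hxq : x < q) : ∃ v, v ≤ x ∧ ∃ y, Level D v y := by
    obtain ⟨y, hy⟩ := hD.nonempty x hpx hxq
    obtain ⟨v, hvx, hv⟩ := hD.exists_level hy
    exact ⟨v, hvx, y, hv⟩
  obtain ⟨x, hpx, hxq⟩ := exists_between hpq
  obtain ⟨v, -, hv⟩ := exists_le x hpx hxq
  obtain ⟨v₀, ⟨y₀, hv₀⟩, v₀_le⟩ := exists_min_image _ id hfin ⟨v, hv⟩
  obtain ⟨hpv₀, hv₀q, -⟩ := hD.mem _ _ (hD.level_spec hv₀).1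
  obtain ⟨x, hpx, hxv₀⟩ := exists_between hpv₀
  obtain ⟨w, hwx, hw⟩ := exists_le x hpx (hxv₀.trans hv₀q)
  exact (v₀_le w hw).not_gt (hwx.trans_lt hxv₀)

theorem not_fat_rGerm_level [DenselyOrdered N] : ¬ Fat fun v => RGerm v (Level D v) := by
  rintro ⟨a, b, hab, h⟩
  obtain ⟨v, hav, hvb⟩ := exists_between hab
  obtain ⟨c, hvc, hc⟩ := (h v hav hvb).and (rGerm_lt hvb)
  obtain ⟨w, hvw, hwc⟩ := exists_between hvc
  obtain ⟨y, hwy, hyc, hwy_level⟩ := (h w (hav.trans hvw) (hc w hwc hvw).2).exists_lt hwc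
  exact hvw.ne ((hc y hyc (hvw.trans hwy)).1.eq hwy_level)

theorem not_fat_initial [DenselyOrdered N] (hD : FiniteColumns S p q D) :
    ¬ Fat fun y => ∃ v, Level D v y ∧ ∀ y', v < y' → y' < y → ¬ Level D v y' := by
  rintro ⟨a, b, hab, h⟩
  obtain ⟨y, hay, hyb⟩ := exists_between hab
  obtain ⟨v, hv, -⟩ := h y hay hyb
  obtain ⟨y', hyy', hy'b, hv'⟩ := (hD.rGerm_level hv).exists_lt hyb
  obtain ⟨w, hw, not_level⟩ := h y' (hay.trans hyy') hy'b
  obtain rfl := hw.eq hv'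
  exact not_level y (hD.lt_of_level hv) hyy' hv

variable [DenselyOrdered N] [NoMinOrder N] [NoMaxOrder N]

theorem rGerm_or_exists_initial (hD : FiniteColumns S p q D) {v y : N} (h : Level D v y) :
    RGerm v (Level D v) ∨
      ∃ y₀, Level D v y₀ ∧ ∀ y', v < y' → y' < y₀ → ¬ Level D v y' := by
  have := hD.definable
  have hdef : Definable S (Level D v) := Definable.auto
  have v_le : v ∈ lowerBounds {y | Level D v y} := fun y hy => (hD.lt_of_level hy).le
  have hglb := hdef.isGLB_glb ⟨y, h⟩ ⟨v, v_le⟩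
  generalize glb (Level D v) = y₀ at hglb
  rcases (hglb.2 v_le).eq_or_lt with rfl | hvy₀
  · refine Or.inl ((hdef.rGerm_or v).resolve_right ?_)
    rintro ⟨b, hvb, hb⟩
    obtain ⟨y, hy, -, hyb⟩ := hglb.exists_between hvb
    exact hb y hyb (hD.lt_of_level hy) hy
  · refine Or.inr ⟨y₀, ?_, fun y' _ hy' hlevel => hy'.not_ge (hglb.1 hlevel)⟩
    have hDvy₀ : D v y₀ := by
      rcases (hglb.1 h).eq_or_lt with rfl | hlt
      · exact (hD.level_spec h).1
      · exact hD.down v y y₀ (hD.level_spec h).1 hvy₀ hlt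
    obtain ⟨w, -, hw⟩ := hD.exists_level hDvy₀
    obtain ⟨b, hb, hwb⟩ := hD.rGerm_level hw
    obtain ⟨z, hz, hy₀z, hzb⟩ := hglb.exists_between hb
    rcases hy₀z.eq_or_lt with rfl | hlt
    · exact hz
    · rwa [hz.eq (hwb z hzb hlt)]

protected theorem false (hD : FiniteColumns S p q D) (hpq : p < q) : False := by
  have := hD.definable
  have hgerm : Definable S fun v => RGerm v (Level D v) := Definable.autoFun
  have hinitial : Definable S fun y => ∃ v, Level D v y ∧ ∀ y', v < y' → y' < y → ¬ Level D v y' :=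
    Definable.autoFun
  refine hD.infinite_setOf_exists_level hpq (((hgerm.finite_of_not_fat not_fat_rGerm_level).union
    ((hinitial.finite_of_not_fat hD.not_fat_initial).image fun y => glb fun x => D x y)).subset ?_)
  rintro v ⟨y, hy⟩
  exact (hD.rGerm_or_exists_initial hy).imp id
    fun ⟨y₀, hy₀, not_level⟩ => ⟨y₀, ⟨v, hy₀, not_level⟩, hy₀.2⟩

end FiniteColumns

end FiniteColumns

section Monotonicity

variable {N : Type u} [LinearOrder N] [DenselyOrdered N] [NoMinOrder N] [NoMaxOrder N] [Nonempty N]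
  {S : Struc N}

theorem exists_uniform {A : N → N → Prop} (hA : Definable S A) {p q : N} (hpq : p < q)
    (hdown : ∀ x y y', A x y → x < y' → y' < y → A x y')
    (hex : ∀ x, p < x → x < q → ∃ y, x < y ∧ A x y) :
    ∃ a b, p ≤ a ∧ a < b ∧ b ≤ q ∧ ∀ x y, a < x → x < y → y < b → A x y := by
  let D : N → N → Prop := fun x y => p < x ∧ x < q ∧ x < y ∧ ∃ y', y < y' ∧ A x y'
  have definable_D : Definable S D := by
    unfold D
    exact Definable.autoFun
  by_contra hcon
  refine FiniteColumns.false (D := D) ⟨definable_D, fun x y h => ⟨h.1, h.2.1, h.2.2.1⟩, ?_, ?_, ?_,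
    fun y => ?_⟩ hpq
  · rintro x y y' ⟨hpx, hxq, -, z, hyz, hz⟩ hxy' hy'y
    exact ⟨hpx, hxq, hxy', z, hy'y.trans hyz, hz⟩
  · rintro x y ⟨hpx, hxq, hxy, z, hyz, hz⟩
    exact ⟨z, hyz, fun t htz hyt => ⟨hpx, hxq, hxy.trans hyt, z, htz, hz⟩⟩
  · intro x hpx hxq
    obtain ⟨y, hxy, hy⟩ := hex x hpx hxq
    obtain ⟨z, hxz, hzy⟩ := exists_between hxy
    exact ⟨z, hpx, hxq, hxz, y, hzy, hy⟩
  · have definable_column : Definable S fun x => D x y := Definable.auto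
    refine definable_column.finite_of_not_fat ?_
    rintro ⟨a, b, hab, h⟩
    obtain ⟨hpa, hbq⟩ := le_and_le_of_Ioo hab fun t hat htb =>
      ⟨(h t hat htb).1, (h t hat htb).2.1⟩
    refine hcon ⟨a, b, hpa, hab, hbq, fun x z hax hxz hzb => ?_⟩
    obtain ⟨-, -, -, y', hyy', hy'⟩ := h x hax (hxz.trans hzb)
    exact hdown _ _ _ hy' hxz ((h z (hax.trans hxz) hzb).2.2.1.trans hyy')

theorem exists_forall_rel_of_rGerm {f : N → N} (hf : Definable S f) {R : N → N → Prop}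
    (hR : Definable S R) {p q : N} (hpq : p < q)
    (h : ∀ x, p < x → x < q → RGerm x fun t => R (f x) (f t)) :
    ∃ a b, p ≤ a ∧ a < b ∧ b ≤ q ∧ ∀ x y, a < x → x < y → y < b → R (f x) (f y) := by
  have hA : Definable S fun x y => ∀ t, x < t → t < y → R (f x) (f t) := Definable.autoFun
  obtain ⟨a, b, hpa, hab, hbq, hrel⟩ := exists_uniform hA hpq
    (fun x y y' hrel _ hy'y t hxt hty' => hrel t hxt (hty'.trans hy'y)) fun x hpx hxq => by
      obtain ⟨y, hxy, hy⟩ := h x hpx hxq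
      exact ⟨y, hxy, fun t hxt hty => hy t hty hxt⟩
  refine ⟨a, b, hpa, hab, hbq, fun x y hax hxy hyb => ?_⟩
  obtain ⟨z, hyz, hzb⟩ := exists_between hyb
  exact hrel x z hax (hxy.trans hyz) hzb y hxy hyz

omit [NoMinOrder N] [Nonempty N] in
theorem rGerm_trichotomy {f : N → N} (hf : Definable S f) (x : N) :
    (RGerm x fun t => f x = f t) ∨ (RGerm x fun t => f x < f t) ∨ RGerm x fun t => f t < f x := by
  have heq : Definable S fun t => f x = f t := Definable.autoFun
  have hlt : Definable S fun t => f x < f t := Definable.autoFun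
  rcases heq.rGerm_or x with h | hne
  · exact Or.inl h
  rcases hlt.rGerm_or x with h | hnlt
  · exact Or.inr (Or.inl h)
  · exact Or.inr (Or.inr ((hne.and hnlt).mono fun t _ ht =>
      lt_of_le_of_ne (not_lt.1 ht.2) (Ne.symm ht.1)))

theorem exists_monotone {f : N → N} (hf : Definable S f) {p q : N} (hpq : p < q) :
    ∃ a b, p ≤ a ∧ a < b ∧ b ≤ q ∧ ((∀ x y, a < x → x < y → y < b → f x = f y) ∨
      (∀ x y, a < x → x < y → y < b → f x < f y) ∨ ∀ x y, a < x → x < y → y < b → f y < f x) := by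
  have heq : Definable S fun x => RGerm x fun t => f x = f t := Definable.autoFun
  have hlt : Definable S fun x => RGerm x fun t => f x < f t := Definable.autoFun
  have hgt : Definable S fun x => RGerm x fun t => f t < f x := Definable.autoFun
  have hne : Definable S fun x => (RGerm x fun t => f x < f t) ∨ RGerm x fun t => f t < f x :=
    Definable.autoFun
  obtain ⟨a, b, hpa, hab, hbq, h | h⟩ := exists_Ioo_or heq hne hpq fun t _ _ =>
    rGerm_trichotomy hf t
  · obtain ⟨c, d, hac, hcd, hdb, h⟩ :=
      exists_forall_rel_of_rGerm hf (R := fun u v => u = v) Definable.autoFun hab h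
    exact ⟨c, d, hpa.trans hac, hcd, hdb.trans hbq, Or.inl h⟩
  obtain ⟨a', b', haa', hab', hbb', h | h⟩ := exists_Ioo_or hlt hgt hab h
  · obtain ⟨c, d, hac, hcd, hdb, h⟩ :=
      exists_forall_rel_of_rGerm hf (R := fun u v => u < v) Definable.autoFun hab' h
    exact ⟨c, d, (hpa.trans haa').trans hac, hcd, hdb.trans (hbb'.trans hbq), Or.inr (Or.inl h)⟩
  · obtain ⟨c, d, hac, hcd, hdb, h⟩ :=
      exists_forall_rel_of_rGerm hf (R := fun u v => v < u) Definable.autoFun hab' h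
    exact ⟨c, d, (hpa.trans haa').trans hac, hcd, hdb.trans (hbb'.trans hbq), Or.inr (Or.inr h)⟩

end Monotonicity

section Continuity

/-- Continuity at `t` for the order topologies, stated in terms of the orders only. -/
def ContAt {M N : Type*} [LT M] [LT N] (f : M → N) (t : M) : Prop :=
  ∀ v w, v < f t → f t < w → ∃ a b, a < t ∧ t < b ∧ ∀ s, a < s → s < b → v < f s ∧ f s < w

theorem contAt_of_eqOn_Ioo {M N : Type*} [Preorder M] [LT N] {f : M → N} {a b t : M} (hat : a < t)
    (htb : t < b) (h : ∀ s, a < s → s < b → f s = f t) : ContAt f t :=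
  fun v w hv hw => ⟨a, b, hat, htb, fun s has hsb => by rw [h s has hsb]; exact ⟨hv, hw⟩⟩

theorem contAt_of_strictMonoOn {M N : Type*} [LinearOrder M] [LinearOrder N] [DenselyOrdered N]
    {f : M → N} {a b t : M} (hf : StrictMonoOn f (Ioo a b)) (ht : t ∈ Ioo a b) {c d : N}
    (surj : ∀ u, c < u → u < d → ∃ x, (a < x ∧ x < b) ∧ f x = u) (hct : c < f t) (htd : f t < d) :
    ContAt f t := by
  intro v w hv hw
  obtain ⟨v', hvv', hv't⟩ := exists_between (max_lt hv hct)
  obtain ⟨w', htw', hw'w⟩ := exists_between (lt_min hw htd)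
  rw [max_lt_iff] at hvv'
  rw [lt_min_iff] at hw'w
  obtain ⟨r, hr, rfl⟩ := surj v' hvv'.2 (hv't.trans htd)
  obtain ⟨s, hs, rfl⟩ := surj w' (hct.trans htw') hw'w.2
  refine ⟨r, s, (hf.lt_iff_lt hr ht).1 hv't, (hf.lt_iff_lt ht hs).1 htw', fun z hrz hzs => ?_⟩
  have hz : z ∈ Ioo a b := ⟨hr.1.trans hrz, hzs.trans hs.2⟩
  exact ⟨hvv'.1.trans (hf hr hz hrz), (hf hz hs hzs).trans hw'w.1⟩

variable {N : Type u} [LinearOrder N] [DenselyOrdered N] [NoMinOrder N] [NoMaxOrder N] [Nonempty N]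
  {S : Struc N}

omit [DenselyOrdered N] [NoMinOrder N] [NoMaxOrder N] [Nonempty N] in
instance : Definable S (ContAt : (N → N) → N → Prop) := by
  delta ContAt
  exact Definable.autoFun

omit [NoMinOrder N] [Nonempty N] in
theorem fat_image {f : N → N} (hf : Definable S f) {a b : N} (hab : a < b)
    (hinj : ∀ x y, a < x → x < y → y < b → f x ≠ f y) :
    Fat fun v => ∃ x, (a < x ∧ x < b) ∧ f x = v := by
  have hdef : Definable S fun v => ∃ x, (a < x ∧ x < b) ∧ f x = v := Definable.autoFun
  refine hdef.fat_of_infinite ((Ioo_infinite hab).image (f := f) fun x hx y hy hxy => ?_)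
  rcases lt_trichotomy x y with hlt | heq | hgt
  · exact absurd hxy (hinj x y hx.1 hlt hy.2)
  · exact heq
  · exact absurd hxy.symm (hinj y x hy.1 hgt hx.2)

theorem exists_contAt {f : N → N} (hf : Definable S f) {p q : N} (hpq : p < q) :
    ∃ t, p < t ∧ t < q ∧ ContAt f t := by
  obtain ⟨a, b, hpa, hab, hbq, hconst | hmono | hanti⟩ := exists_monotone hf hpq
  · obtain ⟨t, hat, htb⟩ := exists_between hab
    refine ⟨t, hpa.trans_lt hat, htb.trans_le hbq, contAt_of_eqOn_Ioo hat htb fun s has hsb => ?_⟩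
    rcases lt_trichotomy s t with h | h | h
    · exact hconst s t has h htb
    · rw [h]
    · exact (hconst t s hat h hsb).symm
  · obtain ⟨c, d, hcd, surj⟩ := fat_image hf hab fun x y hax hxy hyb => (hmono x y hax hxy hyb).ne
    obtain ⟨u, hcu, hud⟩ := exists_between hcd
    obtain ⟨t, ht, rfl⟩ := surj u hcu hud
    exact ⟨t, hpa.trans_lt ht.1, ht.2.trans_le hbq, contAt_of_strictMonoOn
      (fun x hx y hy hxy => hmono x y hx.1 hxy hy.2) ht surj hcu hud⟩
  · obtain ⟨c, d, hcd, surj⟩ := fat_image hf hab fun x y hax hxy hyb => (hanti x y hax hxy hyb).ne'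
    obtain ⟨u, hcu, hud⟩ := exists_between hcd
    obtain ⟨t, ht, rfl⟩ := surj u hcu hud
    have hcont : ContAt (N := Nᵒᵈ) f t := contAt_of_strictMonoOn (N := Nᵒᵈ)
      (fun x hx y hy hxy => hanti x y hx.1 hxy hy.2) ht (fun u hdu huc => surj u huc hdu) hud hcu
    refine ⟨t, hpa.trans_lt ht.1, ht.2.trans_le hbq, fun v w hv hw => ?_⟩
    obtain ⟨r, s, hrt, hts, h⟩ := hcont w v hw hv
    exact ⟨r, s, hrt, hts, fun z hrz hzs => (h z hrz hzs).symm⟩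

theorem finite_not_contAt {f : N → N} (hf : Definable S f) : {t | ¬ ContAt f t}.Finite := by
  have hdef : Definable S fun t => ¬ ContAt f t := Definable.autoFun
  refine hdef.finite_of_not_fat ?_
  rintro ⟨p, q, hpq, h⟩
  obtain ⟨t, hpt, htq, ht⟩ := exists_contAt hf hpq
  exact h t hpt htq ht

end Continuity

section FiniteFibers

variable {N : Type u} [LinearOrder N] [DenselyOrdered N] [NoMinOrder N] [NoMaxOrder N] [Nonempty N]
  {S : Struc N}

omit [NoMaxOrder N] in
theorem Definable.interval_induction {A : N → Prop} (hA : Definable S A) {x y : N}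
    (hstep : ∀ z, x ≤ z → z < y → (∀ t, x ≤ t → t ≤ z → A t) → RGerm z A)
    (hlim : ∀ z, x ≤ z → z ≤ y → (∀ t, x ≤ t → t < z → A t) → A z) :
    ∀ t, x ≤ t → t ≤ y → A t := by
  by_contra! hcounter
  have hdef : Definable S fun t => x ≤ t ∧ t ≤ y ∧ ¬ A t := Definable.autoFun
  have hglb := hdef.isGLB_glb hcounter ⟨x, fun a h => h.1⟩
  generalize glb (fun t => x ≤ t ∧ t ≤ y ∧ ¬ A t) = w at hglb
  obtain ⟨t, hxt, hty, hAt⟩ := hcounter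
  have hwt : w ≤ t := hglb.1 ⟨hxt, hty, hAt⟩
  have hxw : x ≤ w := hglb.2 fun b hb => hb.1
  have below (s : N) (hxs : x ≤ s) (hsw : s < w) : A s := by
    by_contra hs
    exact hsw.not_ge (hglb.1 ⟨hxs, hsw.le.trans (hwt.trans hty), hs⟩)
  have hAw : A w := hlim w hxw (hwt.trans hty) below
  have hwt' : w < t := lt_of_le_of_ne hwt (by rintro rfl; exact hAt hAw)
  obtain ⟨b, hwb, hb⟩ := hstep w hxw (hwt'.trans_le hty) fun s hxs hsw => by
    rcases hsw.eq_or_lt with rfl | hsw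
    · exact hAw
    · exact below s hxs hsw
  refine hwb.not_ge (hglb.2 fun c hc => ?_)
  by_contra! hcb
  rcases (hglb.1 hc : w ≤ c).eq_or_lt with rfl | hwc
  · exact hc.2.2 hAw
  · exact hc.2.2 (hb c hcb hwc)

/-- The end of the maximal interval `(c, reach A c d)` on which `A` holds, truncated at `d`. -/
noncomputable def reach (A : N → Prop) (c d : N) : N :=
  lub fun x => x ≤ d ∧ ∀ t, c < t → t < x → A t

instance : Definable S (reach : (N → Prop) → N → N → N) := by
  delta reach
  exact Definable.autoFun

omit [NoMinOrder N] in
theorem isLUB_reach {A : N → Prop} (hA : Definable S A) {c d : N} (hcd : c < d) :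
    IsLUB {x | x ≤ d ∧ ∀ t, c < t → t < x → A t} (reach A c d) := by
  have hdef : Definable S fun x => x ≤ d ∧ ∀ t, c < t → t < x → A t := Definable.autoFun
  exact hdef.isLUB_lub ⟨c, hcd.le, fun t hct htc => absurd htc hct.not_gt⟩ ⟨d, fun x hx => hx.1⟩

omit [NoMinOrder N] in
theorem reach_le {A : N → Prop} (hA : Definable S A) {c d : N} (hcd : c < d) : reach A c d ≤ d :=
  (isLUB_reach hA hcd).2 fun _ h => h.1

omit [NoMinOrder N] in
theorem of_lt_reach {A : N → Prop} (hA : Definable S A) {c d t : N} (hcd : c < d) (hct : c < t)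
    (ht : t < reach A c d) : A t :=
  let ⟨_, hx, htx⟩ := (lt_isLUB_iff (isLUB_reach hA hcd)).1 ht
  hx.2 t hct htx

omit [NoMinOrder N] in
theorem lt_reach {A : N → Prop} (hA : Definable S A) {c d : N} (hcd : c < d) (h : RGerm c A) :
    c < reach A c d := by
  obtain ⟨y, hcy, hy⟩ := h
  exact (lt_min hcd hcy).trans_le ((isLUB_reach hA hcd).1
    ⟨min_le_left _ _, fun t hct hty => hy t (hty.trans_le (min_le_right _ _)) hct⟩)


theorem rGerm_glb_setOf_rGerm {A : N → Prop} (hA : Definable S A) {n₀ : N}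
    (hfat : Fat fun x => n₀ < x ∧ A x) : RGerm (glb fun x => n₀ ≤ x ∧ RGerm x A) A := by
  have hdef : Definable S fun x => n₀ ≤ x ∧ RGerm x A := Definable.autoFun
  have hne : ∃ x, n₀ ≤ x ∧ RGerm x A := by
    obtain ⟨c, d, hcd, h⟩ := hfat
    obtain ⟨x, hcx, hxd⟩ := exists_between hcd
    exact ⟨x, (h x hcx hxd).1.le, d, hxd, fun t htd hxt => (h t (hcx.trans hxt) htd).2⟩
  have hglb := hdef.isGLB_glb hne ⟨n₀, fun x hx => hx.1⟩
  refine (hA.rGerm_or _).resolve_right ?_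
  rintro ⟨c, hc, hnot⟩
  obtain ⟨x, hx, hxc⟩ := (isGLB_lt_iff hglb).1 hc
  obtain ⟨t, hxt, htc, hAt⟩ := hx.2.exists_lt hxc
  exact hnot t htc ((hglb.1 hx).trans_lt hxt) hAt

variable {A : N → N → Prop}

theorem not_forall_rGerm_apply_of_ne (hA : Definable S A) (hfin : ∀ x, {e | A x e}.Finite)
    {p : N → N} (hp : Definable S p) {a b : N} (hab : a < b)
    (hinj : ∀ x y, a < x → x < y → y < b → p x ≠ p y) :
    ¬ ∀ e, a < e → e < b → RGerm (p e) fun t => A t e := by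
  intro hgerm
  obtain ⟨c, d, hcd, surj⟩ := fat_image hp hab hinj
  have hdef : Definable S fun u y => ∀ e, a < e → e < b → p e = u → ∀ t, u < t → t < y → A t e :=
    Definable.autoFun
  obtain ⟨a', b', hca, hab', hbd, uniform⟩ := exists_uniform hdef hcd
    (fun u y y' h _ hy'y e hae heb hpe t hut hty' => h e hae heb hpe t hut (hty'.trans hy'y))
    (fun u hcu hud => by
      obtain ⟨e, ⟨hae, heb⟩, rfl⟩ := surj u hcu hud
      obtain ⟨y, hy, hAy⟩ := hgerm e hae heb
      refine ⟨y, hy, fun e' hae' heb' he t hut hty => ?_⟩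
      rcases lt_trichotomy e e' with hlt | rfl | hlt
      · exact absurd he.symm (hinj _ _ hae hlt heb')
      · exact hAy t hty hut
      · exact absurd he (hinj _ _ hae' hlt heb))
  obtain ⟨y, ha'y, hyb'⟩ := exists_between hab'
  obtain ⟨w, ha'w, hwy⟩ := exists_between ha'y
  refine Ioo_infinite ha'w (((hfin w).image p).subset ?_)
  intro v hv
  obtain ⟨e, ⟨hae, heb⟩, rfl⟩ := surj v (hca.trans_lt hv.1)
    (hv.2.trans (hwy.trans (hyb'.trans_le hbd)))
  exact ⟨e, uniform _ y hv.1 (hv.2.trans hwy) hyb' e hae heb rfl w hv.2 hwy, rfl⟩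

theorem exists_le_on_Ioo_of_forall_lt {g : N → N} (hg : Definable S g) {a b c : N} (hab : a < b)
    (h : ∀ e, a < e → e < b → c < g e) :
    ∃ a' b' w, a' < b' ∧ c < w ∧ ∀ e, a' < e → e < b' → w ≤ g e := by
  obtain ⟨a', b', haa', hab', hbb', hmono⟩ := exists_monotone hg hab
  obtain ⟨r, har, hrb⟩ := exists_between hab'
  obtain ⟨s, hrs, hsb⟩ := exists_between hrb
  refine ⟨r, s, min (g r) (g s), hrs, lt_min (h r (haa'.trans_lt har) (hrb.trans_le hbb'))
    (h s (haa'.trans_lt (har.trans hrs)) (hsb.trans_le hbb')), fun e hre hes => ?_⟩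
  rcases hmono with hconst | hmono | hanti
  · exact (min_le_left _ _).trans (hconst _ _ har hre (hes.trans hsb)).le
  · exact (min_le_left _ _).trans (hmono _ _ har hre (hes.trans hsb)).le
  · exact (min_le_right _ _).trans (hanti _ _ (har.trans hre) hes hsb).le

theorem not_forall_rGerm_at (hA : Definable S A) (hfin : ∀ x, {e | A x e}.Finite) {a b : N}
    (hab : a < b) (c : N) : ¬ ∀ e, a < e → e < b → RGerm c fun t => A t e := by
  intro hgerm
  obtain ⟨d, hcd⟩ := exists_gt c
  have hAe (e : N) : Definable S fun t => A t e := Definable.autoFun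
  obtain ⟨a', b', w, hab', hcw, w_le⟩ := exists_le_on_Ioo_of_forall_lt (S := S)
    (g := fun e => reach (fun t => A t e) c d) Definable.autoFun hab
    fun e hae heb => lt_reach (hAe e) hcd (hgerm e hae heb)
  obtain ⟨t, hct, htw⟩ := exists_between hcw
  exact Ioo_infinite hab' ((hfin t).subset fun e he =>
    of_lt_reach (hAe e) hcd hct (htw.trans_le (w_le e he.1 he.2)))

theorem not_forall_fat_right (hA : Definable S A) (hfin : ∀ x, {e | A x e}.Finite) {n₀ a b : N}
    (hab : a < b) : ¬ ∀ e, a < e → e < b → Fat fun x => n₀ < x ∧ A x e := by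
  intro hfat
  let p : N → N := fun e => glb fun x => n₀ ≤ x ∧ RGerm x fun t => A t e
  have hp : Definable S p := by
    unfold p
    exact Definable.autoFun
  obtain ⟨a', b', haa', hab', hbb', hmono⟩ := exists_monotone hp hab
  have hgerm (e : N) (hae : a' < e) (heb : e < b') : RGerm (p e) fun t => A t e :=
    rGerm_glb_setOf_rGerm (A := fun t => A t e) Definable.autoFun
      (hfat e (haa'.trans_lt hae) (heb.trans_le hbb'))
  rcases hmono with hconst | hmono | hanti
  · obtain ⟨e₀, hae₀, heb₀⟩ := exists_between hab'
    refine not_forall_rGerm_at hA hfin hab' (p e₀) fun e hae heb => ?_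
    rcases lt_trichotomy e e₀ with hlt | rfl | hlt
    · rw [← hconst _ _ hae hlt heb₀]
      exact hgerm e hae heb
    · exact hgerm e hae heb
    · rw [hconst _ _ hae₀ hlt heb]
      exact hgerm e hae heb
  · exact not_forall_rGerm_apply_of_ne hA hfin hp hab' (fun x y hx hxy hy =>
      (hmono x y hx hxy hy).ne) hgerm
  · exact not_forall_rGerm_apply_of_ne hA hfin hp hab' (fun x y hx hxy hy =>
      (hanti x y hx hxy hy).ne') hgerm

theorem not_fat_fat (hA : Definable S A) (hfin : ∀ x, {e | A x e}.Finite) :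
    ¬ Fat fun e => Fat fun x => A x e := by
  rintro ⟨a, b, hab, hfat⟩
  obtain ⟨n₀⟩ := ‹Nonempty N›
  have hright : Definable S fun e => Fat fun x => n₀ < x ∧ A x e := Definable.autoFun
  have hleft : Definable S fun e => Fat fun x => x < n₀ ∧ A x e := Definable.autoFun
  have fat_or (e : N) (hae : a < e) (heb : e < b) :
      (Fat fun x => n₀ < x ∧ A x e) ∨ Fat fun x => x < n₀ ∧ A x e := by
    by_contra! hcon
    have hright : Definable S fun x => n₀ < x ∧ A x e := Definable.autoFun
    have hleft : Definable S fun x => x < n₀ ∧ A x e := Definable.autoFun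
    refine (hfat e hae heb).infinite ((((hright.not_fat_iff.1 hcon.1).union
      (hleft.not_fat_iff.1 hcon.2)).insert n₀).subset fun x hx => ?_)
    rcases lt_trichotomy n₀ x with hlt | heq | hgt
    · exact Or.inr (Or.inl ⟨hlt, hx⟩)
    · exact Or.inl heq.symm
    · exact Or.inr (Or.inr ⟨hgt, hx⟩)
  obtain ⟨a', b', -, hab', -, h | h⟩ := exists_Ioo_or hright hleft hab fat_or
  · exact not_forall_fat_right hA hfin hab' h
  · refine not_forall_fat_right (S := S.dual) (N := Nᵒᵈ) (A := A) ⟨hA.1⟩ hfin (n₀ := n₀) hab'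
      fun e hbe hea => ?_
    obtain ⟨c, d, hcd, hI⟩ := h e hea hbe
    exact ⟨d, c, hcd, fun t hdt htc => hI t htc hdt⟩

theorem finite_setOf_infinite (hA : Definable S A) (hfin : ∀ x, {e | A x e}.Finite) :
    {e | {x | A x e}.Infinite}.Finite := by
  have hdef : Definable S fun e => Fat fun x => A x e := Definable.autoFun
  refine (hdef.finite_of_not_fat (not_fat_fat hA hfin)).subset fun e he => ?_
  have hrow : Definable S fun x => A x e := Definable.autoFun
  exact hrow.fat_of_infinite he

end FiniteFibers

section StrongChoice

variable {N : Type u} [LinearOrder N]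

/-- A definable predicate `Z` has strong choice if a single function, definable as a function of
the set to choose from, picks an element of every definable set meeting `Z`, and picks it in `Z`.
Applied to the members of a definable family, this function is a strong definable choice. -/
def StrongChoice (S : Struc N) {Γ : Type*} [DefinableSpace S Γ] (Z : Γ → Prop) : Prop :=
  Definable S Z ∧ ∃ t : (Γ → Prop) → Γ, Definable S t ∧
    ∀ A, Definable S A → (∃ g, A g ∧ Z g) → A (t A) ∧ Z (t A)

variable {S : Struc N} {Γ Δ : Type*} [DefinableSpace S Γ] [DefinableSpace S Δ]

/-- Functions into `Γ` can be defined by cases, the condition being a definable parameter. -/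
class DefinableCases (S : Struc N) (Γ : Type*) [DefinableSpace S Γ] : Prop where
  exists_cases : ∃ c : Prop → Γ → Γ → Γ, Definable S c ∧
    (∀ {p} (_ : p) {a b}, c p a b = a) ∧ ∀ {p} (_ : ¬ p) {a b}, c p a b = b

instance [Nonempty N] : DefinableCases S N :=
  ⟨pick, Definable.auto, fun h a b => pick_pos h a b, fun h a b => pick_neg h a b⟩

instance [Nonempty N] {m : ℕ} : DefinableCases S (Fin m → N) :=
  ⟨fun p a b i => pick p (a i) (b i), Definable.autoFun,
    fun h _ _ => funext fun _ => pick_pos h _ _, fun h _ _ => funext fun _ => pick_neg h _ _⟩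

namespace StrongChoice

theorem mono {Z Z' : Γ → Prop} (h : StrongChoice S Z) (hZ' : Definable S Z')
    (hZZ' : ∀ g, Z' g → Z g) : StrongChoice S Z' := by
  obtain ⟨-, t, ht, h⟩ := h
  refine ⟨hZ', fun A => t fun g => A g ∧ Z' g, Definable.autoFun, ?_⟩
  rintro A hA ⟨g, hg, hg'⟩
  exact (h (fun g => A g ∧ Z' g) Definable.autoFun ⟨g, ⟨hg, hg'⟩, hZZ' g hg'⟩).1

theorem congr {Z Z' : Γ → Prop} (h : StrongChoice S Z) (hZZ' : ∀ g, Z g ↔ Z' g) :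
    StrongChoice S Z' := by
  rwa [show Z' = Z from funext fun g => propext (hZZ' g).symm]

theorem image [Parametrized S Γ] [Definable S (Eq : Δ → Δ → Prop)] {Z : Γ → Prop}
    (h : StrongChoice S Z) {φ : Γ → Δ} (hφ : Definable S φ) :
    StrongChoice S fun d => ∃ g, Z g ∧ φ g = d := by
  obtain ⟨hZ, t, ht, h⟩ := h
  refine ⟨Definable.autoFun, fun A => φ (t fun g => A (φ g)), Definable.autoFun, ?_⟩
  rintro A hA ⟨d, hd, g, hg, rfl⟩
  obtain ⟨hAt, hZt⟩ := h (fun g => A (φ g)) Definable.autoFun ⟨g, hd, hg⟩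
  exact ⟨hAt, _, hZt, rfl⟩

theorem prod [Parametrized S Γ] [Parametrized S Δ] {X : Γ → Prop} {Y : Δ → Prop}
    (hX : StrongChoice S X) (hY : StrongChoice S Y) :
    StrongChoice S fun z : Γ × Δ => X z.1 ∧ Y z.2 := by
  obtain ⟨hX, s, hs, choose_X⟩ := hX
  obtain ⟨hY, t, ht, choose_Y⟩ := hY
  refine ⟨Definable.autoFun, fun A => (s fun a => ∃ b, A (a, b) ∧ Y b,
    t fun b => A (s (fun a => ∃ b, A (a, b) ∧ Y b), b)), Definable.autoFun, ?_⟩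
  rintro A hA ⟨⟨a, b⟩, hab, ha, hb⟩
  have hs := choose_X (fun a => ∃ b, A (a, b) ∧ Y b) Definable.autoFun ⟨a, ⟨b, hab, hb⟩, ha⟩
  beta_reduce
  generalize s (fun a => ∃ b, A (a, b) ∧ Y b) = a' at hs ⊢
  obtain ⟨⟨b', hb', hYb'⟩, hXa'⟩ := hs
  have := Parametrized.definable (S := S) a'
  obtain ⟨hAt, hYt⟩ := choose_Y (fun b => A (a', b)) Definable.autoFun ⟨b', hb', hYb'⟩
  exact ⟨hAt, hXa', hYt⟩

theorem unit : StrongChoice S fun _ : Unit => True :=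
  ⟨Definable.autoFun, fun _ => (), Definable.autoFun, fun _ _ ⟨_, h⟩ => h⟩

theorem pi : ∀ {m : ℕ} {X : Fin m → N → Prop}, (∀ i, StrongChoice S (X i)) →
    StrongChoice S fun x : Fin m → N => ∀ i, X i (x i)
  | 0, X, _ => by
    refine ⟨⟨fun n _ _ _ _ _ => Def.all_fin fun i => i.elim0⟩, fun _ => Fin.elim0,
      Definable.autoFun, ?_⟩
    rintro A - ⟨g, hg, hg'⟩
    rw [Subsingleton.elim Fin.elim0 g]
    exact ⟨hg, hg'⟩
  | m + 1, X, h => by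
    have hcons : Definable S fun z : N × (Fin m → N) => (Fin.cons z.1 z.2 : Fin (m + 1) → N) :=
      DefinableMap.pt <| DefinableMap.tuple <|
        Fin.cases DefinableMap.id.fst fun i => DefinableMap.id.snd.coord i
    refine (((h 0).prod (pi fun i => h i.succ)).image hcons).congr fun x => ⟨?_, ?_⟩
    · rintro ⟨z, ⟨hzero, hsucc⟩, rfl⟩
      exact Fin.cases hzero hsucc
    · exact fun hx => ⟨(x 0, Fin.tail x), ⟨hx 0, fun i => hx i.succ⟩, Fin.cons_self_tail x⟩

theorem of_dual {Z : N → Prop} (h : StrongChoice S.dual (Γ := Nᵒᵈ) Z) : StrongChoice S Z := by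
  obtain ⟨hZ, t, ht, h⟩ := h
  exact ⟨⟨hZ.1⟩, t, ⟨ht.1⟩, fun A hA => h A ⟨hA.1⟩⟩

theorem empty [Parametrized S Γ] [Nonempty Γ] : StrongChoice S fun _ : Γ => False := by
  have := Parametrized.definable (S := S) (Classical.arbitrary Γ)
  exact ⟨Definable.autoFun, fun _ => Classical.arbitrary Γ, Definable.autoFun,
    fun _ _ ⟨_, h⟩ => h.2.elim⟩

theorem or [Parametrized S Γ] [DefinableCases S Γ] {Z Z' : Γ → Prop} (h : StrongChoice S Z)
    (h' : StrongChoice S Z') : StrongChoice S fun g => Z g ∨ Z' g := by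
  obtain ⟨cases, hcases, cases_pos, cases_neg⟩ := DefinableCases.exists_cases (S := S) (Γ := Γ)
  obtain ⟨hZ, t, ht, choose_Z⟩ := h
  obtain ⟨hZ', t', ht', choose_Z'⟩ := h'
  refine ⟨Definable.autoFun, fun A => cases (∃ g, A g ∧ Z g) (t A) (t' A), Definable.autoFun, ?_⟩
  rintro A hA ⟨g, hg, hg'⟩
  by_cases hp : ∃ g, A g ∧ Z g
  · beta_reduce
    rw [cases_pos hp]
    exact (choose_Z A hA hp).imp id Or.inl
  · beta_reduce
    rw [cases_neg hp]
    exact (choose_Z' A hA ⟨g, hg, hg'.resolve_left fun h => hp ⟨g, hg, h⟩⟩).imp id Or.inr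

theorem exists_finite [Parametrized S Γ] [Nonempty Γ] [DefinableCases S Γ] {ι : Type*} [Finite ι]
    {Z : ι → Γ → Prop} (h : ∀ i, StrongChoice S (Z i)) : StrongChoice S fun g => ∃ i, Z i g := by
  induction ι using Finite.induction_empty_option with
  | of_equiv e ih => exact (ih fun i => h (e i)).congr fun g =>
      e.exists_congr_right (q := fun i => Z i g)
  | h_empty => exact empty.congr (by simp)
  | h_option ih => exact ((h none).or (ih fun i => h (some i))).congr fun g =>
      (Option.exists (p := fun i => Z i g)).symm

section Line

variable [Nonempty N]

theorem finite_rel [Parametrized S Γ] {W : Γ → Prop} (h : StrongChoice S W) {R : Γ → N → Prop}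
    (hR : Definable S R) (hfin : ∀ g, W g → {e | R g e}.Finite) :
    StrongChoice S fun e => ∃ g, W g ∧ R g e := by
  obtain ⟨hW, t, ht, choose_W⟩ := h
  refine ⟨Definable.autoFun, fun A => glb fun e => A e ∧ R (t fun g => ∃ e, A e ∧ R g e) e,
    Definable.autoFun, ?_⟩
  rintro A hA ⟨e, he, g, hg, hge⟩
  have ht := choose_W (fun g => ∃ e, A e ∧ R g e) Definable.autoFun ⟨g, ⟨e, he, hge⟩, hg⟩
  beta_reduce
  generalize (t fun g => ∃ e, A e ∧ R g e) = g' at ht ⊢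
  obtain ⟨hglb, -⟩ := glb_mem_of_finite ((hfin g' ht.2).subset fun e h => h.2) ht.1
  exact ⟨hglb.1, g', ht.2, hglb.2⟩

theorem of_finite {F : N → Prop} (hF : Definable S F) (hfin : {e | F e}.Finite) :
    StrongChoice S F :=
  (unit.finite_rel (R := fun _ => F) Definable.autoFun fun _ _ => hfin).congr (by simp)

variable [DenselyOrdered N] [NoMinOrder N] [NoMaxOrder N]

/-- From a definable set `A`, choose its greatest lower bound `i` if `i ∈ A`, and otherwise the
point given by `c` in the maximal interval of `A` starting at `i`, truncated at `φ i`. -/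
theorem of_interval_choice {B : N → Prop} (hB : Definable S B) {a₀ : N} (ha₀ : ∀ e, B e → a₀ ≤ e)
    (hconv : ∀ x y, B y → a₀ ≤ x → x ≤ y → B x) {c : N → N → N} (hc : Definable S c)
    (hcB : ∀ a b, B a → B b → a < b → a < c a b ∧ c a b < b) {φ : N → N} (hφ : Definable S φ)
    (hφB : ∀ x, B x → (∃ z, B z ∧ x < z) → B (φ x) ∧ x < φ x) : StrongChoice S B := by
  have hdef : Definable S fun (A : N → Prop) i => pick (A i) i (c i (reach A i (φ i))) :=
    Definable.autoFun
  refine ⟨hB, fun A => (fun (A : N → Prop) i => pick (A i) i (c i (reach A i (φ i)))) A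
    (glb fun e => A e ∧ B e), Definable.autoFun, ?_⟩
  rintro A hA ⟨e, he, heB⟩
  have hAB : Definable S fun e => A e ∧ B e := Definable.autoFun
  have hglb := hAB.isGLB_glb ⟨e, he, heB⟩ ⟨a₀, fun e he => ha₀ e he.2⟩
  beta_reduce
  generalize (glb fun e => A e ∧ B e) = i at hglb ⊢
  have hie : i ≤ e := hglb.1 ⟨he, heB⟩
  have hiB : B i := hconv i e heB (hglb.2 fun e he => ha₀ e he.2) hie
  by_cases hAi : A i
  · rw [pick_pos hAi]
    exact ⟨hAi, hiB⟩
  rw [pick_neg hAi]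
  obtain ⟨hφiB, hiφ⟩ := hφB i hiB ⟨e, heB, hie.lt_of_ne (by rintro rfl; exact hAi he)⟩
  have hgerm : RGerm i A := by
    refine (hA.rGerm_or i).resolve_right ?_
    rintro ⟨b, hib, hb⟩
    obtain ⟨x, hx, hxb⟩ := (isGLB_lt_iff hglb).1 hib
    exact hb x hxb ((hglb.1 hx : i ≤ x).lt_of_ne (by rintro rfl; exact hAi hx.1)) hx.1
  have hij : i < reach A i (φ i) := lt_reach hA hiφ hgerm
  have hjB : B (reach A i (φ i)) := hconv _ _ hφiB ((ha₀ i hiB).trans hij.le) (reach_le hA hiφ)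
  obtain ⟨hic, hcj⟩ := hcB i _ hiB hjB hij
  exact ⟨of_lt_reach hA hiφ hic hcj, hconv _ _ hjB ((ha₀ i hiB).trans hic.le) hcj.le⟩

theorem Icc {x y : N} {c : N → N → N} (hc : Definable S c)
    (h : ∀ a b, x ≤ a → a < b → b ≤ y → a < c a b ∧ c a b < b) :
    StrongChoice S fun e => x ≤ e ∧ e ≤ y :=
  of_interval_choice (a₀ := x) (φ := fun _ => y) Definable.autoFun (fun _ h => h.1)
    (fun _ _ h hxz hzw => ⟨hxz, hzw.trans h.2⟩) hc (fun a b ha hb hab => h a b ha.1 hab hb.2)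
    Definable.autoFun fun _ hz ⟨_, hw, hzw⟩ =>
      ⟨⟨(hz.1.trans hzw.le).trans hw.2, le_rfl⟩, hzw.trans_le hw.2⟩

end Line

end StrongChoice

end StrongChoice

section LocallyConstant

variable {N : Type u} [LinearOrder N] [DenselyOrdered N] [NoMinOrder N] [NoMaxOrder N] [Nonempty N]
  {S : Struc N} {f : N → N}

omit [NoMinOrder N] [Nonempty N] in
theorem finite_lGerm_ne (hf : Definable S f) {P : N → Prop} (hP : Definable S P)
    (h : ∀ t, P t → RGerm t fun s => f s = f t) :
    {e | P e ∧ LGerm e fun t => ¬ f t = f e}.Finite := by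
  have hdef : Definable S fun e => P e ∧ LGerm e fun t => ¬ f t = f e := Definable.autoFun
  refine hdef.finite_of_not_fat ?_
  rintro ⟨a, b, hab, hI⟩
  obtain ⟨t, hat, htb⟩ := exists_between hab
  obtain ⟨s, hts, eq_right⟩ := h t (hI t hat htb).1
  obtain ⟨u, htu, hu⟩ := exists_between (lt_min hts htb)
  rw [lt_min_iff] at hu
  obtain ⟨r, htr, hru, hne⟩ := (hI u (hat.trans htu) hu.2).2.exists_gt htu
  exact hne ((eq_right r (hru.trans hu.1) htr).trans (eq_right u hu.1 htu).symm)

omit [NoMaxOrder N] in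
theorem eq_of_rGerm_eq (hf : Definable S f) {x y : N}
    (hright : ∀ z, x ≤ z → z < y → RGerm z fun t => f t = f z)
    (hleft : ∀ z, x < z → z ≤ y → ¬ LGerm z fun t => ¬ f t = f z) (hxy : x ≤ y) : f y = f x := by
  have hdef : Definable S fun t => f t = f x := Definable.autoFun
  refine hdef.interval_induction (x := x) (y := y) ?_ ?_ y hxy le_rfl
  · intro z hxz hzy ih
    have hz := hright z hxz hzy
    rwa [ih z hxz le_rfl] at hz
  · intro z hxz hzy ih
    rcases hxz.eq_or_lt with rfl | hxz
    · rfl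
    have hdef : Definable S fun t => f t = f z := Definable.autoFun
    obtain ⟨s, hxs, hsz, hs⟩ := ((hdef.lGerm_or z).resolve_right (hleft z hxz hzy)).exists_gt hxz
    rw [← hs, ih s hxs.le hsz]

end LocallyConstant

section Ray

variable {N : Type u} [LinearOrder N]

/-- The map `c` chooses a point in every nonempty open interval with endpoints in `[x, y]`. -/
def Valid (c : N → N → N) (x y : N) : Prop :=
  ∀ a b, x ≤ a → a < b → b ≤ y → a < c a b ∧ c a b < b

variable {S : Struc N}

instance : Definable S (Valid : (N → N → N) → N → N → Prop) := by
  delta Valid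
  exact Definable.autoFun

theorem Valid.mono {c : N → N → N} {x y x' y' : N} (h : Valid c x y) (hx : x ≤ x') (hy : y' ≤ y) :
    Valid c x' y' :=
  fun a b hxa hab hby => h a b (hx.trans hxa) hab (hby.trans hy)

theorem Valid.of_le {c : N → N → N} {x y : N} (h : y ≤ x) : Valid c x y :=
  fun _ _ hxa hab hby => absurd (hxa.trans_lt hab) (hby.trans h).not_gt

/-- Some member of the family `c` chooses points in the open intervals between `e` and `h`. -/
def Near {Θ : Type*} (c : Θ → N → N → N) (e h : N) : Prop := ∃ z, Valid (c z) (min e h) (max e h)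

instance [Nonempty N] {Θ : Type*} [DefinableSpace S Θ] [Parametrized S Θ] :
    Definable S (Near : (Θ → N → N → N) → N → N → Prop) := by
  delta Near
  exact Definable.autoFun

theorem Near.symm {Θ : Type*} {c : Θ → N → N → N} {e h : N} (heh : Near c e h) : Near c h e := by
  rwa [Near, min_comm, max_comm]

/-- The eventual value of a function that is constant on all elements of `B` far enough to the
right, with an arbitrary value if there is none. -/
noncomputable def tailValue [Nonempty N] (B : N → Prop) (f : N → N) : N :=
  theUnique fun v => Tail B fun e => f e = v

instance [Nonempty N] : Definable S (tailValue : (N → Prop) → (N → N) → N) := by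
  delta tailValue
  exact Definable.autoFun

/-- A definable convex set with least element `a₀` and without largest element, all of whose
proper initial segments have strong choice. -/
structure Ray (S : Struc N) (B : N → Prop) (a₀ : N) : Prop where
  definable : Definable S B
  base : B a₀
  base_le : ∀ e, B e → a₀ ≤ e
  conv : ∀ x y, B y → a₀ ≤ x → x ≤ y → B x
  noMax : ∀ e, B e → ∃ e', B e' ∧ e < e'
  strongChoice : ∀ e, B e → StrongChoice S fun t => a₀ ≤ t ∧ t ≤ e

namespace Ray

variable {B : N → Prop} {a₀ : N}

theorem nonempty (hB : Ray S B a₀) : ∃ e, B e := ⟨a₀, hB.base⟩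

theorem tailValue_eq [Nonempty N] (hB : Ray S B a₀) {f : N → N} {v : N}
    (h : Tail B fun e => f e = v) : tailValue B f = v :=
  theUnique_eq fun w => by
    constructor
    · intro hw
      obtain ⟨e, -, hev, hew⟩ := (h.and hw).exists hB.noMax
      exact hew.symm.trans hev
    · rintro rfl
      exact h

variable [DenselyOrdered N] [NoMinOrder N] [NoMaxOrder N] [Nonempty N]

theorem exists_tail_eq_of_rGerm_eq (hB : Ray S B a₀) {f : N → N} (hf : Definable S f)
    (h : Tail B fun e => RGerm e fun t => f t = f e) : ∃ v, Tail B fun e => f e = v := by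
  have := hB.definable
  obtain ⟨e₀, he₀, hright⟩ := h
  have hfinite := finite_lGerm_ne hf (P := fun e => B e ∧ e₀ < e) Definable.autoFun
    fun t ht => hright t ht.1 ht.2
  obtain ⟨e₁, he₁, lt_e₁⟩ := exists_upper_of_finite hfinite hB.nonempty hB.noMax
  obtain ⟨x, hx, he₀x, he₁x⟩ := ((tail_gt he₀).and (tail_gt he₁)).exists hB.noMax
  refine ⟨f x, x, hx, fun y hy hxy => ?_⟩
  have mem (z : N) (hxz : x ≤ z) (hzy : z ≤ y) : B z :=
    hB.conv z y hy ((hB.base_le x hx).trans hxz) hzy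
  refine eq_of_rGerm_eq hf (fun z hxz hzy => hright z (mem z hxz hzy.le) (he₀x.trans_le hxz))
    (fun z hxz hzy hz => ?_) hxy.le
  have hBz := mem z hxz.le hzy
  exact (lt_e₁ z ⟨⟨hBz, he₀x.trans hxz⟩, hz⟩ z hBz le_rfl).not_gt (he₁x.trans hxz)

theorem exists_tail_eq_or_finite (hB : Ray S B a₀) {f : N → N} (hf : Definable S f) :
    (∃ v, Tail B fun e => f e = v) ∨ ∃ e, B e ∧ ∀ v, {t | B t ∧ e < t ∧ f t = v}.Finite := by
  have := hB.definable
  have hdef : Definable S fun e => RGerm e fun t => f t = f e := Definable.autoFun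
  refine (hdef.tail_or hB.nonempty hB.noMax).imp (hB.exists_tail_eq_of_rGerm_eq hf) ?_
  rintro ⟨e₀, he₀, h⟩
  refine ⟨e₀, he₀, fun v => ?_⟩
  have hfiber : Definable S fun t => B t ∧ e₀ < t ∧ f t = v := Definable.autoFun
  refine hfiber.finite_of_not_fat ?_
  rintro ⟨a, b, hab, hI⟩
  obtain ⟨t, hat, htb⟩ := exists_between hab
  obtain ⟨hBt, he₀t, rfl⟩ := hI t hat htb
  exact h t hBt he₀t ⟨b, htb, fun s hsb hts => (hI s (hat.trans hts) hsb).2.2⟩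

theorem exists_tail_eq_or_strongChoice (hB : Ray S B a₀) {f : N → N} (hf : Definable S f)
    {X : N → Prop} (hX : StrongChoice S X) (hfX : Tail B fun e => X (f e)) :
    (∃ v, Tail B fun e => f e = v) ∨ StrongChoice S B := by
  have := hB.definable
  refine (hB.exists_tail_eq_or_finite hf).imp_right ?_
  rintro ⟨e₀, he₀, hfinite⟩
  obtain ⟨e₁, he₁, hX₁⟩ := hfX
  obtain ⟨m, hm, he₀m, he₁m⟩ := ((tail_gt he₀).and (tail_gt he₁)).exists hB.noMax
  have hR : Definable S fun v t => B t ∧ e₀ < t ∧ f t = v := Definable.autoFun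
  refine ((hX.finite_rel hR fun v _ => hfinite v).or (hB.strongChoice _ hm)).mono hB.definable
    fun t ht => ?_
  rcases le_or_gt t m with htm | hmt
  · exact Or.inr ⟨hB.base_le t ht, htm⟩
  · exact Or.inl ⟨f t, hX₁ t ht (he₁m.trans hmt), ht, he₀m.trans hmt, rfl⟩

/-- The parametrized interval choices `c e z`, for `z` in the nonempty set `Z e`, are valid on any
given initial segment of `B` once `e` is far enough to the right. -/
def TailValid (B : N → Prop) (a₀ : N) {Θ : Type*} (Z : N → Θ → Prop) (c : N → Θ → N → N → N) :
    Prop :=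
  ∀ b, B b → Tail B fun e => (∃ z, Z e z) ∧ ∀ z, Z e z → Valid (c e z) a₀ b

/-- Interval choices that depend on a parameter from `Θ` suffice for strong choice on `B`. -/
def Reducible (S : Struc N) (B : N → Prop) (a₀ : N) (Θ : Type*) [DefinableSpace S Θ] : Prop :=
  ∀ (Z : N → Θ → Prop) (c : N → Θ → N → N → N), Definable S Z → Definable S c →
    TailValid B a₀ Z c → StrongChoice S B

section Unit

theorem exists_valid_of_tail_valid (hB : Ray S B a₀) (hSC : ¬ StrongChoice S B)
    {c : N → N → N → N} (hc : Definable S c) (h : ∀ b, B b → Tail B fun e => Valid (c e) a₀ b) :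
    ∃ d : N → N → N, Definable S d ∧ ∀ b, B b → Valid d a₀ b := by
  have := hB.definable
  refine ⟨fun x y => tailValue B fun e => c e x y, Definable.autoFun, fun b hb x y hx hxy hyb => ?_⟩
  have hf : Definable S fun e => c e x y := Definable.autoFun
  have mem_Ioo : Tail B fun e => x < c e x y ∧ c e x y < y :=
    (h b hb).mono fun e _ he => he x y hx hxy hyb
  obtain ⟨v, hv⟩ := (hB.exists_tail_eq_or_strongChoice hf (hB.strongChoice b hb)
    (mem_Ioo.mono fun e _ he => ⟨hx.trans he.1.le, he.2.le.trans hyb⟩)).resolve_right hSC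
  obtain ⟨e, -, he, rfl⟩ := (mem_Ioo.and hv).exists hB.noMax
  beta_reduce
  rwa [hB.tailValue_eq hv]

theorem lt_lub_setOf_le (hB : Ray S B a₀) {g : N → N} (hg : Definable S g)
    (hunbounded : ∀ u, B u → Tail B fun b => u < g b) {y : N} (hy : B y) (hgy : g y < y)
    (hcont : ContAt g y) :
    B (lub fun b => B b ∧ g b ≤ y) ∧ y < lub fun b => B b ∧ g b ≤ y := by
  have := hB.definable
  have hdef : Definable S fun b => B b ∧ g b ≤ y := Definable.autoFun
  obtain ⟨e, he, lt_g⟩ := hunbounded y hy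
  have le_e : e ∈ upperBounds {b | B b ∧ g b ≤ y} := fun b hb =>
    not_lt.1 fun heb => (lt_g b hb.1 heb).not_ge hb.2
  have hlub := hdef.isLUB_lub ⟨y, hy, hgy.le⟩ ⟨e, le_e⟩
  generalize lub (fun b => B b ∧ g b ≤ y) = w at hlub ⊢
  obtain ⟨x, hx⟩ := exists_lt (g y)
  obtain ⟨p, q, hpy, hyq, hpq⟩ := hcont x y hx hgy
  obtain ⟨y', hy', hyy'⟩ := hB.noMax y hy
  obtain ⟨s, hys, hs⟩ := exists_between (lt_min hyq hyy')
  rw [lt_min_iff] at hs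
  have hBs : B s := hB.conv s y' hy' ((hB.base_le y hy).trans hys.le) hs.2.le
  have hsw : s ≤ w := hlub.1 ⟨hBs, (hpq s (hpy.trans hys) hs.1).2.le⟩
  exact ⟨hB.conv w e he ((hB.base_le y hy).trans (hys.le.trans hsw)) (hlub.2 le_e),
    hys.trans_le hsw⟩

theorem exists_successor_of_unbounded (hB : Ray S B a₀) {g : N → N} (hg : Definable S g)
    (hunbounded : ∀ u, B u → Tail B fun b => u < g b) (hlt : Tail B fun b => g b < b) :
    ∃ φ : N → N, Definable S φ ∧ ∀ x, B x → B (φ x) ∧ x < φ x := by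
  have := hB.definable
  obtain ⟨e₀, he₀, g_lt⟩ := hlt
  obtain ⟨e₁, he₁, lt_e₁⟩ := exists_upper_of_finite (finite_not_contAt hg) hB.nonempty hB.noMax
  obtain ⟨m, hm, he₀m, he₁m⟩ := ((tail_gt he₀).and (tail_gt he₁)).exists hB.noMax
  obtain ⟨m', hm', hmm'⟩ := hB.noMax m hm
  refine ⟨fun y => pick (m < y) (lub fun b => B b ∧ g b ≤ y) m', Definable.autoFun,
    fun y hy => ?_⟩
  beta_reduce
  by_cases hmy : m < y
  · have hcont : ContAt g y := by
      by_contra hy_cont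
      exact (lt_e₁ y hy_cont y hy le_rfl).not_gt (he₁m.trans hmy)
    rw [pick_pos hmy]
    exact hB.lt_lub_setOf_le hg hunbounded hy (g_lt y hy (he₀m.trans hmy)) hcont
  · rw [pick_neg hmy]
    exact ⟨hm', (not_lt.1 hmy).trans_lt hmm'⟩

theorem exists_successor (hB : Ray S B a₀) (hSC : ¬ StrongChoice S B) {d : N → N → N}
    (hd : Definable S d) (hvalid : ∀ b, B b → Valid d a₀ b) :
    ∃ φ : N → N, Definable S φ ∧ ∀ x, B x → B (φ x) ∧ x < φ x := by
  have := hB.definable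
  have mem_Ioo {x b : N} (hx : B x) (hxb : x < b) (hb : B b) : x < d x b ∧ d x b < b :=
    hvalid b hb x b (hB.base_le x hx) hxb le_rfl
  by_cases hconst : ∀ x, B x → ∃ v, Tail B fun b => d x b = v
  · refine ⟨fun x => tailValue B (d x), Definable.autoFun, fun x hx => ?_⟩
    obtain ⟨v, hv⟩ := hconst x hx
    beta_reduce
    rw [hB.tailValue_eq hv]
    obtain ⟨b, hb, hxb, rfl⟩ := ((tail_gt hx).and hv).exists hB.noMax
    obtain ⟨hxd, hdb⟩ := mem_Ioo hx hxb hb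
    exact ⟨hB.conv _ b hb ((hB.base_le x hx).trans hxd.le) hdb.le, hxd⟩
  push Not at hconst
  obtain ⟨x, hx, not_const⟩ := hconst
  have hdx : Definable S (d x) := Definable.autoFun
  refine hB.exists_successor_of_unbounded hdx (fun u hu => ?_)
    ⟨x, hx, fun b hb hxb => (mem_Ioo hx hxb hb).2⟩
  have hdef : Definable S fun b => u < d x b := Definable.autoFun
  refine (hdef.tail_or hB.nonempty hB.noMax).resolve_right fun bounded => ?_
  obtain ⟨v, hv⟩ := (hB.exists_tail_eq_or_strongChoice hdx (hB.strongChoice u hu)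
    ((bounded.and (tail_gt hx)).mono fun b hb h =>
      ⟨(hB.base_le x hx).trans (mem_Ioo hx h.2 hb).1.le, not_lt.1 h.1⟩)).resolve_right hSC
  exact not_const v hv

theorem reducible_unit (hB : Ray S B a₀) : Reducible S B a₀ Unit := by
  intro Z c _ hc h
  by_contra hSC
  obtain ⟨d, hd, hvalid⟩ := hB.exists_valid_of_tail_valid hSC (c := fun e => c e ())
    Definable.autoFun fun b hb => (h b hb).mono fun e _ ⟨⟨z, hz⟩, he⟩ => he z hz
  obtain ⟨φ, hφ, lt_φ⟩ := hB.exists_successor hSC hd hvalid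
  exact hSC (StrongChoice.of_interval_choice hB.definable hB.base_le hB.conv hd
    (fun a b ha hb hab => hvalid b hb a b (hB.base_le a ha) hab le_rfl) hφ fun x hx _ => lt_φ x hx)

end Unit

section Prod

variable {Θ Ξ : Type*} [DefinableSpace S Θ] [DefinableSpace S Ξ]

omit [DenselyOrdered N] [NoMinOrder N] [NoMaxOrder N] [Nonempty N] in
theorem Reducible.of_surjective (h : Reducible S B a₀ Θ) {f : Θ → Ξ} (hf : Definable S f)
    (hsurj : Function.Surjective f) : Reducible S B a₀ Ξ := by
  intro Z c hZ hc htail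
  refine h (fun e z => Z e (f z)) (fun e z => c e (f z)) Definable.autoFun Definable.autoFun
    fun b hb => (htail b hb).mono fun e _ he => ⟨?_, fun z => he.2 (f z)⟩
  obtain ⟨ξ, hξ⟩ := he.1
  obtain ⟨z, rfl⟩ := hsurj ξ
  exact ⟨z, hξ⟩

/-- The value `v` is taken by `g (z, ·)` on the fiber of `Z` over `z`, but not on an interval. -/
def RareValue (Z : Θ × N → Prop) (g : Θ × N → N) (z : Θ) (v : N) : Prop :=
  (∃ w, Z (z, w) ∧ g (z, w) = v) ∧ ¬ Fat fun w => Z (z, w) ∧ g (z, w) = v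

instance : Definable S (RareValue : (Θ × N → Prop) → (Θ × N → N) → Θ → N → Prop) := by
  delta RareValue
  exact Definable.autoFun

variable {Z : N → Θ × N → Prop} {c : N → Θ × N → N → N → N}

omit [NoMinOrder N] in
/-- A rare value is attained finitely often, and the least `w` attaining it is definable. -/
theorem Reducible.strongChoice_of_tail_rareValue [Parametrized S Θ] (h : Reducible S B a₀ Θ)
    (hB : Ray S B a₀) (hZ : Definable S Z) (hc : Definable S c) (hvalid : TailValid B a₀ Z c)
    {x b : N} (hx : a₀ ≤ x) (hxb : x < b) (hb : B b)
    (htail : Tail B fun e => ∃ z v, RareValue (Z e) (fun y => c e y x b) z v) :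
    StrongChoice S B := by
  obtain ⟨-, t, ht, choose⟩ := hB.strongChoice b hb
  refine h (fun e z => ∃ v, RareValue (Z e) (fun y => c e y x b) z v)
    (fun e z => c e (z, glb fun w => Z e (z, w) ∧
      c e (z, w) x b = t fun v => RareValue (Z e) (fun y => c e y x b) z v))
    Definable.autoFun Definable.autoFun fun b' hb' => ?_
  refine (((hvalid b' hb').and htail).and (hvalid b hb)).mono ?_
  rintro e - ⟨⟨⟨-, valid_b'⟩, hrare⟩, -, valid_b⟩
  refine ⟨hrare, fun z ⟨v, hv⟩ => ?_⟩
  have := Parametrized.definable (S := S) z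
  have mem_Icc : a₀ ≤ v ∧ v ≤ b := by
    obtain ⟨⟨w, hw, rfl⟩, -⟩ := hv
    obtain ⟨hxc, hcb⟩ := valid_b _ hw x b hx hxb le_rfl
    exact ⟨hx.trans hxc.le, hcb.le⟩
  obtain ⟨hattained, hnot_fat⟩ := (choose (fun v => RareValue (Z e) (fun y => c e y x b) z v)
    Definable.autoFun ⟨v, hv, mem_Icc⟩).1
  beta_reduce
  generalize (t fun v => RareValue (Z e) (fun y => c e y x b) z v) = v' at hattained hnot_fat ⊢
  have hdef : Definable S fun w => Z e (z, w) ∧ c e (z, w) x b = v' := Definable.autoFun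
  exact valid_b' _ (glb_mem_of_finite (hdef.finite_of_not_fat hnot_fat) hattained).1.1

theorem tail_not_rareValue [Parametrized S Θ] (hB : Ray S B a₀) (hSC : ¬ StrongChoice S B)
    (hZ : Definable S Z) (hc : Definable S c)
    (hrare : ∀ x b, a₀ ≤ x → x < b → B b →
      ¬ Tail B fun e => ∃ z v, RareValue (Z e) (fun y => c e y x b) z v) {b : N} (hb : B b) :
    Tail B fun e => ¬ ∃ x y, (a₀ ≤ x ∧ x < y ∧ y ≤ b) ∧
      ∃ z v, RareValue (Z e) (fun u => c e u x y) z v := by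
  have := hB.definable
  let bad : N → N × N → Prop := fun e p => (a₀ ≤ p.1 ∧ p.1 < p.2 ∧ p.2 ≤ b) ∧
    ∃ z v, RareValue (Z e) (fun u => c e u p.1 p.2) z v
  have hbad : Definable S bad := by
    unfold bad
    exact Definable.autoFun
  have hdef : Definable S fun e => ∃ x y, bad e (x, y) := Definable.autoFun
  refine (hdef.tail_or hB.nonempty hB.noMax).resolve_left fun htail => ?_
  obtain ⟨-, t, ht, choose⟩ := (hB.strongChoice b hb).prod (hB.strongChoice b hb)
  have bad_t : Tail B fun e => bad e (t (bad e)) := htail.mono fun e _ ⟨x, y, hxy⟩ =>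
    (choose (bad e) Definable.autoFun ⟨(x, y), hxy, ⟨hxy.1.1, hxy.1.2.1.le.trans hxy.1.2.2⟩,
      hxy.1.1.trans hxy.1.2.1.le, hxy.1.2.2⟩).1
  have hfst : Definable S fun e => (t (bad e)).1 := Definable.autoFun
  have hsnd : Definable S fun e => (t (bad e)).2 := Definable.autoFun
  obtain ⟨x, hx⟩ := (hB.exists_tail_eq_or_strongChoice hfst (hB.strongChoice b hb)
    (bad_t.mono fun e _ h => ⟨h.1.1, h.1.2.1.le.trans h.1.2.2⟩)).resolve_right hSC
  obtain ⟨y, hy⟩ := (hB.exists_tail_eq_or_strongChoice hsnd (hB.strongChoice b hb)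
    (bad_t.mono fun e _ h => ⟨h.1.1.trans h.1.2.1.le, h.1.2.2⟩)).resolve_right hSC
  have bad_xy : Tail B fun e => bad e (x, y) := ((bad_t.and hx).and hy).mono fun e _ h => by
    rw [← h.1.2, ← h.2]
    exact h.1.1
  obtain ⟨e, -, ⟨hax, hxy, hyb⟩, -⟩ := bad_xy.exists hB.noMax
  exact hrare x y hax hxy (hB.conv y b hb (hax.trans hxy.le) hyb) (bad_xy.mono fun e _ h => h.2)

/-- Without rare values only finitely many values are attained, and we use the least one. -/
theorem Reducible.strongChoice_of_tail_not_rareValue [Parametrized S Θ]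
    (h : Reducible S B a₀ Θ) (hZ : Definable S Z) (hc : Definable S c)
    (hvalid : TailValid B a₀ Z c)
    (hrare : ∀ b, B b → Tail B fun e => ¬ ∃ x y, (a₀ ≤ x ∧ x < y ∧ y ≤ b) ∧
      ∃ z v, RareValue (Z e) (fun u => c e u x y) z v) : StrongChoice S B := by
  refine h (fun e z => ∃ w, Z e (z, w))
    (fun e z x y => glb fun v => ∃ w, Z e (z, w) ∧ c e (z, w) x y = v)
    Definable.autoFun Definable.autoFun fun b hb => ((hvalid b hb).and (hrare b hb)).mono ?_
  rintro e - ⟨⟨⟨⟨z, w⟩, hzw⟩, valid_b⟩, not_rare⟩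
  refine ⟨⟨z, w, hzw⟩, ?_⟩
  rintro z ⟨w, hzw⟩ x y hx hxy hyb
  have := Parametrized.definable (S := S) z
  have hdef : Definable S fun w v => Z e (z, w) ∧ c e (z, w) x y = v := Definable.autoFun
  have hfinite : {v | ∃ w, Z e (z, w) ∧ c e (z, w) x y = v}.Finite := by
    refine (finite_setOf_infinite hdef fun w => (finite_singleton (c e (z, w) x y)).subset
      fun v hv => hv.2.symm).subset fun v hv => ?_
    refine Fat.infinite ?_
    by_contra not_fat
    exact not_rare ⟨x, y, ⟨hx, hxy, hyb⟩, z, v, hv, not_fat⟩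
  obtain ⟨⟨w', hzw', eq_glb⟩, -⟩ := glb_mem_of_finite hfinite ⟨_, w, hzw, rfl⟩
  beta_reduce
  rw [← eq_glb]
  exact valid_b _ hzw' x y hx hxy hyb

theorem Reducible.prod [Parametrized S Θ] (h : Reducible S B a₀ Θ) (hB : Ray S B a₀) :
    Reducible S B a₀ (Θ × N) := by
  intro Z c hZ hc hvalid
  by_cases hrare : ∃ x b, a₀ ≤ x ∧ x < b ∧ B b ∧
      Tail B fun e => ∃ z v, RareValue (Z e) (fun y => c e y x b) z v
  · obtain ⟨x, b, hx, hxb, hb, htail⟩ := hrare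
    exact h.strongChoice_of_tail_rareValue hB hZ hc hvalid hx hxb hb htail
  · push Not at hrare
    by_contra hSC
    exact hSC (h.strongChoice_of_tail_not_rareValue hZ hc hvalid fun b hb =>
      hB.tail_not_rareValue hSC hZ hc hrare hb)

end Prod

theorem reducible_pi (hB : Ray S B a₀) : ∀ q : ℕ, Reducible S B a₀ (Fin q → N)
  | 0 => hB.reducible_unit.of_surjective (f := fun _ => Fin.elim0)
      (DefinableMap.pt <| DefinableMap.tuple fun i => i.elim0)
      fun _ => ⟨(), Subsingleton.elim _ _⟩
  | q + 1 =>
    ((hB.reducible_pi q).prod hB).of_surjective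
      (f := fun z => (Fin.cons z.2 z.1 : Fin (q + 1) → N))
      Definable.autoFun
      fun a => ⟨(Fin.tail a, a 0), Fin.cons_self_tail a⟩

end Ray

variable [DenselyOrdered N] [NoMinOrder N] [NoMaxOrder N] [Nonempty N]

theorem strongChoice_right {q : ℕ} {c : (Fin q → N) → N → N → N} (hc : Definable S c) (a₀ : N) :
    StrongChoice S fun e => a₀ ≤ e ∧ ∃ z, Valid (c z) a₀ e := by
  let B : N → Prop := fun e => a₀ ≤ e ∧ ∃ z, Valid (c z) a₀ e
  have hB : Definable S B := by
    unfold B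
    exact Definable.autoFun
  have strongChoice_Icc (r : N) (hr : B r) : StrongChoice S fun e => a₀ ≤ e ∧ e ≤ r := by
    obtain ⟨-, z, hz⟩ := hr
    exact StrongChoice.Icc (c := c z) Definable.autoFun hz
  by_cases hmax : ∀ e, B e → ∃ e', B e' ∧ e < e'
  · have hray : Ray S B a₀ :=
      { definable := hB
        base := ⟨le_rfl, Classical.arbitrary _, Valid.of_le le_rfl⟩
        base_le := fun e h => h.1
        conv := fun x y ⟨_, z, hz⟩ hax hxy => ⟨hax, z, hz.mono le_rfl hxy⟩
        noMax := hmax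
        strongChoice := strongChoice_Icc }
    exact hray.reducible_pi q (fun e z => Valid (c z) a₀ e) (fun _ => c) Definable.autoFun
      Definable.autoFun fun b hb => (tail_gt hb).mono fun e he hbe =>
        ⟨he.2, fun z hz => hz.mono le_rfl hbe.le⟩
  · push Not at hmax
    obtain ⟨r, hr, le_r⟩ := hmax
    exact (strongChoice_Icc r hr).mono hB fun e he => ⟨he.1, le_r e he⟩

theorem strongChoice_near {q : ℕ} {c : (Fin q → N) → N → N → N} (hc : Definable S c) (a₀ : N) :
    StrongChoice S (Near c a₀) := by
  have hswap : Definable S fun z a b => c z b a := Definable.autoFun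
  have hleft := StrongChoice.of_dual (S := S) (strongChoice_right (N := Nᵒᵈ) (S := S.dual)
    (c := fun z a b => c z b a) ⟨hswap.1⟩ a₀)
  refine ((strongChoice_right hc a₀).or hleft).mono Definable.autoFun ?_
  rintro e ⟨z, hz⟩
  rcases le_total a₀ e with h | h
  · rw [min_eq_left h, max_eq_right h] at hz
    exact Or.inl ⟨h, z, hz⟩
  · rw [min_eq_right h, max_eq_left h] at hz
    exact Or.inr ⟨h, z, fun a b ha hba hb => (hz b a hb hba ha).symm⟩

end Ray

section Short

variable {N : Type u} [LinearOrder N] {S : Struc N}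

/-- A relation is short if there is a definable family of choice functions for open intervals one
of which works on the hull of any two related points. -/
def Short (S : Struc N) (E : N → N → Prop) : Prop :=
  ∃ (q : ℕ) (c : (Fin q → N) → N → N → N), Definable S c ∧
    ∀ x y, E x y → Near c x y

variable {E E' : N → N → Prop}

theorem Short.mono (h : Short S E) (hE : ∀ x y, E' x y → E x y) : Short S E' := by
  obtain ⟨q, c, hc, h⟩ := h
  exact ⟨q, c, hc, fun x y hxy => h x y (hE x y hxy)⟩

theorem Short.of_parametrized {Θ : Type*} [DefinableSpace S Θ] [Parametrized S Θ]
    {c : Θ → N → N → N} (hc : Definable S c)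
    (h : ∀ x y, E x y → Near c x y) : Short S E := by
  obtain ⟨q, f, hf, hsurj⟩ := Parametrized.exists_surj (S := S) (Γ := Θ)
  have hf' : Definable S f := DefinableMap.pt fun n p hp => DefinableSpace.plot_comp hf hp
  refine ⟨q, fun z => c (f z), Definable.autoFun, fun x y hxy => ?_⟩
  obtain ⟨z, hz⟩ := h x y hxy
  obtain ⟨z, rfl⟩ := hsurj z
  exact ⟨z, hz⟩

theorem valid_min_max_self (c : N → N → N) (x : N) : Valid c (min x x) (max x x) :=
  Valid.of_le (by rw [min_self, max_self])

theorem Short.eq : Short S fun x y : N => x = y :=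
  Short.of_parametrized (Θ := Unit) (c := fun _ a _ => a) Definable.autoFun
    fun x _ hxy => hxy ▸ ⟨(), valid_min_max_self _ x⟩

theorem Valid.self {c : N → N → N} {a b : N} (h : Valid c a b) (hab : a < b) :
    a < c a b ∧ c a b < b := h a b le_rfl hab le_rfl

variable [Nonempty N]

theorem Short.or (h : Short S E) (h' : Short S E') : Short S fun x y => E x y ∨ E' x y := by
  obtain ⟨q, c, hc, h⟩ := h
  obtain ⟨q', c', hc', h'⟩ := h'
  refine Short.of_parametrized (Θ := (Fin q → N) × (Fin q' → N))
    (c := fun z a b => pick (Valid (c z.1) a b) (c z.1 a b) (c' z.2 a b)) Definable.autoFun ?_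
  rintro x y (hxy | hxy)
  · obtain ⟨z, hz⟩ := h x y hxy
    refine ⟨(z, Classical.arbitrary _), fun a b ha hab hb => ?_⟩
    beta_reduce
    rw [pick_pos (hz.mono ha hb)]
    exact hz a b ha hab hb
  · obtain ⟨z, hz⟩ := h' x y hxy
    refine ⟨(Classical.arbitrary _, z), fun a b ha hab hb => ?_⟩
    beta_reduce
    by_cases hc_valid : Valid (c (Classical.arbitrary _)) a b
    · rw [pick_pos hc_valid]
      exact hc_valid.self hab
    · rw [pick_neg hc_valid]
      exact hz a b ha hab hb

/-- If neither of the two choices is valid between `a` and `b`, then the middle point lies there. -/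
theorem Short.comp (h : Short S E) (h' : Short S E') :
    Short S fun x w => ∃ y, E x y ∧ E' y w := by
  obtain ⟨q, c, hc, h⟩ := h
  obtain ⟨q', c', hc', h'⟩ := h'
  refine Short.of_parametrized (Θ := N × (Fin q → N) × (Fin q' → N))
    (c := fun z a b => pick (Valid (c z.2.1) a b) (c z.2.1 a b)
      (pick (Valid (c' z.2.2) a b) (c' z.2.2 a b) z.1)) Definable.autoFun ?_
  rintro x w ⟨y, hxy, hyw⟩
  obtain ⟨z, hz⟩ := h x y hxy
  obtain ⟨z', hz'⟩ := h' y w hyw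
  refine ⟨(y, z, z'), fun a b ha hab hb => ?_⟩
  beta_reduce
  by_cases hc_valid : Valid (c z) a b
  · rw [pick_pos hc_valid]
    exact hc_valid.self hab
  rw [pick_neg hc_valid]
  by_cases hc'_valid : Valid (c' z') a b
  · rw [pick_pos hc'_valid]
    exact hc'_valid.self hab
  rw [pick_neg hc'_valid]
  constructor <;> by_contra! hy
  · rcases le_max_iff.1 hb with hb | hb
    · exact hc_valid (hz.mono ((min_le_right _ _).trans hy) (hb.trans (le_max_left _ _)))
    · exact hc'_valid (hz'.mono ((min_le_left _ _).trans hy) (hb.trans (le_max_right _ _)))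
  · rcases min_le_iff.1 ha with ha | ha
    · exact hc_valid (hz.mono ((min_le_left _ _).trans ha) (hy.trans (le_max_right _ _)))
    · exact hc'_valid (hz'.mono ((min_le_right _ _).trans ha) (hy.trans (le_max_left _ _)))

end Short

section Side

variable {N : Type u} [LinearOrder N] {S : Struc N}

/-- The relation `r` is `<` or `>`; it specifies on which side of a point germs are taken. -/
def IsSide (r : N → N → Prop) : Prop := (r = fun a b => a < b) ∨ r = fun a b => b < a

/-- The predicate holds close to `a`, on the side of `a` specified by the order `r`. -/
def Germ (r : N → N → Prop) (a : N) (A : N → Prop) : Prop :=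
  ∃ b, r a b ∧ ∀ t, r t b → r a t → A t

instance : Definable S (Germ : (N → N → Prop) → N → (N → Prop) → Prop) := by
  delta Germ
  exact Definable.autoFun

theorem isSide_lt : IsSide fun a b : N => a < b := Or.inl rfl

theorem isSide_gt : IsSide fun a b : N => b < a := Or.inr rfl

variable {r : N → N → Prop} {A A' : N → Prop} {y : N}

omit [LinearOrder N] in
theorem Germ.mono (h : Germ r y A) (hA : ∀ t, r y t → A t → A' t) : Germ r y A' := by
  obtain ⟨b, hb, h⟩ := h
  exact ⟨b, hb, fun t htb hyt => hA t hyt (h t htb hyt)⟩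

omit [LinearOrder N] in
theorem germ_rel {b : N} (h : r y b) : Germ r y fun t => r t b := ⟨b, h, fun _ h _ => h⟩

namespace IsSide

theorem definable (hr : IsSide r) : Definable S r := by
  rcases hr with rfl | rfl <;> infer_instance

theorem trans (hr : IsSide r) {a b c : N} (hab : r a b) (hbc : r b c) : r a c := by
  rcases hr with rfl | rfl
  · exact hab.trans hbc
  · exact hbc.trans hab

theorem rel_of_not_rel_of_rel (hr : IsSide r) {a b c : N} (hba : ¬ r b a) (hbc : r b c) :
    r a c := by
  rcases hr with rfl | rfl
  · exact (not_lt.1 hba).trans_lt hbc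
  · exact hbc.trans_le (not_lt.1 hba)

theorem rel_of_rel_of_not_rel (hr : IsSide r) {a b c : N} (hab : r a b) (hcb : ¬ r c b) :
    r a c := by
  rcases hr with rfl | rfl
  · exact hab.trans_le (not_lt.1 hcb)
  · exact (not_lt.1 hcb).trans_lt hab

theorem rel_of_mem_uIcc (hr : IsSide r) {a b s t : N} (ha : r s a) (hb : r s b)
    (ht : t ∈ uIcc a b) : r s t := by
  rcases hr with rfl | rfl
  · exact (lt_min ha hb).trans_le ht.1
  · exact ht.2.trans_lt (max_lt ha hb)

theorem germ_and (hr : IsSide r) (h : Germ r y A) (h' : Germ r y A') :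
    Germ r y fun t => A t ∧ A' t := by
  rcases hr with rfl | rfl
  · exact RGerm.and h h'
  · exact LGerm.and h h'

variable [DenselyOrdered N]

theorem exists_rel_rel_mem_Ioo (hr : IsSide r) {t c d : N} (hyt : r y t) (hc : c < t)
    (hd : t < d) : ∃ t', r y t' ∧ r t' t ∧ c < t' ∧ t' < d := by
  rcases hr with rfl | rfl
  · obtain ⟨t', hmax, ht⟩ := exists_between (max_lt hyt hc)
    exact ⟨t', (le_max_left _ _).trans_lt hmax, ht, (le_max_right _ _).trans_lt hmax, ht.trans hd⟩
  · obtain ⟨t', ht, hmin⟩ := exists_between (lt_min hyt hd)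
    exact ⟨t', hmin.trans_le (min_le_left _ _), ht, hc.trans ht, hmin.trans_le (min_le_right _ _)⟩

omit [DenselyOrdered N] in
theorem germ_fat (hr : IsSide r) (h : Germ r y A) : Fat A := by
  rcases hr with rfl | rfl
  · exact RGerm.fat h
  · exact LGerm.fat h

variable [NoMinOrder N] [NoMaxOrder N]

theorem germ_or (hr : IsSide r) (hA : Definable S A) (y : N) :
    Germ r y A ∨ Germ r y fun t => ¬ A t := by
  rcases hr with rfl | rfl
  · exact hA.rGerm_or y
  · exact hA.lGerm_or y

theorem germ_exists (hr : IsSide r) (h : Germ r y A) : ∃ t, r y t ∧ A t := by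
  rcases hr with rfl | rfl
  · exact RGerm.exists h
  · exact LGerm.exists h

omit [DenselyOrdered N] in
theorem exists_rel (hr : IsSide r) (y : N) : ∃ t, r y t := by
  rcases hr with rfl | rfl
  · exact exists_gt y
  · exact exists_lt y

end IsSide

section Far

variable [Nonempty N]

/-- The point farthest from `y` on the side `r`, but not beyond `t`, such that `A` holds between
`y` and this point. -/
noncomputable def far (r : N → N → Prop) (y t : N) (A : N → Prop) : N :=
  let D : N → Prop := fun s => (r y s ∧ ¬ r t s) ∧ ∀ t', r t' s → r y t' → A t'
  pick (y < t) (lub D) (glb D)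

instance : Definable S (far : (N → N → Prop) → N → N → (N → Prop) → N) := by
  delta far
  exact Definable.autoFun

variable [DenselyOrdered N] [NoMinOrder N] [NoMaxOrder N]

theorem IsSide.far_spec (hr : IsSide r) (hA : Definable S A) {t : N} (hyt : r y t)
    (h : Germ r y A) :
    r y (far r y t A) ∧ ¬ r t (far r y t A) ∧ ∀ t', r y t' → r t' (far r y t A) → A t' := by
  have := hr.definable (S := S)
  have hdef : Definable S fun s => (r y s ∧ ¬ r t s) ∧ ∀ t', r t' s → r y t' → A t' :=
    Definable.autoFun
  obtain ⟨b, hyb, hb⟩ := h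
  rcases hr with rfl | rfl
  · have hmin : (y < min b t ∧ ¬ t < min b t) ∧ ∀ t', t' < min b t → y < t' → A t' :=
      ⟨⟨lt_min hyb hyt, (min_le_right _ _).not_gt⟩,
        fun t' h => hb t' (h.trans_le (min_le_left _ _))⟩
    have hlub := hdef.isLUB_lub ⟨_, hmin⟩ ⟨t, fun s hs => not_lt.1 hs.1.2⟩
    rw [far, pick_pos hyt]
    refine ⟨hmin.1.1.trans_le (hlub.1 hmin), (hlub.2 fun s hs => not_lt.1 hs.1.2).not_gt, ?_⟩
    intro t' hyt' ht'
    obtain ⟨s, hs, hts⟩ := (lt_isLUB_iff hlub).1 ht'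
    exact hs.2 t' hts hyt'
  · have hmax : (max b t < y ∧ ¬ max b t < t) ∧ ∀ t', max b t < t' → t' < y → A t' :=
      ⟨⟨max_lt hyb hyt, (le_max_right _ _).not_gt⟩,
        fun t' h => hb t' ((le_max_left _ _).trans_lt h)⟩
    have hglb := hdef.isGLB_glb ⟨_, hmax⟩ ⟨t, fun s hs => not_lt.1 hs.1.2⟩
    rw [far, pick_neg (not_lt.2 (le_of_lt hyt))]
    refine ⟨(hglb.1 hmax).trans_lt hmax.1.1, (hglb.2 fun s hs => not_lt.1 hs.1.2).not_gt, ?_⟩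
    intro t' hyt' ht'
    obtain ⟨s, hs, hst⟩ := (isGLB_lt_iff hglb).1 ht'
    exact hs.2 t' hst hyt'

/-- By monotonicity of the sizes of the germs, a family of germs is uniform on an interval. -/
theorem IsSide.exists_uniform_germ (hr : IsSide r) {G : N → N → Prop} (hG : Definable S G)
    {p q : N} (hpq : p < q) (h : ∀ a, p < a → a < q → Germ r y (G a)) :
    ∃ p' q' s, p ≤ p' ∧ p' < q' ∧ q' ≤ q ∧ r y s ∧
      ∀ a, p' < a → a < q' → ∀ t, r y t → r t s → G a t := by
  have := hr.definable (S := S)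
  obtain ⟨t₁, hyt₁⟩ := hr.exists_rel y
  have hsize : Definable S fun a => far r y t₁ (G a) := Definable.autoFun
  have size_spec a (hpa : p < a) (haq : a < q) :=
    hr.far_spec (S := S) (t := t₁) (A := G a) Definable.autoFun hyt₁ (h a hpa haq)
  obtain ⟨p', q', hp, hpq', hq, hmono⟩ := exists_monotone hsize hpq
  obtain ⟨a, hpa, haq⟩ := exists_between hpq'
  obtain ⟨b, hab, hbq⟩ := exists_between haq
  obtain ⟨s, hys, hsa, hsb⟩ := hr.germ_exists (hr.germ_and
    (germ_rel (size_spec a (hp.trans_lt hpa) (haq.trans_le hq)).1)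
    (germ_rel (size_spec b (hp.trans_lt (hpa.trans hab)) (hbq.trans_le hq)).1))
  refine ⟨a, b, s, hp.trans hpa.le, hab, hbq.le.trans hq, hys, fun x hax hxb t hyt hts => ?_⟩
  refine (size_spec x (hp.trans_lt (hpa.trans hax)) (hxb.trans (hbq.trans_le hq))).2.2 t hyt
    (hr.trans hts (hr.rel_of_mem_uIcc hsa hsb ?_))
  rcases hmono with hm | hm | hm
  · rw [hm a x hpa hax (hxb.trans hbq)]
    exact left_mem_uIcc
  · exact mem_uIcc.2 <|
      Or.inl ⟨(hm a x hpa hax (hxb.trans hbq)).le, (hm x b (hpa.trans hax) hxb hbq).le⟩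
  · exact mem_uIcc.2 <|
      Or.inr ⟨(hm x b (hpa.trans hax) hxb hbq).le, (hm a x hpa hax (hxb.trans hbq)).le⟩

end Far

end Side

section Gauge

variable {N : Type u} [LinearOrder N] {S : Struc N} {r : N → N → Prop}

/-- The function `f` tends to `a` from the right at `y`, on the side of `y` specified by `r`. -/
def TendsToRight (r : N → N → Prop) (y : N) (f : N → N) (a : N) : Prop :=
  ∀ b, a < b → Germ r y fun t => a < f t ∧ f t < b

/-- A point between `y` and `t`, obtained from functions `ρ a` tending to `a` at `y` by comparing
the growth of `ρ e` with the growth of its iterate `t ↦ ρ (ρ e t) t`. -/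
noncomputable def closer [Nonempty N] (r : N → N → Prop) (ρ : N → N → N) (y e t₁ t : N) : N :=
  far r y t₁ fun t' => ρ (ρ e t') t' ≤ ρ e t

/-- The choice function for intervals with left end point `a` given by the value of `ρ a` at a
point closer to `y` than all points where `ρ a` leaves the interval. -/
noncomputable def gauge [Nonempty N] (r : N → N → Prop) (ρ : N → N → N) (y e t₁ a b : N) : N :=
  ρ a (closer r ρ y e t₁ (far r y t₁ fun t => a < ρ a t ∧ ρ a t < b))

instance [Nonempty N] :
    Definable S (closer : (N → N → Prop) → (N → N → N) → N → N → N → N → N) := by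
  delta closer
  exact Definable.autoFun

instance [Nonempty N] :
    Definable S (gauge : (N → N → Prop) → (N → N → N) → N → N → N → N → N → N) := by
  delta gauge
  exact Definable.autoFun

variable [DenselyOrdered N] [NoMinOrder N] [NoMaxOrder N] [Nonempty N] {ρ : N → N → N} {y : N}

/-- Otherwise `ρ (ρ x t) t` would be at least some `v`, uniformly for `x` in an interval to the
left of `v`, while `ρ x t < v` uniformly for `x` in a smaller interval. -/
theorem IsSide.exists_germ_apply_apply_lt (hr : IsSide r) (hρ : Definable S ρ) {p q : N}
    (hpq : p < q) (hlim : ∀ a, p < a → a < q → TendsToRight r y (ρ a) a) :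
    ∃ e, p < e ∧ e < q ∧ ∀ v, e < v → Germ r y fun t => ρ (ρ e t) t < v := by
  by_contra! hcon
  have := hr.definable (S := S)
  have hdef : Definable S fun x v => Germ r y fun t => ¬ ρ (ρ x t) t < v := Definable.autoFun
  obtain ⟨p₁, q₁, hp₁, hpq₁, hq₁, not_lt⟩ := exists_uniform hdef hpq
    (fun x v v' hv _ hlt => hv.mono fun t _ ht ht' => ht (ht'.trans hlt)) fun x hpx hxq => by
      obtain ⟨v, hxv, hv⟩ := hcon x hpx hxq
      have hdef : Definable S fun t => ρ (ρ x t) t < v := Definable.autoFun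
      exact ⟨v, hxv, (hr.germ_or hdef y).resolve_left hv⟩
  obtain ⟨v, hp₁v, hvq₁⟩ := exists_between hpq₁
  have lim (a : N) (hpa : p₁ < a) (hav : a < v) : TendsToRight r y (ρ a) a :=
    hlim a (hp₁.trans_lt hpa) (hav.trans (hvq₁.trans_le hq₁))
  obtain ⟨p₂, q₂, s, hp₂, hpq₂, hq₂, hys, lt_v⟩ := hr.exists_uniform_germ (S := S) (y := y)
    (G := fun a t => ρ a t < v) Definable.autoFun hp₁v fun a hpa hav =>
      (lim a hpa hav v hav).mono fun t _ h => h.2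
  obtain ⟨x, hpx, hxq⟩ := exists_between hpq₂
  have hp₁x := hp₂.trans_lt hpx
  have hxv := hxq.trans_le hq₂
  obtain ⟨t, hyt, ⟨⟨hxρ, hρq⟩, hts⟩, hge⟩ := hr.germ_exists (hr.germ_and (hr.germ_and
    (lim x hp₁x hxv q₂ hxq) (germ_rel hys)) (not_lt x v hp₁x hxv hvq₁))
  exact hge (lt_v _ (hpx.trans hxρ) hρq t hyt hts)

theorem IsSide.far_setOf_le_rel (hr : IsSide r) {f : N → N} (hf : Definable S f) {t t₁ u : N}
    (hyt₁ : r y t₁) (hgerm : Germ r y fun t' => f t' ≤ u) (hyt : r y t) (hcont : ContAt f t)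
    (hut : u < f t) : r (far r y t₁ fun t' => f t' ≤ u) t := by
  obtain ⟨-, -, le_u⟩ := hr.far_spec (S := S) Definable.autoFun hyt₁ hgerm
  by_contra not_rel
  obtain ⟨v, hv⟩ := exists_gt (f t)
  obtain ⟨c, d, hct, htd, near⟩ := hcont u v hut hv
  obtain ⟨t', hyt', ht't, hct', ht'd⟩ := hr.exists_rel_rel_mem_Ioo hyt hct htd
  exact (near t' hct' ht'd).1.not_ge (le_u t' hyt' (hr.rel_of_rel_of_not_rel ht't not_rel))

theorem IsSide.exists_closer (hr : IsSide r) (hρ : Definable S ρ) {p q : N} (hpq : p < q)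
    (hlim : ∀ a, p < a → a < q → TendsToRight r y (ρ a) a) :
    ∃ e t₁, r y t₁ ∧ ∀ t, r y t → ¬ r t₁ t →
      r y (closer r ρ y e t₁ t) ∧ r (closer r ρ y e t₁ t) t := by
  obtain ⟨p₁, q₁, s, hp₁, hpq₁, hq₁, hys, lt_ρ⟩ := hr.exists_uniform_germ (S := S) (y := y)
    (G := fun a t => a < ρ a t) Definable.autoFun hpq fun a hpa haq =>
      (hlim a hpa haq q haq).mono fun t _ h => h.1
  have lim (a : N) (hpa : p₁ < a) (haq : a < q₁) : TendsToRight r y (ρ a) a :=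
    hlim a (hp₁.trans_lt hpa) (haq.trans_le hq₁)
  obtain ⟨e, hpe, heq, iterate_lt⟩ := hr.exists_germ_apply_apply_lt hρ hpq₁ lim
  have hiterate : Definable S fun t => ρ (ρ e t) t := Definable.autoFun
  have hcont : Germ r y (ContAt fun t => ρ (ρ e t) t) :=
    (hr.germ_or (S := S) Definable.autoFun y).resolve_right fun h =>
      not_fat_of_finite (finite_not_contAt hiterate) (hr.germ_fat h)
  obtain ⟨b, hyb, hb⟩ := hr.germ_and (hr.germ_and (lim e hpe heq q₁ heq) (germ_rel hys)) hcont
  obtain ⟨t₁, hyt₁, ht₁b⟩ := hr.germ_exists (germ_rel hyb)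
  refine ⟨e, t₁, hyt₁, fun t hyt htt₁ => ?_⟩
  obtain ⟨⟨⟨heρ, hρq⟩, hts⟩, ht_cont⟩ := hb t (hr.rel_of_not_rel_of_rel htt₁ ht₁b) hyt
  have hgerm : Germ r y fun t' => ρ (ρ e t') t' ≤ ρ e t :=
    (iterate_lt _ heρ).mono fun _ _ h => h.le
  exact ⟨(hr.far_spec (S := S) Definable.autoFun hyt₁ hgerm).1,
    hr.far_setOf_le_rel hiterate hyt₁ hgerm hyt ht_cont
      (lt_ρ _ (hpe.trans heρ) hρq t hyt hts)⟩

theorem IsSide.exists_gauge (hr : IsSide r) (hρ : Definable S ρ) {R : N → Prop} (hfat : Fat R)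
    (hlim : ∀ a, R a → TendsToRight r y (ρ a) a) :
    ∃ e t₁, ∀ a b, R a → a < b → a < gauge r ρ y e t₁ a b ∧ gauge r ρ y e t₁ a b < b := by
  obtain ⟨p, q, hpq, mem_R⟩ := hfat
  obtain ⟨e, t₁, hyt₁, hcloser⟩ := hr.exists_closer hρ hpq fun a hpa haq =>
    hlim a (mem_R a hpa haq)
  refine ⟨e, t₁, fun a b ha hab => ?_⟩
  obtain ⟨hfar, far_le, mem_Ioo⟩ := hr.far_spec (S := S) (A := fun t => a < ρ a t ∧ ρ a t < b)
    Definable.autoFun hyt₁ (hlim a ha b hab)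
  obtain ⟨hy_closer, closer_rel⟩ := hcloser _ hfar far_le
  exact mem_Ioo _ hy_closer closer_rel

end Gauge

section Accessible

variable {N : Type u} [LinearOrder N] {S : Struc N} {r : N → N → Prop}

/-- The predicates `C y` contain points arbitrarily close to `e` on its right as `y` approaches
`y₀` from the side given by `r`. -/
def Acc (r : N → N → Prop) (C : N → N → Prop) (y₀ e : N) : Prop :=
  ∀ b, e < b → Germ r y₀ fun y => ∃ e', C y e' ∧ e < e' ∧ e' < b

instance : Definable S (Acc : (N → N → Prop) → (N → N → Prop) → N → N → Prop) := by
  delta Acc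
  exact Definable.autoFun

/-- The point `e` belongs to `C y`, but not to `C y'` for all `y'` in an interval, and it is not
accessible from either side of `y`. -/
def Isolated (C : N → N → Prop) (y e : N) : Prop :=
  C y e ∧ ¬ Fat (C · e) ∧ ¬ Acc (fun a b => a < b) C y e ∧ ¬ Acc (fun a b => b < a) C y e

instance : Definable S (Isolated : (N → N → Prop) → N → N → Prop) := by
  delta Isolated
  exact Definable.autoFun

theorem IsSide.acc_of_contAt [NoMinOrder N] (hr : IsSide r) {C : N → N → Prop} {f : N → N} {y : N}
    (hcont : ContAt f y) (h : Germ r y fun t => C t (f t) ∧ f y < f t) : Acc r C y (f y) := by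
  intro b hb
  obtain ⟨v, hv⟩ := exists_lt (f y)
  obtain ⟨c, d, hc, hd, near⟩ := hcont v b hv hb
  have lt_b : Germ r y fun t => f t < b := by
    rcases hr with rfl | rfl
    · exact ⟨d, hd, fun t htd hyt => (near t (hc.trans hyt) htd).2⟩
    · exact ⟨c, hc, fun t hct hty => (near t hct (hty.trans hd)).2⟩
  exact (hr.germ_and h lt_b).mono fun t _ ht => ⟨f t, ht.1.1, ht.1.2, ht.2⟩

variable [DenselyOrdered N] [NoMinOrder N] [NoMaxOrder N] [Nonempty N]

/-- On an interval of such `y`, the least isolated point would be a continuous monotone function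
of `y`; if it is constant then it is not isolated, and otherwise it is accessible. -/
theorem finite_setOf_exists_isolated {C : N → N → Prop} (hC : Definable S C)
    (hfinite : ∀ y, {e | C y e}.Finite) : {y | ∃ e, Isolated C y e}.Finite := by
  have hdef : Definable S fun y => ∃ e, Isolated C y e := Definable.autoFun
  refine hdef.finite_of_not_fat ?_
  rintro ⟨p, q, hpq, exists_isolated⟩
  let f : N → N := fun y => glb (Isolated C y)
  have hf : Definable S f := by
    unfold f
    exact Definable.autoFun
  obtain ⟨a, b, hpa, hab, hbq, hmono⟩ := exists_monotone hf hpq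
  have isolated (y : N) (hay : a < y) (hyb : y < b) : Isolated C y (f y) :=
    (glb_mem_of_finite ((hfinite y).subset fun e he => he.1)
      (exists_isolated y (hpa.trans_lt hay) (hyb.trans_le hbq))).1
  obtain ⟨y, hay, hyb, hcont⟩ := exists_contAt hf hab
  obtain ⟨-, not_fat, not_acc_lt, not_acc_gt⟩ := isolated y hay hyb
  rcases hmono with hconst | hincr | hdecr
  · refine not_fat ⟨a, y, hay, fun t hat hty => ?_⟩
    rw [← hconst t y hat hty hyb]
    exact (isolated t hat (hty.trans hyb)).1
  · exact not_acc_lt <| isSide_lt.acc_of_contAt hcont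
      ⟨b, hyb, fun t htb hyt => ⟨(isolated t (hay.trans hyt) htb).1, hincr y t hay hyt htb⟩⟩
  · exact not_acc_gt <| isSide_gt.acc_of_contAt hcont
      ⟨a, hay, fun t hat hty => ⟨(isolated t hat (hty.trans hyb)).1, hdecr t y hat hty hyb⟩⟩

end Accessible

section RightEnd

variable {N : Type u} [LinearOrder N] {S : Struc N} {R : N → Prop}

/-- The right end points of the intervals contained in `R`, including degenerate intervals. -/
def RightEnd (R : N → Prop) (v : N) : Prop := (R v ∨ LGerm v R) ∧ ¬ (R v ∧ RGerm v R)

instance : Definable S (RightEnd : (N → Prop) → N → Prop) := by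
  delta RightEnd
  exact Definable.autoFun

variable [DenselyOrdered N] [NoMinOrder N] [NoMaxOrder N] [Nonempty N]

omit [NoMinOrder N] [Nonempty N] in
theorem finite_rightEnd (hR : Definable S R) : {v | RightEnd R v}.Finite := by
  have hdef : Definable S (RightEnd R) := Definable.autoFun
  refine hdef.finite_of_not_fat ?_
  rintro ⟨a, b, hab, h⟩
  have not_lGerm (v : N) (hav : a < v) (hvb : v < b) : ¬ LGerm v R := by
    intro ⟨c, hcv, hc⟩
    obtain ⟨t, ht, htv⟩ := exists_between (max_lt hcv hav)
    rw [max_lt_iff] at ht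
    exact (h t ht.2 (htv.trans hvb)).2
      ⟨hc t ht.1 htv, v, htv, fun t' ht'v htt' => hc t' (ht.1.trans htt') ht'v⟩
  have mem (v : N) (hav : a < v) (hvb : v < b) : R v :=
    (h v hav hvb).1.resolve_right (not_lGerm v hav hvb)
  obtain ⟨v, hav, hvb⟩ := exists_between hab
  exact (h v hav hvb).2 ⟨mem v hav hvb, b, hvb, fun t htb hvt => mem t (hav.trans hvt) htb⟩

omit [NoMinOrder N] in
theorem forall_le_or_exists_rightEnd (hR : Definable S R) {e : N} (he : R e) :
    (∀ t, e ≤ t → R t) ∨ ∃ v, e ≤ v ∧ RightEnd R v ∧ ∀ t, e ≤ t → t < v → R t := by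
  by_cases hright : RGerm e R
  swap
  · exact Or.inr ⟨e, le_rfl, ⟨Or.inl he, fun h => hright h.2⟩, fun t h h' => absurd h h'.not_ge⟩
  obtain ⟨b, heb, hb⟩ := hright
  have hdef : Definable S fun v => ∀ t, e ≤ t → t < v → R t := Definable.autoFun
  have hb : ∀ t, e ≤ t → t < b → R t := fun t het htb => by
    rcases het.eq_or_lt with rfl | het
    · exact he
    · exact hb t htb het
  by_cases hbdd : BddAbove {v | ∀ t, e ≤ t → t < v → R t}
  swap
  · refine Or.inl fun t het => ?_
    obtain ⟨v, hv, htv⟩ := not_bddAbove_iff.1 hbdd t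
    exact hv t het htv
  have hlub := hdef.isLUB_lub ⟨b, hb⟩ hbdd
  generalize (lub fun v => ∀ t, e ≤ t → t < v → R t) = w at hlub
  have mem_of_lt : ∀ t, e ≤ t → t < w → R t := fun t het htw => by
    obtain ⟨v, hv, htv⟩ := (lt_isLUB_iff hlub).1 htw
    exact hv t het htv
  have hew : e < w := heb.trans_le (hlub.1 hb)
  refine Or.inr ⟨w, hew.le,
    ⟨Or.inr ⟨e, hew, fun t het htw => mem_of_lt t het.le htw⟩, ?_⟩, mem_of_lt⟩
  rintro ⟨hRw, c, hwc, hc⟩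
  refine hwc.not_ge (hlub.1 fun t het htc => ?_)
  rcases lt_trichotomy t w with htw | rfl | hwt
  · exact mem_of_lt t het htw
  · exact hRw
  · exact hc t htc hwt

end RightEnd

section Sporadic

variable {N : Type u} [LinearOrder N] {S : Struc N} {r : N → N → Prop} {K : N → N → N → Prop}
  {y : N}

/-- The point `e` belongs to `K x y`, accessibly from the side `r` of `y`, for some `x`, but not
for all `x` in an interval. -/
def Sporadic (r : N → N → Prop) (K : N → N → N → Prop) (y e : N) : Prop :=
  ¬ Fat (K · y e) ∧ ∃ x, K x y e ∧ Acc r (K x) y e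

/-- The point of `K x t` following `e`, where `x` is least such that `e` belongs to `K x y`
accessibly. -/
noncomputable def next [Nonempty N] (r : N → N → Prop) (K : N → N → N → Prop) (y e t : N) : N :=
  glb fun e' => K (glb fun x => K x y e ∧ Acc r (K x) y e) t e' ∧ e < e'

instance : Definable S (Sporadic : (N → N → Prop) → (N → N → N → Prop) → N → N → Prop) := by
  delta Sporadic
  exact Definable.autoFun

instance [Nonempty N] :
    Definable S (next : (N → N → Prop) → (N → N → N → Prop) → N → N → N → N) := by
  delta next
  exact Definable.autoFun

variable [DenselyOrdered N] [NoMinOrder N] [NoMaxOrder N] [Nonempty N]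

omit [NoMinOrder N] in
theorem Sporadic.tendsToRight_next (hK : Definable S K) (hfinite : ∀ x y, {e | K x y e}.Finite)
    {e : N} (h : Sporadic r K y e) : TendsToRight r y (next r K y e) e := by
  obtain ⟨not_fat, hne⟩ := h
  have hdef : Definable S fun x => K x y e := Definable.autoFun
  have hacc := (glb_mem_of_finite
    ((hdef.finite_of_not_fat not_fat).subset fun x hx => hx.1) hne).1.2
  intro b hb
  refine (hacc b hb).mono fun t _ ⟨e', he', hee', he'b⟩ => ?_
  obtain ⟨hmem, hle⟩ := glb_mem_of_finite
    ((hfinite (glb fun x => K x y e ∧ Acc r (K x) y e) t).subset fun e' (h : _ ∧ e < e') => h.1)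
    ⟨e', he', hee'⟩
  exact ⟨hmem.2, (hle e' ⟨he', hee'⟩).trans_lt he'b⟩

theorem IsSide.exists_valid_gauge_next (hr : IsSide r) (hK : Definable S K)
    (hfinite : ∀ x y, {e | K x y e}.Finite) {e v : N} (hev : e ≤ v)
    (h : ∀ t, e ≤ t → t < v → Sporadic r K y t) :
    ∃ e₀ t₁, Valid (gauge r (next r K y) y e₀ t₁) e v := by
  rcases hev.eq_or_lt with rfl | hev
  · exact ⟨e, e, Valid.of_le le_rfl⟩
  have := hr.definable (S := S)
  have hnext : Definable S (next r K y) := Definable.autoFun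
  obtain ⟨e₀, t₁, hgauge⟩ := hr.exists_gauge hnext (R := Sporadic r K y)
    ⟨e, v, hev, fun t het htv => h t het.le htv⟩ fun a ha => ha.tendsToRight_next hK hfinite
  exact ⟨e₀, t₁, fun a b hea hab hbv => hgauge a b (h a hea (hab.trans_le hbv)) hab⟩

end Sporadic

section FiniteRelations

variable {N : Type u} [LinearOrder N] [DenselyOrdered N] [NoMinOrder N] [NoMaxOrder N] [Nonempty N]
  {S : Struc N} {r : N → N → Prop}

section GaugeRel

variable {Γ : Type*} {H : Γ → N → N → N → Prop}

/-- One of the gauges associated with the family `H` chooses points in the intervals between `e`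
and `h`. -/
def GaugeRel (r : N → N → Prop) (H : Γ → N → N → N → Prop) (e h : N) : Prop :=
  Near (fun z : Γ × N × N × N => gauge r (next r (H z.1) z.2.1) z.2.1 z.2.2.1 z.2.2.2) e h

variable [DefinableSpace S Γ] [Parametrized S Γ]

omit [DenselyOrdered N] [NoMinOrder N] [NoMaxOrder N] in
theorem short_gaugeRel (hr : IsSide r) (hH : Definable S H) : Short S (GaugeRel r H) := by
  have := hr.definable (S := S)
  exact Short.of_parametrized (Θ := Γ × N × N × N)
    (c := fun z => gauge r (next r (H z.1) z.2.1) z.2.1 z.2.2.1 z.2.2.2) Definable.autoFun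
    fun _ _ h => h

variable (hr : IsSide r) (hH : Definable S H) (hfinite : ∀ s x y, {e | H s x y e}.Finite)
include hr hH hfinite

theorem gaugeRel_of_sporadic {s : Γ} {y e v : N} (hev : e ≤ v)
    (h : ∀ t, e ≤ t → t < v → Sporadic r (H s) y t) : GaugeRel r H e v := by
  have := Parametrized.definable (S := S) s
  have hHs : Definable S (H s) := Definable.autoFun
  obtain ⟨e₀, t₁, hvalid⟩ := hr.exists_valid_gauge_next hHs (hfinite s) hev h
  exact ⟨(s, y, e₀, t₁), by rwa [min_eq_left hev, max_eq_right hev]⟩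

theorem exists_gaugeRel_of_forall_sporadic :
    ∃ e₁, ∀ s y e, (∀ t, e ≤ t → Sporadic r (H s) y t) → GaugeRel r H e e₁ := by
  by_cases hex : ∃ s y e, ∀ t, e ≤ t → Sporadic r (H s) y t
  · obtain ⟨s₁, y₁, e₁, h₁⟩ := hex
    refine ⟨e₁, fun s y e h => ?_⟩
    rcases le_total e e₁ with hle | hle
    · exact gaugeRel_of_sporadic hr hH hfinite hle fun t het _ => h t het
    · exact (gaugeRel_of_sporadic hr hH hfinite hle fun t het _ => h₁ t het).symm
  · exact ⟨Classical.arbitrary N, fun s y e h => absurd ⟨s, y, e, h⟩ hex⟩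

theorem exists_short_of_acc :
    ∃ (E : N → N → Prop) (B : Γ → N → N → Prop), Short S E ∧ Definable S B ∧
      (∀ s y, {h | B s y h}.Finite) ∧
      ∀ s x y e, H s x y e → Acc r (H s x) y e → ∃ h, B s y h ∧ E e h := by
  have := hr.definable (S := S)
  obtain ⟨e₁, he₁⟩ := exists_gaugeRel_of_forall_sporadic hr hH hfinite
  refine ⟨GaugeRel r H,
    fun s y h => Fat (H s · y h) ∨ RightEnd (Sporadic r (H s) y) h ∨ h = e₁,
    short_gaugeRel hr hH, Definable.autoFun, fun s y => ?_, fun s x y e he hacc => ?_⟩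
  all_goals
    have := Parametrized.definable (S := S) s
    have hsporadic : Definable S (Sporadic r (H s) y) := Definable.autoFun
  · have hdef : Definable S fun x e => H s x y e := Definable.autoFun
    have hfat : {e | Fat (H s · y e)}.Finite :=
      (finite_setOf_infinite hdef fun x => hfinite s x y).subset fun e he => Fat.infinite he
    exact hfat.union ((finite_rightEnd hsporadic).union (finite_singleton e₁))
  by_cases hfat : Fat (H s · y e)
  · exact ⟨e, Or.inl hfat, (s, y, e, e), valid_min_max_self _ e⟩
  rcases forall_le_or_exists_rightEnd hsporadic ⟨hfat, x, he, hacc⟩ with h | ⟨v, hev, hv, h⟩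
  · exact ⟨e₁, Or.inr (Or.inr rfl), he₁ s y e h⟩
  · exact ⟨v, Or.inr (Or.inl hv), gaugeRel_of_sporadic hr hH hfinite hev h⟩

end GaugeRel

section TwoVariables

variable {Γ : Type*} [DefinableSpace S Γ] [Parametrized S Γ]

theorem exists_short_two {H : Γ → N → N → N → Prop} (hH : Definable S H)
    (hfinite : ∀ s x y, {e | H s x y e}.Finite) :
    ∃ (E : N → N → Prop) (A B : Γ → N → N → Prop), Short S E ∧ Definable S A ∧ Definable S B ∧
      (∀ s x, {h | A s x h}.Finite) ∧ (∀ s y, {h | B s y h}.Finite) ∧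
      ∀ s x y e, H s x y e → A s x e ∨ ∃ h, B s y h ∧ E e h := by
  obtain ⟨E₁, B₁, hE₁, hB₁, hfinite₁, close₁⟩ := exists_short_of_acc isSide_lt hH hfinite
  obtain ⟨E₂, B₂, hE₂, hB₂, hfinite₂, close₂⟩ := exists_short_of_acc isSide_gt hH hfinite
  refine ⟨fun e h => E₁ e h ∨ E₂ e h,
    fun s x e => Fat (H s x · e) ∨ ∃ y, (∃ e', Isolated (H s x) y e') ∧ H s x y e,
    fun s y h => B₁ s y h ∨ B₂ s y h, hE₁.or hE₂, Definable.autoFun, Definable.autoFun,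
    fun s x => ?_, fun s y => (hfinite₁ s y).union (hfinite₂ s y), fun s x y e he => ?_⟩
  · have := Parametrized.definable (S := S) s
    have hHsx : Definable S (H s x) := Definable.autoFun
    have hfat : {e | Fat (H s x · e)}.Finite :=
      (finite_setOf_infinite hHsx (hfinite s x)).subset fun e he => Fat.infinite he
    have hisolated := finite_setOf_exists_isolated hHsx (hfinite s x)
    exact hfat.union ((hisolated.biUnion fun y _ => hfinite s x y).subset
      fun e ⟨y, hy, he⟩ => mem_biUnion hy he)
  · by_cases hfat : Fat (H s x · e)
    · exact Or.inl (Or.inl hfat)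
    by_cases hlt : Acc (fun a b => a < b) (H s x) y e
    · obtain ⟨h, hB, hE⟩ := close₁ s x y e he hlt
      exact Or.inr ⟨h, Or.inl hB, Or.inl hE⟩
    by_cases hgt : Acc (fun a b => b < a) (H s x) y e
    · obtain ⟨h, hB, hE⟩ := close₂ s x y e he hgt
      exact Or.inr ⟨h, Or.inr hB, Or.inr hE⟩
    exact Or.inl (Or.inr ⟨y, ⟨e, he, hfat, hlt, hgt⟩, he⟩)

omit [DenselyOrdered N] [NoMinOrder N] [NoMaxOrder N] in
theorem Short.exists_fin : ∀ {n : ℕ} {E : Fin n → N → N → Prop}, (∀ i, Short S (E i)) →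
    Short S fun x y => ∃ i, E i x y
  | 0, _, _ => Short.eq.mono fun _ _ ⟨i, _⟩ => i.elim0
  | _ + 1, _, h => ((h 0).or (Short.exists_fin fun i => h i.succ)).mono fun _ _ hxy =>
      Fin.exists_fin_succ.1 hxy

theorem exists_short_two_fin {n : ℕ} {H : Fin n → Γ → N → N → N → Prop}
    (hH : ∀ l, Definable S (H l)) (hfinite : ∀ l s x y, {e | H l s x y e}.Finite) :
    ∃ (E : N → N → Prop) (A : Fin n → Γ → N → N → Prop) (B : Γ → N → N → Prop), Short S E ∧
      (∀ l, Definable S (A l)) ∧ Definable S B ∧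
      (∀ l s x, {h | A l s x h}.Finite) ∧ (∀ s y, {h | B s y h}.Finite) ∧
      ∀ l s x y e, H l s x y e → A l s x e ∨ ∃ h, B s y h ∧ E e h := by
  choose E A B hE hA hB hA_finite hB_finite close using
    fun l => exists_short_two (hH l) (hfinite l)
  refine ⟨fun e h => ∃ l, E l e h, A, fun s y h => ∃ l, B l s y h, Short.exists_fin hE, hA,
    Definable.autoFun, hA_finite, fun s y => ?_, fun l s x y e he => ?_⟩
  · simp only [ofPred_exists]
    exact finite_iUnion fun l => hB_finite l s y
  · exact (close l s x y e he).imp_right fun ⟨h, hh, heh⟩ => ⟨h, ⟨l, hh⟩, l, heh⟩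

end TwoVariables

/-- The relation `E` is short, and every point of `H s x` is `E`-related to an element of one of
the finite sets `A l s (x l)` depending on a single coordinate. -/
structure CoordinateCover {Γ : Type*} [DefinableSpace S Γ] {n : ℕ}
    (H : Γ → (Fin n → N) → N → Prop) (E : N → N → Prop) (A : Fin n → Γ → N → N → Prop) : Prop where
  short : Short S E
  definable : ∀ l, Definable S (A l)
  finite : ∀ l s x, {h | A l s x h}.Finite
  exists_rel : ∀ s x e, H s x e → ∃ l h, A l s (x l) h ∧ E e h

theorem exists_coordinateCover : ∀ {n : ℕ} {Γ : Type u} [DefinableSpace S Γ] [Parametrized S Γ]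
    {H : Γ → (Fin (n + 1) → N) → N → Prop}, Definable S H → (∀ s x, {e | H s x e}.Finite) →
    ∃ E A, CoordinateCover (S := S) H E A
  | 0, Γ, _, _, H, hH, hfinite => by
    refine ⟨fun x y => x = y, fun _ s x e => H s (fun _ => x) e, Short.eq,
      fun _ => Definable.autoFun, fun _ s x => hfinite s _, fun s x e he => ⟨0, e, ?_, rfl⟩⟩
    have hx : (fun _ => x 0) = x := funext fun i => congrArg x (Subsingleton.elim (α := Fin 1) 0 i)
    rwa [hx]
  | n + 1, Γ, _, _, H, hH, hfinite => by
    obtain ⟨E, A, hE, hA, hA_finite, close⟩ := exists_coordinateCover (Γ := Γ × N)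
      (H := fun s x e => H s.1 (Fin.cons s.2 x) e) Definable.autoFun fun s x => hfinite s.1 _
    have hA' (l) : Definable S fun s x y e => A l (s, y) x e := by
      have := hA l
      exact Definable.autoFun
    obtain ⟨E', B, C, hE', hB, hC, hB_finite, hC_finite, close'⟩ :=
      exists_short_two_fin hA' fun l s x y => hA_finite l (s, y) x
    refine ⟨fun x w => ∃ y, E x y ∧ (y = w ∨ E' y w), Fin.cons C B, hE.comp (Short.eq.or hE'),
      Fin.cases hC hB, Fin.cases hC_finite hB_finite, fun s x e he => ?_⟩
    obtain ⟨l, h, hA, heh⟩ := close (s, x 0) (Fin.tail x) e (by rwa [Fin.cons_self_tail])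
    rcases close' l s _ _ h hA with hB | ⟨h', hC, hhh'⟩
    · exact ⟨l.succ, h, hB, h, heh, Or.inl rfl⟩
    · exact ⟨0, h', hC, h, heh, Or.inr hhh'⟩

end FiniteRelations

section Tuples

variable {N : Type u} [LinearOrder N] {S : Struc N} {n k : ℕ}

theorem Def.definable {A : Set (Fin n → N)} (hA : S.Def n A) : Definable S fun x => x ∈ A :=
  ⟨fun _ _ _ _ _ ha => Def.preimage hA ha⟩

theorem Definable.def {A : (Fin n → N) → Prop} (hA : Definable S A) : S.Def n {x | A x} :=
  hA.map n (fun x => x) fun i => DefFun.proj i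

theorem Definable.defFunOn {X : Set (Fin n → N)} (hX : S.Def n X) {s : (Fin n → N) → Fin k → N}
    (hs : Definable S s) : S.DefFunOn X s := by
  have := hX.definable
  have h : Definable S fun z : Fin (n + k) → N => (fun i => z (Fin.castAdd k i)) ∈ X ∧
      s (fun i => z (Fin.castAdd k i)) = fun i => z (Fin.natAdd n i) := Definable.autoFun
  exact h.def

instance : Definable S (Fin.append : (Fin n → N) → (Fin k → N) → Fin (n + k) → N) := by
  have h : DefinableMap S fun z : (Fin n → N) × (Fin k → N) => Fin.append z.1 z.2 := by
    refine DefinableMap.tuple fun i => ?_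
    cases i using Fin.addCases with
    | left i =>
      simp only [Fin.append_left]
      exact DefinableMap.id.fst.coord i
    | right i =>
      simp only [Fin.append_right]
      exact DefinableMap.id.snd.coord i
  exact h.curry.pt

theorem Def.definable_append {T : Set (Fin (n + k) → N)} (hT : S.Def (n + k) T) :
    Definable S fun (x : Fin n → N) (u : Fin k → N) => Fin.append x u ∈ T := by
  have h : DefinableMap S fun z : (Fin n → N) × (Fin k → N) => Fin.append z.1 z.2 ∈ T :=
    DefinableMap.comp hT.definable.map DefinableMap.auto
  exact h.curry.pt

end Tuples

section Fibers

variable {N : Type u} [LinearOrder N] [DenselyOrdered N] [NoMinOrder N] [NoMaxOrder N] [Nonempty N]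
  {S : Struc N} {q : ℕ} {c : (Fin q → N) → N → N → N}

theorem StrongChoice.exists_near {Y : N → Prop} (hY : StrongChoice S Y) (hc : Definable S c) :
    StrongChoice S fun e => ∃ h, Y h ∧ Near c e h := by
  have hYdef := hY.1
  obtain ⟨F, hF, breaks⟩ := hY.1.exists_finite_breaks
  have := hF.to_subtype
  refine (hY.or (StrongChoice.exists_finite fun b : F => strongChoice_near hc b.1)).mono
    Definable.autoFun fun e ⟨h, hh, z, hz⟩ => ?_
  by_cases hYe : Y e
  · exact Or.inl hYe
  by_contra! hcon
  have not_break (b : N) (hb : b ∈ F) (hmin : min e h ≤ b) : ¬ b ≤ max e h := fun hmax =>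
    hcon.2 ⟨b, hb⟩ ⟨z, hz.mono (le_min hmin (min_le_left _ _)) (max_le hmax (le_max_left _ _))⟩
  have iff := breaks (min e h) (max e h) min_le_max not_break
  rcases le_total e h with hle | hle
  · rw [min_eq_left hle, max_eq_right hle] at iff
    exact hYe (iff.2 hh)
  · rw [min_eq_right hle, max_eq_left hle] at iff
    exact hYe (iff.1 hh)

/-- The set `D` contains the points close to `A x` for some `x` in `X` if `X` has strong choice, as
well as the points close to an element of infinitely many of the sets `A x`. -/
theorem exists_strongChoice_near {A : N → N → Prop} (hA : Definable S A)
    (hfinite : ∀ x, {h | A x h}.Finite) (hc : Definable S c) (X : N → Prop) :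
    ∃ D : N → Prop, StrongChoice S D ∧ ∀ e, ¬ D e → ∃ Q : N → Prop, StrongChoice S Q ∧
      ∀ x h, X x → A x h → Near c e h → ¬ StrongChoice S X ∧ Q x := by
  have hfat : StrongChoice S fun h => Fat (A · h) := StrongChoice.of_finite Definable.autoFun <|
    (finite_setOf_infinite hA hfinite).subset fun h hh => Fat.infinite hh
  obtain ⟨D, hD, mem_D⟩ : ∃ D : N → Prop, StrongChoice S D ∧
      (StrongChoice S X → ∀ e x h, X x → A x h → Near c e h → D e) := by
    by_cases hX : StrongChoice S X
    · exact ⟨_, (hX.finite_rel hA fun x _ => hfinite x).exists_near hc,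
        fun _ e x h hx hxh heh => ⟨h, ⟨x, hx, hxh⟩, heh⟩⟩
    · exact ⟨_, StrongChoice.empty, fun h => absurd h hX⟩
  refine ⟨_, (hfat.exists_near hc).or hD, fun e he => ?_⟩
  rw [not_or] at he
  have hW : StrongChoice S fun h => Near c e h ∧ ¬ Fat (A · h) :=
    (strongChoice_near hc e).mono Definable.autoFun fun h hh => hh.1
  have hswap : Definable S fun h x => A x h := Definable.autoFun
  refine ⟨_, hW.finite_rel hswap fun h hh => ?_, fun x h hx hxh heh =>
    ⟨fun hX => he.2 (mem_D hX e x h hx hxh heh), h, ⟨heh, fun hfat => he.1 ⟨h, hfat, heh⟩⟩, hxh⟩⟩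
  have hdef : Definable S fun x => A x h := Definable.autoFun
  exact hdef.finite_of_not_fat hh.2

theorem exists_strongChoice_fiber : ∀ {n : ℕ} {f : (Fin n → N) → N}, Definable S f →
    ∀ X : Fin n → N → Prop, ∃ D : N → Prop, StrongChoice S D ∧ ∀ e, ¬ D e →
      ∃ Q : Fin n → N → Prop, (∀ l, StrongChoice S (Q l)) ∧
        ∀ x, (∀ l, X l (x l)) → f x = e → ∃ l, ¬ StrongChoice S (X l) ∧ Q l (x l)
  | 0, f, _, _ => by
    refine ⟨fun e => e = f Fin.elim0, StrongChoice.of_finite Definable.autoFun (finite_singleton _),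
      fun e he => ⟨Fin.elim0, fun l => l.elim0, fun x _ hxe => absurd hxe.symm ?_⟩⟩
    rwa [Subsingleton.elim x Fin.elim0]
  | n + 1, f, hf, X => by
    obtain ⟨E, A, cover⟩ := exists_coordinateCover (S := S) (Γ := Fin 0 → N)
      (H := fun _ x e => e = f x) Definable.autoFun fun _ x => finite_singleton (f x)
    obtain ⟨q, c, hc, near⟩ := cover.short
    choose D hD fiber using fun l => exists_strongChoice_near
      ((cover.definable l).app (Parametrized.definable Fin.elim0)) (cover.finite l Fin.elim0) hc
      (X l)
    refine ⟨fun e => ∃ l, D l e, StrongChoice.exists_finite hD, fun e he => ?_⟩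
    choose Q hQ mem_Q using fun l => fiber l e fun h => he ⟨l, h⟩
    refine ⟨Q, hQ, fun x hx hxe => ?_⟩
    obtain ⟨l, h, hA, heh⟩ := cover.exists_rel Fin.elim0 x e hxe.symm
    exact ⟨l, mem_Q l (x l) h (hx l) hA (near e h heh)⟩

end Fibers

section BadCoords

variable {N : Type u} [LinearOrder N] {S : Struc N} {m : ℕ} {Z : (Fin m → N) → Prop}

/-- The image of `Z` under the projection to the coordinate `l`. -/
def proj (Z : (Fin m → N) → Prop) (l : Fin m) (e : N) : Prop := ∃ w, Z w ∧ w l = e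

/-- The coordinates `l` such that the projection of `Z` to the `l`-th coordinate does not have
strong choice. -/
def badCoords (S : Struc N) (Z : (Fin m → N) → Prop) : Set (Fin m) :=
  {l | ¬ StrongChoice S (proj Z l)}

theorem definable_proj (hZ : Definable S Z) (l : Fin m) : Definable S (proj Z l) := by
  unfold proj
  exact Definable.autoFun

theorem strongChoice_of_badCoords_eq_empty (hZ : Definable S Z) (h : badCoords S Z = ∅) :
    StrongChoice S Z := by
  have hproj (l : Fin m) : StrongChoice S (proj Z l) := by
    by_contra hl
    exact eq_empty_iff_forall_notMem.1 h l hl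
  exact (StrongChoice.pi hproj).mono hZ fun w hw l => ⟨w, hw, rfl⟩

theorem ncard_badCoords_and_lt [Nonempty N] (hZ : Definable S Z) {Q : N → Prop}
    (hQ : StrongChoice S Q) {l : Fin m} (hl : l ∈ badCoords S Z) :
    (badCoords S fun w => Z w ∧ Q (w l)).ncard < (badCoords S Z).ncard := by
  have hQdef := hQ.1
  have hZQ : Definable S fun w => Z w ∧ Q (w l) := Definable.autoFun
  have hsubset : (badCoords S fun w => Z w ∧ Q (w l)) ⊆ badCoords S Z \ {l} := by
    intro i hi
    refine ⟨fun hi' => hi (hi'.mono (definable_proj hZQ i) fun e ⟨w, hw, hwe⟩ => ⟨w, hw.1, hwe⟩),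
      ?_⟩
    rintro rfl
    exact hi (hQ.mono (definable_proj hZQ i) fun e ⟨w, hw, hwe⟩ => hwe ▸ hw.2)
  exact (ncard_le_ncard hsubset (toFinite _)).trans_lt
    (ncard_sdiff_singleton_lt_of_mem hl (toFinite _))

end BadCoords

section DefinableGroup

variable {N : Type u} [LinearOrder N] [TopologicalSpace N] [Nonempty N] {S : Struc N} {m : ℕ}
  (U : DefGroup S m)

theorem exists_definable_mul : ∃ M : (Fin m → N) → (Fin m → N) → Fin m → N, Definable S M ∧
    ∀ a b : U.Elt, M a.1 b.1 = (a * b).1 := by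
  obtain ⟨G, hG, mem_G⟩ : ∃ G : (Fin (m + m) → N) → (Fin m → N) → Prop, Definable S G ∧
      ∀ x y z, G (Fin.append x y) z ↔ x ∈ U.carrier ∧ y ∈ U.carrier ∧ U.mul x y = z :=
    ⟨_, Def.definable_append U.mul_graph_def,
      fun x y z => by simp [Function.comp_def, -Fin.natAdd_eq_addNat]⟩
  refine ⟨fun x y i => theUnique fun e => ∃ z, G (Fin.append x y) z ∧ z i = e, Definable.autoFun,
    fun a b => funext fun i => theUnique_eq fun e => ?_⟩
  simp only [mem_G, a.2, b.2, true_and, exists_eq_left']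
  exact eq_comm

theorem exists_definable_of_mul_eq_mul (x y : U.Elt) (l : Fin m) :
    ∃ f : (Fin m → N) → (Fin m → N) → N, Definable S f ∧
      ∀ w v z : U.Elt, z * (y * v) = x * w → f w.1 v.1 = z.1 l := by
  obtain ⟨M, hM, coe_mul⟩ := exists_definable_mul U
  have := U.carrier_def.definable
  obtain ⟨x', hx'⟩ : ∃ x', x' = x.1 := ⟨_, rfl⟩
  obtain ⟨y', hy'⟩ : ∃ y', y' = y.1 := ⟨_, rfl⟩
  have := Parametrized.definable (S := S) x'
  have := Parametrized.definable (S := S) y'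
  refine ⟨fun w v => theUnique fun e => ∃ z, z ∈ U.carrier ∧ M z (M y' v) = M x' w ∧ z l = e,
    Definable.autoFun, fun w v z h => theUnique_eq fun e => ⟨?_, ?_⟩⟩
  · rintro ⟨z', hz', h', rfl⟩
    obtain ⟨z', rfl⟩ : ∃ x : U.Elt, x.1 = z' := ⟨⟨z', hz'⟩, rfl⟩
    have : z' * (y * v) = z * (y * v) := by
      rw [h]
      apply Subtype.ext
      rwa [← coe_mul, ← coe_mul, ← coe_mul, ← hx', ← hy']
    exact congrArg (fun a : U.Elt => a.1 l) (mul_right_cancel this)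
  · rintro rfl
    exact ⟨z.1, z.2, by rw [hx', hy', coe_mul, coe_mul, coe_mul, h], rfl⟩

variable [DenselyOrdered N] [NoMinOrder N] [NoMaxOrder N]

theorem exists_strongChoice_of_mul_eq_mul {l₀ : Fin m}
    (hl₀ : l₀ ∈ badCoords S fun u => u ∈ U.carrier) {ι : Type*} [Finite ι] (g : ι → U.Elt)
    (Z : ι → (Fin m → N) → Prop) :
    ∃ (z : U.Elt) (Q : ι → ι → Fin (m + m) → N → Prop), (∀ a b l, StrongChoice S (Q a b l)) ∧
      ∀ a b (w v : U.Elt), Z a w.1 → Z b v.1 → z * (g b * v) = g a * w →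
        (∃ l ∈ badCoords S (Z a), Q a b (Fin.castAdd m l) (w.1 l)) ∨
          ∃ l ∈ badCoords S (Z b), Q a b (Fin.natAdd m l) (v.1 l) := by
  choose f hf f_eq using fun a b => exists_definable_of_mul_eq_mul U (g a) (g b) l₀
  have hf' (a b : ι) : Definable S fun x : Fin (m + m) → N =>
      f a b (fun i => x (Fin.castAdd m i)) fun i => x (Fin.natAdd m i) := by
    have := hf a b
    exact Definable.autoFun
  choose D hD fiber using fun a b =>
    exists_strongChoice_fiber (hf' a b) (Fin.append (proj (Z a)) (proj (Z b)))
  obtain ⟨z, hz⟩ : ∃ z : U.Elt, ∀ a b, ¬ D a b (z.1 l₀) := by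
    by_contra! h
    have hunion := StrongChoice.exists_finite fun i : ι × ι => hD i.1 i.2
    refine hl₀ (hunion.mono (definable_proj U.carrier_def.definable l₀) ?_)
    rintro e ⟨z, hz, rfl⟩
    obtain ⟨a, b, hab⟩ := h ⟨z, hz⟩
    exact ⟨(a, b), hab⟩
  choose Q hQ mem_Q using fun a b => fiber a b (z.1 l₀) (hz a b)
  refine ⟨z, Q, hQ, fun a b w v hw hv h => ?_⟩
  have mem_proj (l : Fin (m + m)) :
      Fin.append (proj (Z a)) (proj (Z b)) l (Fin.append w.1 v.1 l) := by
    cases l using Fin.addCases with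
    | left l => simpa only [Fin.append_left] using ⟨w.1, hw, rfl⟩
    | right l => simpa only [Fin.append_right] using ⟨v.1, hv, rfl⟩
  obtain ⟨l, hl, hQl⟩ := mem_Q a b (Fin.append w.1 v.1) mem_proj
    (by simpa only [Fin.append_left, Fin.append_right] using f_eq a b w v z h)
  cases l using Fin.addCases with
  | left l =>
    rw [Fin.append_left] at hl hQl
    exact Or.inl ⟨l, hl, hQl⟩
  | right l =>
    rw [Fin.append_right] at hl hQl
    exact Or.inr ⟨l, hl, hQl⟩

/-- The group is covered by finitely many translates of definable sets with at most `j` bad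
coordinates. -/
def HasCover (j : ℕ) : Prop :=
  ∃ (ι : Type) (_ : Finite ι) (g : ι → U.Elt) (Z : ι → (Fin m → N) → Prop),
    (∀ a, Definable S (Z a)) ∧ (∀ a, (badCoords S (Z a)).ncard ≤ j) ∧
    ∀ u : U.Elt, ∃ (a : ι) (w : U.Elt), Z a w.1 ∧ u = g a * w

variable {U}

/-- If `z` is generic, then for all `u` in `g b * Z b` with `z * u` in `g a * Z a` a bad coordinate
of `g b⁻¹ * u` or of `g a⁻¹ * z * u` is in a set with strong choice. -/
theorem HasCover.pred {j : ℕ} (h : HasCover U (j + 1)) {l₀ : Fin m}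
    (hl₀ : l₀ ∈ badCoords S fun u => u ∈ U.carrier) : HasCover U j := by
  obtain ⟨ι, _, g, Z, hZ, ncard_le, cover⟩ := h
  obtain ⟨z, Q, hQ, bad⟩ := exists_strongChoice_of_mul_eq_mul U hl₀ g Z
  have ncard_le' (a : ι) (l : Fin m) (hl : l ∈ badCoords S (Z a)) {P : N → Prop}
      (hP : StrongChoice S P) : (badCoords S fun w => Z a w ∧ P (w l)).ncard ≤ j :=
    Nat.lt_succ_iff.1 ((ncard_badCoords_and_lt (hZ a) hP hl).trans_le (ncard_le a))
  have definable_and (a : ι) (l : Fin m) {P : N → Prop} (hP : StrongChoice S P) :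
      Definable S fun w => Z a w ∧ P (w l) := by
    have := hZ a
    have := hP.1
    exact Definable.autoFun
  refine ⟨(Σ i : ι × ι, badCoords S (Z i.1)) ⊕ (Σ i : ι × ι, badCoords S (Z i.2)), inferInstance,
    Sum.elim (fun i => z⁻¹ * g i.1.1) (fun i => g i.1.2),
    Sum.elim (fun i w => Z i.1.1 w ∧ Q i.1.1 i.1.2 (Fin.castAdd m i.2.1) (w i.2.1))
      (fun i w => Z i.1.2 w ∧ Q i.1.1 i.1.2 (Fin.natAdd m i.2.1) (w i.2.1)),
    ?_, ?_, fun u => ?_⟩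
  · rintro (i | i) <;> exact definable_and _ _ (hQ _ _ _)
  · rintro (i | i) <;> exact ncard_le' _ _ i.2.2 (hQ _ _ _)
  obtain ⟨b, v, hv, rfl⟩ := cover u
  obtain ⟨a, w, hw, hwv⟩ := cover (z * (g b * v))
  rcases bad a b w v hw hv hwv with ⟨l, hl, hQl⟩ | ⟨l, hl, hQl⟩
  · refine ⟨Sum.inl ⟨(a, b), l, hl⟩, w, ⟨hw, hQl⟩, ?_⟩
    rw [Sum.elim_inl, mul_assoc, ← hwv, inv_mul_cancel_left]
  · exact ⟨Sum.inr ⟨(a, b), l, hl⟩, v, ⟨hv, hQl⟩, rfl⟩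

variable (U)

theorem hasCover_zero {l₀ : Fin m} (hl₀ : l₀ ∈ badCoords S fun u => u ∈ U.carrier) :
    HasCover U 0 := by
  have descend (j : ℕ) (hj : HasCover U j) : HasCover U 0 := by
    induction j with
    | zero => exact hj
    | succ j ih => exact ih (hj.pred hl₀)
  refine descend m ⟨Unit, inferInstance, fun _ => 1, fun _ _ => True, fun _ => Definable.autoFun,
    fun _ => ?_, fun u => ⟨(), u, trivial, (one_mul u).symm⟩⟩
  simpa using ncard_le_card (badCoords S fun _ : Fin m → N => True)

theorem strongChoice_carrier : StrongChoice S fun x => x ∈ U.carrier := by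
  have hU := U.carrier_def.definable
  rcases (badCoords S fun u => u ∈ U.carrier).eq_empty_or_nonempty with hempty | ⟨l₀, hl₀⟩
  · exact strongChoice_of_badCoords_eq_empty hU hempty
  obtain ⟨ι, _, g, Z, hZ, ncard_le, cover⟩ := hasCover_zero U hl₀
  obtain ⟨M, hM, coe_mul⟩ := exists_definable_mul U
  have hZ_strongChoice (a : ι) : StrongChoice S (Z a) :=
    strongChoice_of_badCoords_eq_empty (hZ a)
      ((ncard_eq_zero (toFinite _)).1 (Nat.le_zero.1 (ncard_le a)))
  refine (StrongChoice.exists_finite fun a => (hZ_strongChoice a).image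
    (hM.app (Parametrized.definable (g a).1))).mono hU fun u hu => ?_
  obtain ⟨a, w, hw, huw⟩ := cover ⟨u, hu⟩
  exact ⟨a, w.1, hw, (coe_mul _ _).trans (congrArg Subtype.val huw).symm⟩

end DefinableGroup

end Struc

/-- every definable group has strong definable choice: for every
definable family `{T(x) : x ∈ X}` of nonempty definable subsets of `U` there is a
definable function `t` with `t x ∈ T x` and `t x = t y` whenever `T x = T y`. -/
theorem stmt_16 {N : Type u} [LinearOrder N] [DenselyOrdered N] [NoMinOrder N]
    [NoMaxOrder N] [Nonempty N] [TopologicalSpace N] [OrderTopology N]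
    (S : Struc N) {m : ℕ} (U : DefGroup S m) (p : ℕ) (X : Set (Fin p → N))
    (hX : S.Def p X) (T : Set (Fin (p + m) → N)) (hT : S.Def (p + m) T)
    (hsub : ∀ x ∈ X, {u : Fin m → N | Fin.append x u ∈ T} ⊆ U.carrier)
    (hne : ∀ x ∈ X, {u : Fin m → N | Fin.append x u ∈ T}.Nonempty) :
    ∃ t : (Fin p → N) → (Fin m → N),
      S.DefFunOn X t ∧
      (∀ x ∈ X, Fin.append x (t x) ∈ T) ∧
      ∀ x ∈ X, ∀ y ∈ X,
        {u : Fin m → N | Fin.append x u ∈ T} = {u : Fin m → N | Fin.append y u ∈ T} →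
        t x = t y := by
  obtain ⟨-, t, ht, choice⟩ := Struc.strongChoice_carrier U
  have hfamily := hT.definable_append
  refine ⟨fun x => t fun u => Fin.append x u ∈ T, ?_, fun x hx => ?_, fun x _ y _ hxy => ?_⟩
  · exact (Struc.DefinableMap.comp ht.map hfamily.map).pt.defFunOn hX
  · obtain ⟨u, hu⟩ := hne x hx
    exact (choice _ (hfamily.app (Struc.Parametrized.definable x)) ⟨u, hu, hsub x hx hu⟩).1
  · exact congrArg t hxy
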